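/- Let G be a connected planar graph on at least 2 vertices that contains no cycle of length 4. Then the 2-surviving rate satisfies ρ₂(G) > 1/9. -/

import Mathlib

/-- The set of vertices on fire after `t` fire-spread rounds, when the fire breaks out
at `v` and the firefighters protect the vertices of `P s` in round `s + 1` (protection
happens just before the `s`-th spread step and is permanent). -/
def burnedSet {V : Type*} (G : SimpleGraph V) (v : V) (P : ℕ → Set V) : ℕ → Set V
  | 0 => {v}
  | t + 1 => burnedSet G v P t ∪
      {w | (∃ u ∈ burnedSet G v P t, G.Adj u w) ∧ ∀ s ≤ t, w ∉ P s}

/-- A strategy `P` is valid for the per-round budgets `b` if in each round it protects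
at most `b t` vertices, none of which are already on fire. -/
def ValidStrategy {V : Type*} (G : SimpleGraph V) (b : ℕ → ℕ) (v : V) (P : ℕ → Set V) : Prop :=
  ∀ t, (P t).Finite ∧ (P t).ncard ≤ b t ∧ Disjoint (P t) (burnedSet G v P t)

/-- `sn G b v` is the maximum number of vertices that can be saved (i.e. that never
catch fire) when the fire breaks out at `v` and the firefighters may protect at most
`b t` vertices in round `t + 1`. -/
noncomputable def sn {V : Type*} (G : SimpleGraph V) (b : ℕ → ℕ) (v : V) : ℕ :=
  sSup {m | ∃ P, ValidStrategy G b v P ∧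
    m = Nat.card {w : V | ∀ t, w ∉ burnedSet G v P t}}

/-- The surviving rate of `G` with per-round budgets `b` : the expected fraction of
vertices that can be saved when the starting vertex is chosen uniformly at random. -/
noncomputable def survivingRate {V : Type*} [Fintype V] (G : SimpleGraph V) (b : ℕ → ℕ) : ℝ :=
  (∑ v : V, (sn G b v : ℝ)) / (Fintype.card V : ℝ) ^ 2

/-- A plane embedding of a simple graph: vertices are points of the plane and edges are
simple arcs between their endpoints, such that arcs avoid all other vertices and two
arcs of distinct edges meet only in common endpoints. -/
structure PlaneEmbedding {V : Type*} (G : SimpleGraph V) where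
  pos : V → ℝ × ℝ
  arc : V → V → ℝ → ℝ × ℝ
  pos_inj : Function.Injective pos
  arc_cont : ∀ ⦃u v⦄, G.Adj u v → Continuous (arc u v)
  arc_injOn : ∀ ⦃u v⦄, G.Adj u v → Set.InjOn (arc u v) (Set.Icc 0 1)
  arc_zero : ∀ ⦃u v⦄, G.Adj u v → arc u v 0 = pos u
  arc_one : ∀ ⦃u v⦄, G.Adj u v → arc u v 1 = pos v
  arc_symm : ∀ ⦃u v⦄, G.Adj u v → ∀ t, arc v u t = arc u v (1 - t)
  arc_avoid : ∀ ⦃u v⦄, G.Adj u v → ∀ w : V, pos w ∉ arc u v '' Set.Ioo 0 1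
  arc_meet : ∀ ⦃u v x y⦄, G.Adj u v → G.Adj x y → s(u, v) ≠ s(x, y) →
      arc u v '' Set.Icc 0 1 ∩ arc x y '' Set.Icc 0 1 ⊆
        ({pos u, pos v} : Set (ℝ × ℝ)) ∩ {pos x, pos y}

/-- A graph is planar if it admits a plane embedding. -/
def IsPlanar {V : Type*} (G : SimpleGraph V) : Prop :=
  Nonempty (PlaneEmbedding G)

/-!
Rasterising a plane embedding of `G` on a triangular lattice turns the lattice into a cell complex
with the mod 2 homology of the sphere that contains the edges of `G`. In such a complex some
fundamental cycle of a breadth-first tree rooted at the fire `v` leaves at least a third of the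
vertices on either side, up to one. It consists of two shortest paths from `v` and one edge, so each
distance class contains at most two of its vertices, and two firefighters who stay ahead of the fire
protect it together with one of its sides, provided at most two neighbours of `v` lie there. This
works if `v` has degree at most three. If `v` has degree four, rerouting the cycle along another
shortest path, or giving up a single neighbour of `v`, still saves at least a sixth of the vertices,
unless `v` is obstructed by its neighbourhood.

In the absence of cycles of length four, all faces except triangles have at least five edges, and
Euler's formula bounds the number of edges. Obstructed vertices cost little, since they have
neighbours of large degree or edges that lie in no triangle. Weighting the vertices by their degrees
then shows that enough vertices are of the kinds above.
-/

/-- A finite two-dimensional cell complex with vertices in `V`: every edge has two ends and two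
sides, and may be a loop or parallel to other edges. -/
structure CellComplex (V : Type*) where
  Edge : Type
  Face : Type
  [fintypeEdge : Fintype Edge]
  [fintypeFace : Fintype Face]
  src : Edge → V
  tgt : Edge → V
  left : Edge → Face
  right : Edge → Face

namespace CellComplex

attribute [instance] fintypeEdge fintypeFace

/-- The mod 2 boundary of a set of edges. -/
noncomputable def edgeBoundary {V : Type*} (M : CellComplex V) :
    (M.Edge → ZMod 2) →ₗ[ZMod 2] (V →₀ ZMod 2) :=
  Fintype.linearCombination (ZMod 2) fun e => .single (M.src e) 1 + .single (M.tgt e) 1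

/-- The mod 2 boundary of a set of faces: the edges with exactly one side in the set. -/
def faceBoundary {V : Type*} (M : CellComplex V) :
    (M.Face → ZMod 2) →ₗ[ZMod 2] (M.Edge → ZMod 2) :=
  LinearMap.funLeft (ZMod 2) (ZMod 2) M.left + LinearMap.funLeft (ZMod 2) (ZMod 2) M.right

/-- The vertex `g` is an end of the edge `e`. -/
def Incident {V : Type*} (M : CellComplex V) (g : V) (e : M.Edge) : Prop :=
  M.src e = g ∨ M.tgt e = g

/-- The vertices met by a set of edges. -/
def support {V : Type*} (M : CellComplex V) (c : M.Edge → ZMod 2) : Set V :=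
  {g | ∃ e, M.Incident g e ∧ c e ≠ 0}

/-- `M` has the mod 2 homology of the 2-sphere, except that it need not be connected. -/
structure HasSphereHomology {V : Type*} (M : CellComplex V) : Prop where
  edgeBoundary_faceBoundary : ∀ s, M.edgeBoundary (M.faceBoundary s) = 0
  exists_faceBoundary_eq : ∀ c, M.edgeBoundary c = 0 → ∃ s, M.faceBoundary s = c
  eq_of_faceBoundary_eq_zero : ∀ s, M.faceBoundary s = 0 → ∀ f f', s f = s f'

/-- The properties of a triangulation of the sphere that are needed below; `side_eq` says that the
faces around a vertex form a single cycle. -/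
structure IsSphere {V : Type*} (M : CellComplex V) : Prop extends M.HasSphereHomology where
  left_ne_right : ∀ e, M.left e ≠ M.right e
  card_sides_le : ∀ f, {e | M.left e = f ∨ M.right e = f}.ncard ≤ 3
  side_eq : ∀ g s, g ∉ M.support (M.faceBoundary s) →
    ∀ e e', M.Incident g e → M.Incident g e' → s (M.left e) = s (M.left e')

variable {V : Type*} (M : CellComplex V)

@[simp]
lemma faceBoundary_apply (s : M.Face → ZMod 2) (e : M.Edge) :
    M.faceBoundary s e = s (M.left e) + s (M.right e) := rfl

lemma edgeBoundary_eq_sum (c : M.Edge → ZMod 2) :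
    M.edgeBoundary c = ∑ e, c e • (.single (M.src e) 1 + .single (M.tgt e) 1) :=
  Fintype.linearCombination_apply ..

open scoped Classical in
lemma edgeBoundary_single (e : M.Edge) :
    M.edgeBoundary (Pi.single e 1) = .single (M.src e) 1 + .single (M.tgt e) 1 := by
  rw [edgeBoundary, Fintype.linearCombination_apply_single, one_smul]

lemma faceBoundary_const (a : ZMod 2) : M.faceBoundary (fun _ => a) = 0 :=
  funext fun _ => CharTwo.add_self_eq_zero a

variable {M}

lemma left_eq_right_of_notMem_support {s : M.Face → ZMod 2} {g : V} {e : M.Edge}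
    (hg : g ∉ M.support (M.faceBoundary s)) (he : M.Incident g e) :
    s (M.left e) = s (M.right e) :=
  CharTwo.add_eq_zero.1 (not_not.1 fun h => hg ⟨e, he, h⟩)

end CellComplex

namespace CellComplex

section Contraction

variable {P V : Type*} (M : CellComplex P)

/-- The complex obtained by moving every vertex along `f`. -/
abbrev map (f : P → V) : CellComplex V where
  __ := M
  src e := f (M.src e)
  tgt e := f (M.tgt e)

lemma edgeBoundary_map (f : P → V) (c : M.Edge → ZMod 2) :
    (M.map f).edgeBoundary c = Finsupp.mapDomain f (M.edgeBoundary c) := by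
  simp only [edgeBoundary_eq_sum, Finsupp.mapDomain_finsetSum, Finsupp.mapDomain_smul,
    Finsupp.mapDomain_add, Finsupp.mapDomain_single]

/-- The vertices that are ends of edges. -/
def ends : Set P := {p | ∃ e, M.Incident p e}

open scoped Classical in
/-- The map merging the target of an edge with its source. -/
noncomputable def mergeEnds (e₀ : M.Edge) : P → P :=
  Function.update id (M.tgt e₀) (M.src e₀)

open scoped Classical in
/-- The complex obtained by shrinking an edge to its source. -/
noncomputable abbrev contract (e₀ : M.Edge) : CellComplex P where
  Edge := {e // e ≠ e₀}
  Face := M.Face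
  src e := M.mergeEnds e₀ (M.src e)
  tgt e := M.mergeEnds e₀ (M.tgt e)
  left e := M.left e
  right e := M.right e

variable {M} {e₀ : M.Edge}

@[simp]
lemma mergeEnds_tgt : M.mergeEnds e₀ (M.tgt e₀) = M.src e₀ := by
  classical exact Function.update_self ..

lemma mergeEnds_of_ne {p : P} (hp : p ≠ M.tgt e₀) : M.mergeEnds e₀ p = p := by
  classical exact Function.update_of_ne hp ..

@[simp]
lemma mergeEnds_src : M.mergeEnds e₀ (M.src e₀) = M.src e₀ := by
  by_cases h : M.src e₀ = M.tgt e₀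
  · rw [h, mergeEnds_tgt, h]
  · exact mergeEnds_of_ne h

lemma apply_mergeEnds {col : P → V} (hcol : col (M.src e₀) = col (M.tgt e₀)) (p : P) :
    col (M.mergeEnds e₀ p) = col p := by
  by_cases hp : p = M.tgt e₀
  · rw [hp, mergeEnds_tgt, hcol]
  · rw [mergeEnds_of_ne hp]

open scoped Classical in
lemma eq_mapDomain_mergeEnds_add (D : P →₀ ZMod 2) :
    D = D.mapDomain (M.mergeEnds e₀) + D (M.tgt e₀) • M.edgeBoundary (Pi.single e₀ 1) := by
  induction D using Finsupp.induction_linear with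
  | zero => simp
  | add D D' hD hD' =>
    nth_rw 1 [hD, hD']
    rw [Finsupp.mapDomain_add, Finsupp.add_apply, add_smul]
    abel
  | single p a =>
    rw [Finsupp.mapDomain_single, edgeBoundary_single]
    by_cases hp : p = M.tgt e₀
    · rw [hp, mergeEnds_tgt, Finsupp.single_eq_same, smul_add, Finsupp.smul_single_one,
        Finsupp.smul_single_one, ← add_assoc, ZModModule.add_self, zero_add]
    · rw [mergeEnds_of_ne hp, Finsupp.single_eq_of_ne (Ne.symm hp), zero_smul, add_zero]

lemma edgeBoundary_contract (c : M.Edge → ZMod 2) :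
    (M.contract e₀).edgeBoundary (fun e => c e.1) =
      (M.edgeBoundary c).mapDomain (M.mergeEnds e₀) := by
  classical
  rw [← edgeBoundary_map, edgeBoundary_eq_sum, edgeBoundary_eq_sum]
  refine Eq.trans ?_ (Fintype.sum_eq_add_sum_subtype_ne _ e₀).symm
  simp only [mergeEnds_src, mergeEnds_tgt, ZModModule.add_self, smul_zero, zero_add]

lemma apply_eq_zero_of_edgeBoundary_eq_zero {c : M.Edge → ZMod 2} (hc : M.edgeBoundary c = 0)
    (h₀ : M.src e₀ ≠ M.tgt e₀) {p : P} (hp : M.Incident p e₀)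
    (h : ∀ e ≠ e₀, M.Incident p e → c e = 0) : c e₀ = 0 := by
  have := DFunLike.congr_fun hc p
  rw [edgeBoundary_eq_sum, Finsupp.finsetSum_apply, Fintype.sum_eq_single e₀] at this
  · rcases hp with rfl | rfl
    · simpa [Finsupp.single_apply, h₀.symm] using this
    · simpa [Finsupp.single_apply, h₀] using this
  · intro e he
    by_cases hi : M.Incident p e
    · simp [h e he hi]
    · obtain ⟨h₁, h₂⟩ := not_or.1 hi
      simp [h₁, h₂]

lemma support_edgeBoundary_subset (c : M.Edge → ZMod 2) :
    ((M.edgeBoundary c).support : Set P) ⊆ M.ends := by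
  intro p hp
  by_contra hend
  refine Finsupp.mem_support_iff.1 hp ?_
  rw [edgeBoundary_eq_sum, Finsupp.finsetSum_apply]
  refine Finset.sum_eq_zero fun e _ => ?_
  obtain ⟨hs, ht⟩ := not_or.1 (not_exists.1 hend e)
  simp [hs, ht]

lemma IsSphere.map {f : P → V} (hM : M.IsSphere) (hf : M.ends.InjOn f) : (M.map f).IsSphere where
  left_ne_right := hM.left_ne_right
  card_sides_le := hM.card_sides_le
  edgeBoundary_faceBoundary s :=
    (M.edgeBoundary_map f _).trans <|
      (congrArg _ (hM.edgeBoundary_faceBoundary s)).trans Finsupp.mapDomain_zero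
  exists_faceBoundary_eq c hc :=
    hM.exists_faceBoundary_eq c <| Finsupp.mapDomain_injOn _ hf
      (support_edgeBoundary_subset (M := M) c) (by simp) <|
      (M.edgeBoundary_map f c).symm.trans (hc.trans Finsupp.mapDomain_zero.symm)
  eq_of_faceBoundary_eq_zero := hM.eq_of_faceBoundary_eq_zero
  side_eq g s hg e e' he he' := by
    obtain ⟨p, hp, rfl⟩ : ∃ p, M.Incident p e ∧ f p = g :=
      he.elim (fun h => ⟨_, .inl rfl, h⟩) fun h => ⟨_, .inr rfl, h⟩
    have hincident (e₁ : M.Edge) (h : (M.map f).Incident (f p) e₁) : M.Incident p e₁ :=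
      h.imp (fun h => hf ⟨e₁, .inl rfl⟩ ⟨e, hp⟩ h) fun h => hf ⟨e₁, .inr rfl⟩ ⟨e, hp⟩ h
    refine hM.side_eq p s ?_ e e' hp (hincident e' he')
    rintro ⟨e, he, hc⟩
    exact hg ⟨e, he.imp (congrArg f) (congrArg f), hc⟩

lemma IsSphere.side_eq_of_contract (hM : M.IsSphere) (h₀ : M.src e₀ ≠ M.tgt e₀) {g : P}
    {s : M.Face → ZMod 2} (hg : g ∉ (M.contract e₀).support ((M.contract e₀).faceBoundary s))
    {e e' : M.Edge} {p p' : P} (he : M.Incident p e) (he' : M.Incident p' e')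
    (hp : M.mergeEnds e₀ p = g) (hp' : M.mergeEnds e₀ p' = g) : s (M.left e) = s (M.left e') := by
  have hzero (q : P) (hq : M.mergeEnds e₀ q = g) (e : M.Edge) (hne : e ≠ e₀)
      (he : M.Incident q e) : M.faceBoundary s e = 0 := by
    by_contra h
    exact hg ⟨⟨e, hne⟩, he.imp (fun h => by rw [← hq, ← h]) fun h => by rw [← hq, ← h], h⟩
  have hout (q : P) (hq : M.mergeEnds e₀ q = g) : q ∉ M.support (M.faceBoundary s) := by
    rintro ⟨e, he, hne⟩
    obtain rfl : e = e₀ := by_contra fun h => hne (hzero q hq e h he)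
    refine hne (apply_eq_zero_of_edgeBoundary_eq_zero (hM.edgeBoundary_faceBoundary s) h₀
      (.inr rfl) (hzero _ ?_))
    rcases he with rfl | rfl <;> simp [← hq]
  by_cases hpp : p = p'
  · subst hpp
    exact hM.side_eq p s (hout p hp) e e' he he'
  · have hend (q : P) (hq : M.mergeEnds e₀ q = g) : M.Incident q e₀ := by
      by_contra h
      obtain ⟨hs, ht⟩ := not_or.1 h
      rw [mergeEnds_of_ne (Ne.symm ht)] at hq
      subst hq
      have eq_of_mergeEnds (r : P) (hr : M.mergeEnds e₀ r = q) : r = q := by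
        by_cases h : r = M.tgt e₀
        · subst h; exact absurd (mergeEnds_tgt.symm.trans hr) hs
        · exact (mergeEnds_of_ne h).symm.trans hr
      exact hpp ((eq_of_mergeEnds p hp).trans (eq_of_mergeEnds p' hp').symm)
    exact (hM.side_eq p s (hout p hp) e e₀ he (hend p hp)).trans
      (hM.side_eq p' s (hout p' hp') e₀ e' (hend p' hp') he')

lemma IsSphere.contract (hM : M.IsSphere) (h₀ : M.src e₀ ≠ M.tgt e₀) :
    (M.contract e₀).IsSphere where
  left_ne_right e := hM.left_ne_right e.1
  card_sides_le f := (Set.ncard_le_ncard_of_injOn Subtype.val (fun _ he => he)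
    Subtype.val_injective.injOn (Set.toFinite _)).trans (hM.card_sides_le f)
  edgeBoundary_faceBoundary s :=
    (edgeBoundary_contract (M.faceBoundary s)).trans <|
      (congrArg _ (hM.edgeBoundary_faceBoundary s)).trans Finsupp.mapDomain_zero
  exists_faceBoundary_eq c hc := by
    classical
    let c' : M.Edge → ZMod 2 := fun e => if h : e ≠ e₀ then c ⟨e, h⟩ else 0
    have hcc' : (fun e : {e // e ≠ e₀} => c' e.1) = c := funext fun e => dif_pos e.2
    rw [← hcc', edgeBoundary_contract] at hc
    have hcyc : M.edgeBoundary (c' + M.edgeBoundary c' (M.tgt e₀) • Pi.single e₀ 1) = 0 := by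
      rw [LinearMap.map_add, LinearMap.map_smul]
      nth_rw 1 [eq_mapDomain_mergeEnds_add (e₀ := e₀) (M.edgeBoundary c')]
      rw [hc, zero_add, ZModModule.add_self]
    obtain ⟨s, hs⟩ := hM.exists_faceBoundary_eq _ hcyc
    refine ⟨s, funext fun e => ?_⟩
    rw [← congrFun hcc' e]
    refine (congrFun hs e.1).trans ?_
    rw [Pi.add_apply, Pi.smul_apply, Pi.single_eq_of_ne e.2, smul_zero, add_zero]
  eq_of_faceBoundary_eq_zero s hs := by
    have hoff (e : M.Edge) (he : e ≠ e₀) : M.faceBoundary s e = 0 := congrFun hs ⟨e, he⟩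
    refine hM.eq_of_faceBoundary_eq_zero s (funext fun e => ?_)
    by_cases he : e = e₀
    · rw [he]
      exact apply_eq_zero_of_edgeBoundary_eq_zero (hM.edgeBoundary_faceBoundary s) h₀
        (.inr rfl) fun e he _ => hoff e he
    · exact hoff e he
  side_eq g s hg e e' he he' := by
    obtain ⟨p, hp, hpg⟩ : ∃ p, M.Incident p e.1 ∧ M.mergeEnds e₀ p = g :=
      he.elim (fun h => ⟨_, .inl rfl, h⟩) fun h => ⟨_, .inr rfl, h⟩
    obtain ⟨p', hp', hpg'⟩ : ∃ p, M.Incident p e'.1 ∧ M.mergeEnds e₀ p = g :=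
      he'.elim (fun h => ⟨_, .inl rfl, h⟩) fun h => ⟨_, .inr rfl, h⟩
    exact hM.side_eq_of_contract h₀ hg hp hp' hpg hpg'

/-- Two vertices of `M` are joined by edges whose ends have the same colour. -/
def MonoConnected (M : CellComplex P) (col : P → V) : P → P → Prop :=
  Relation.EqvGen fun p q => ∃ e, M.src e = p ∧ M.tgt e = q ∧ col p = col q

lemma MonoConnected.contract {col : P → V} (hcol : col (M.src e₀) = col (M.tgt e₀)) {p q : P}
    (h : M.MonoConnected col p q) :
    (M.contract e₀).MonoConnected col (M.mergeEnds e₀ p) (M.mergeEnds e₀ q) := by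
  induction h with
  | refl => exact .refl _
  | symm _ _ _ ih => exact .symm _ _ ih
  | trans _ _ _ _ _ ih ih' => exact .trans _ _ _ ih ih'
  | rel p q h =>
    obtain ⟨e, rfl, rfl, h⟩ := h
    by_cases he : e = e₀
    · rw [he, mergeEnds_src, mergeEnds_tgt]
      exact .refl _
    · refine .rel _ _ ⟨⟨e, he⟩, rfl, rfl, ?_⟩
      rwa [apply_mergeEnds hcol, apply_mergeEnds hcol]

lemma MonoConnected.eq {col : P → V}
    (hloop : ∀ e, col (M.src e) = col (M.tgt e) → M.src e = M.tgt e) {p q : P}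
    (h : M.MonoConnected col p q) : p = q := by
  induction h with
  | refl => rfl
  | symm _ _ _ ih => exact ih.symm
  | trans _ _ _ _ _ ih ih' => exact ih.trans ih'
  | rel p q h =>
    obtain ⟨e, rfl, rfl, h⟩ := h
    exact hloop e h

theorem IsSphere.exists_isSphere_of_colouring {col : P → V} (hM : M.IsSphere)
    (hcol : ∀ p ∈ M.ends, ∀ q ∈ M.ends, col p = col q → M.MonoConnected col p q) :
    ∃ M' : CellComplex V, M'.IsSphere ∧ ∀ e, col (M.src e) ≠ col (M.tgt e) →
      ∃ e', M'.src e' = col (M.src e) ∧ M'.tgt e' = col (M.tgt e) := by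
  classical
  induction hn : Fintype.card M.Edge using Nat.strong_induction_on generalizing M with
  | _ n ih =>
  by_cases hloop : ∀ e, col (M.src e) = col (M.tgt e) → M.src e = M.tgt e
  · exact ⟨M.map col, hM.map fun p hp q hq h => (hcol p hp q hq h).eq hloop,
      fun e _ => ⟨e, rfl, rfl⟩⟩
  push Not at hloop
  obtain ⟨e₀, hcol₀, h₀⟩ := hloop
  have hend : (M.contract e₀).ends ⊆ M.mergeEnds e₀ '' M.ends := by
    rintro p ⟨e, he⟩
    exact he.elim (fun h => ⟨_, ⟨e.1, .inl rfl⟩, h⟩) fun h => ⟨_, ⟨e.1, .inr rfl⟩, h⟩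
  obtain ⟨M', hM', hedge⟩ := ih _
    (hn ▸ Fintype.card_subtype_lt (x := e₀) (not_not.2 rfl)) (hM.contract h₀) (by
      intro p hp q hq hpq
      obtain ⟨p, hp', rfl⟩ := hend hp
      obtain ⟨q, hq', rfl⟩ := hend hq
      rw [apply_mergeEnds hcol₀, apply_mergeEnds hcol₀] at hpq
      exact (hcol p hp' q hq' hpq).contract hcol₀) rfl
  refine ⟨M', hM', fun e he => ?_⟩
  have hee₀ : e ≠ e₀ := by rintro rfl; exact he hcol₀
  simpa only [apply_mergeEnds hcol₀] using
    hedge ⟨e, hee₀⟩ (by simpa only [apply_mergeEnds hcol₀] using he)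

end Contraction

end CellComplex

section Lattice

/-- The triangular lattice: each point is joined to its six neighbours `p ± (1, 0)`,
`p ± (0, 1)` and `p ± (1, 1)`. -/
def triangularLattice : SimpleGraph (ℕ × ℕ) :=
  .fromRel fun p q => q = p + (1, 0) ∨ q = p + (0, 1) ∨ q = p + (1, 1)

/-- The lattice points in the interior of the square `[0, m + 1]²`. -/
def squareInterior (m : ℕ) : Set (ℕ × ℕ) := Set.Icc 1 m ×ˢ Set.Icc 1 m

/-- The edges of the triangulated square `[0, m + 1]²` that are not on its sides. The first two
kinds are indexed so that `horizontal i j` starts at `(i, j + 1)` and `vertical i j` at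
`(i + 1, j)`. -/
inductive SquareEdge (m : ℕ)
  | horizontal (i : Fin (m + 1)) (j : Fin m)
  | vertical (i : Fin m) (j : Fin (m + 1))
  | diagonal (i j : Fin (m + 1))
  deriving Fintype, DecidableEq

/-- The triangles into which the square `[0, m + 1]²` is cut. -/
inductive SquareFace (m : ℕ)
  | lower (i j : Fin (m + 1))
  | upper (i j : Fin (m + 1))
  deriving Fintype

open scoped Classical in
/-- Collapses all points that are not inside the square to the point `(0, 0)`. -/
noncomputable def collapseSides (m : ℕ) (p : ℕ × ℕ) : ℕ × ℕ :=
  if p ∈ squareInterior m then p else (0, 0)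

/-- The sphere obtained from the triangulated square `[0, m + 1]²` by collapsing its sides to one
point. -/
noncomputable abbrev collapsedSquare (m : ℕ) : CellComplex (ℕ × ℕ) where
  Edge := SquareEdge m
  Face := SquareFace m
  src
    | .horizontal i j => collapseSides m (i, j + 1)
    | .vertical i j => collapseSides m (i + 1, j)
    | .diagonal i j => collapseSides m (i, j)
  tgt
    | .horizontal i j => collapseSides m (i + 1, j + 1)
    | .vertical i j => collapseSides m (i + 1, j + 1)
    | .diagonal i j => collapseSides m (i + 1, j + 1)
  left
    | .horizontal i j => .lower i j.succ
    | .vertical i j => .upper i.succ j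
    | .diagonal i j => .upper i j
  right
    | .horizontal i j => .upper i j.castSucc
    | .vertical i j => .lower i.castSucc j
    | .diagonal i j => .lower i j

namespace CellComplex

lemma edgeBoundary_eq_zero_of_forall_ne {V : Type*} {M : CellComplex V} {c : M.Edge → ZMod 2}
    (g₀ : V) (h : ∀ g ≠ g₀, M.edgeBoundary c g = 0) : M.edgeBoundary c = 0 := by
  have hsingle : M.edgeBoundary c = .single g₀ (M.edgeBoundary c g₀) := by
    ext g
    by_cases hg : g = g₀
    · rw [hg, Finsupp.single_eq_same]
    · rw [h g hg, Finsupp.single_eq_of_ne (by tauto)]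
  have htotal : (M.edgeBoundary c).mapDomain (fun _ => ()) = 0 := by
    rw [← edgeBoundary_map, edgeBoundary_eq_sum]
    simp only [ZModModule.add_self, smul_zero, Finset.sum_const_zero]
  rw [hsingle, Finsupp.mapDomain_single, Finsupp.single_eq_zero] at htotal
  rw [hsingle, htotal, Finsupp.single_zero]

end CellComplex

variable {m : ℕ}

lemma collapseSides_of_mem {p : ℕ × ℕ} (hp : p ∈ squareInterior m) : collapseSides m p = p :=
  if_pos hp

lemma collapseSides_eq_iff {p q : ℕ × ℕ} (hq : q ∈ squareInterior m) :
    collapseSides m p = q ↔ p = q := by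
  unfold collapseSides
  split_ifs with hp
  · rfl
  · refine iff_of_false ?_ ?_
    · rintro rfl
      simp [squareInterior] at hq
    · rintro rfl
      exact hp hq

lemma collapseSides_eq_zero_iff {p : ℕ × ℕ} :
    collapseSides m p = (0, 0) ↔ p ∉ squareInterior m := by
  unfold collapseSides
  split_ifs with hp
  · refine iff_of_false ?_ (not_not.2 hp)
    rintro rfl
    simp [squareInterior] at hp
  · exact iff_of_true rfl hp

lemma mem_squareInterior_of_mem_ends {p : ℕ × ℕ} (hp : p ∈ (collapsedSquare m).ends)
    (h₀ : p ≠ (0, 0)) : p ∈ squareInterior m := by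
  have key (q : ℕ × ℕ) (hq : collapseSides m q = p) : p ∈ squareInterior m := by
    have hmem := not_not.1 (mt collapseSides_eq_zero_iff.2 (hq ▸ h₀))
    rwa [← hq, collapseSides_of_mem hmem]
  obtain ⟨e, he⟩ := hp
  rcases e with _ | _ | _ <;> exact he.elim (key _) (key _)

/-- The interior point `(i + 1, j + 1)` of the square. -/
abbrev interiorPoint (i j : Fin m) : ℕ × ℕ := (i + 1, j + 1)

lemma interiorPoint_mem (i j : Fin m) : interiorPoint i j ∈ squareInterior m := by
  simp only [squareInterior, Set.mem_prod, Set.mem_Icc]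
  omega

lemma exists_interiorPoint_eq {p : ℕ × ℕ} (hp : p ∈ squareInterior m) :
    ∃ i j : Fin m, interiorPoint i j = p := by
  obtain ⟨⟨h₁, h₂⟩, h₃, h₄⟩ := hp
  exact ⟨⟨p.1 - 1, by omega⟩, ⟨p.2 - 1, by omega⟩, Prod.ext (by simp; omega) (by simp; omega)⟩

open SquareEdge SquareFace

/-- The six edges at the interior point `(i + 1, j + 1)`. -/
def edgesAt (i j : Fin m) : Finset (SquareEdge m) :=
  {horizontal i.castSucc j, horizontal i.succ j, vertical i j.castSucc, vertical i j.succ,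
    diagonal i.castSucc j.castSucc, diagonal i.succ j.succ}

lemma mem_edgesAt_of_incident {i j : Fin m} {e : SquareEdge m}
    (he : (collapsedSquare m).Incident (interiorPoint i j) e) : e ∈ edgesAt i j := by
  simp only [edgesAt, Finset.mem_insert, Finset.mem_singleton]
  rcases e with ⟨k, l⟩ | ⟨k, l⟩ | ⟨k, l⟩ <;>
    simp only [CellComplex.Incident, collapseSides_eq_iff (interiorPoint_mem i j), Prod.mk.injEq,
      horizontal.injEq, vertical.injEq, diagonal.injEq, reduceCtorEq, or_false, false_or,
      Fin.ext_iff, Fin.val_castSucc, Fin.val_succ] at he ⊢ <;> omega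

lemma incident_of_mem_edgesAt {i j : Fin m} {e : SquareEdge m} (he : e ∈ edgesAt i j) :
    (collapsedSquare m).Incident (interiorPoint i j) e := by
  simp only [edgesAt, Finset.mem_insert, Finset.mem_singleton] at he
  rcases he with rfl | rfl | rfl | rfl | rfl | rfl <;>
    simp [CellComplex.Incident, collapseSides_eq_iff (interiorPoint_mem i j)]

lemma edgeBoundary_interiorPoint (c : SquareEdge m → ZMod 2) (i j : Fin m) :
    (collapsedSquare m).edgeBoundary c (interiorPoint i j) = ∑ e ∈ edgesAt i j, c e := by
  rw [CellComplex.edgeBoundary_eq_sum, Finsupp.finsetSum_apply,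
    ← Finset.sum_subset (Finset.subset_univ (edgesAt i j))]
  · refine Finset.sum_congr rfl fun e he => ?_
    simp only [edgesAt, Finset.mem_insert, Finset.mem_singleton] at he
    rcases he with rfl | rfl | rfl | rfl | rfl | rfl <;>
      simp [Finsupp.single_apply, collapseSides_eq_iff (interiorPoint_mem i j)]
  · intro e _ he
    obtain ⟨hs, ht⟩ := not_or.1 (mt mem_edgesAt_of_incident he)
    simp [hs, ht]

lemma sum_edgesAt (c : SquareEdge m → ZMod 2) (i j : Fin m) :
    ∑ e ∈ edgesAt i j, c e = c (horizontal i.castSucc j) + c (horizontal i.succ j) +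
      c (vertical i j.castSucc) + c (vertical i j.succ) +
      c (diagonal i.castSucc j.castSucc) + c (diagonal i.succ j.succ) := by
  simp [edgesAt, Fin.ext_iff, add_assoc]

namespace CollapsedSquare

lemma card_sides_le (f : SquareFace m) :
    {e | (collapsedSquare m).left e = f ∨ (collapsedSquare m).right e = f}.ncard ≤ 3 := by
  let kind : SquareEdge m → Fin 3
    | .horizontal _ _ => 0
    | .vertical _ _ => 1
    | .diagonal _ _ => 2
  refine (Set.ncard_le_ncard_of_injOn kind (fun _ _ => Set.mem_univ _) ?_ (Set.toFinite _)).trans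
    (by rw [Set.ncard_univ, Nat.card_fin])
  rintro (_ | _ | _) he (_ | _ | _) he' hk <;> cases f <;>
    simp_all [kind, Fin.ext_iff] <;> omega

lemma edgeBoundary_faceBoundary (s : SquareFace m → ZMod 2) :
    (collapsedSquare m).edgeBoundary ((collapsedSquare m).faceBoundary s) = 0 := by
  refine CellComplex.edgeBoundary_eq_zero_of_forall_ne (0, 0) fun p hp => ?_
  by_cases hend : p ∈ (collapsedSquare m).ends
  · obtain ⟨i, j, rfl⟩ := exists_interiorPoint_eq (mem_squareInterior_of_mem_ends hend hp)
    rw [edgeBoundary_interiorPoint, sum_edgesAt]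
    change s (lower _ _) + s (upper _ _) + (s (lower _ _) + s (upper _ _)) +
      (s (upper _ _) + s (lower _ _)) + (s (upper _ _) + s (lower _ _)) +
      (s (upper _ _) + s (lower _ _)) + (s (upper _ _) + s (lower _ _)) = 0
    linear_combination (s (lower i.castSucc j.succ) + s (upper i.castSucc j.castSucc) +
      s (lower i.succ j.succ) + s (upper i.succ j.castSucc) + s (lower i.castSucc j.castSucc) +
      s (upper i.succ j.succ)) * CharTwo.two_eq_zero (R := ZMod 2)
  · exact Finsupp.notMem_support_iff.1 fun h =>
      hend (CellComplex.support_edgeBoundary_subset (M := collapsedSquare m) _ h)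

lemma exists_succ_eq_add {A : Type*} [Add A] (a : A) (d : Fin m → A) :
    ∃ s : Fin (m + 1) → A, s 0 = a ∧ ∀ k : Fin m, s k.succ = s k.castSucc + d k :=
  ⟨Fin.induction a fun k x => x + d k, rfl, fun _ => rfl⟩

lemma exists_faceBoundary_eq (c : SquareEdge m → ZMod 2)
    (hc : (collapsedSquare m).edgeBoundary c = 0) :
    ∃ s, (collapsedSquare m).faceBoundary s = c := by
  obtain ⟨b, -, hb⟩ := exists_succ_eq_add (0 : ZMod 2) fun k : Fin m =>
    c (vertical k 0) + c (diagonal k.succ 0)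
  choose L hL₀ hL using fun i : Fin (m + 1) => exists_succ_eq_add (b i) fun k : Fin m =>
    c (diagonal i k.castSucc) + c (horizontal i k)
  have hvert (i : Fin m) (j : Fin (m + 1)) :
      L i.succ j + c (diagonal i.succ j) + L i.castSucc j = c (vertical i j) := by
    induction j using Fin.induction with
    | zero =>
      rw [hL₀, hL₀, hb]
      linear_combination (b i.castSucc + c (diagonal i.succ 0)) * CharTwo.two_eq_zero (R := ZMod 2)
    | succ j ih =>
      have hhex := (edgeBoundary_interiorPoint c i j).symm.trans (DFunLike.congr_fun hc _)
      rw [sum_edgesAt, Finsupp.zero_apply] at hhex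
      rw [hL, hL]
      linear_combination ih + hhex - (c (vertical i j.succ)) * CharTwo.two_eq_zero (R := ZMod 2)
  refine ⟨fun | .lower i j => L i j | .upper i j => L i j + c (diagonal i j), funext ?_⟩
  rintro (⟨i, j⟩ | ⟨i, j⟩ | ⟨i, j⟩)
  · change L i j.succ + (L i j.castSucc + c (diagonal i j.castSucc)) = _
    rw [hL]
    linear_combination (L i j.castSucc + c (diagonal i j.castSucc)) *
      CharTwo.two_eq_zero (R := ZMod 2)
  · exact hvert i j
  · change L i j + c (diagonal i j) + L i j = _
    linear_combination L i j * CharTwo.two_eq_zero (R := ZMod 2)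

lemma eq_lower_column {A : Type*} {s : SquareFace m → A} {i : Fin (m + 1)}
    (hh : ∀ j : Fin m, s (lower i j.succ) = s (upper i j.castSucc))
    (hd : ∀ j, s (upper i j) = s (lower i j)) (j : Fin (m + 1)) :
    s (lower i j) = s (lower i 0) ∧ s (upper i j) = s (lower i 0) := by
  have hl : s (lower i j) = s (lower i 0) := by
    induction j using Fin.induction with
    | zero => rfl
    | succ j ih => exact (hh j).trans ((hd _).trans ih)
  exact ⟨hl, (hd j).trans hl⟩

lemma eq_lower_row {A : Type*} {s : SquareFace m → A} {j : Fin (m + 1)}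
    (hv : ∀ i : Fin m, s (upper i.succ j) = s (lower i.castSucc j))
    (hd : ∀ i, s (upper i j) = s (lower i j)) (i : Fin (m + 1)) :
    s (lower i j) = s (lower 0 j) ∧ s (upper i j) = s (lower 0 j) := by
  have hl : s (lower i j) = s (lower 0 j) := by
    induction i using Fin.induction with
    | zero => rfl
    | succ i ih => exact (hd _).symm.trans ((hv i).trans ih)
  exact ⟨hl, (hd i).trans hl⟩

lemma eq_of_faceBoundary_eq_zero (s : SquareFace m → ZMod 2)
    (hs : (collapsedSquare m).faceBoundary s = 0) (f f' : SquareFace m) : s f = s f' := by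
  have hside (e : SquareEdge m) := CharTwo.add_eq_zero.1 (congrFun hs e)
  have hcol (i : Fin (m + 1)) := eq_lower_column (s := s) (i := i)
    (fun j => hside (horizontal i j)) fun j => hside (diagonal i j)
  have hrow := eq_lower_row (s := s) (j := 0)
    (fun i => hside (vertical i 0)) fun i => hside (diagonal i 0)
  have hconst (f : SquareFace m) : s f = s (lower 0 0) := by
    rcases f with ⟨i, j⟩ | ⟨i, j⟩
    · exact (hcol i j).1.trans (hrow i).1
    · exact (hcol i j).2.trans (hrow i).1
  exact (hconst f).trans (hconst f').symm

lemma side_eq_of_mem_edgesAt {s : SquareFace m → ZMod 2} {i j : Fin m}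
    (hs : ∀ e ∈ edgesAt i j, s ((collapsedSquare m).left e) = s ((collapsedSquare m).right e))
    {e : SquareEdge m} (he : e ∈ edgesAt i j) :
    s ((collapsedSquare m).left e) = s (upper i.succ j.succ) := by
  simp only [edgesAt, Finset.mem_insert, Finset.mem_singleton, forall_eq_or_imp, forall_eq] at hs he
  obtain ⟨h₁, h₂, h₃, -, h₅, h₆⟩ := hs
  rcases he with rfl | rfl | rfl | rfl | rfl | rfl <;> simp_all

lemma incident_zero_iff {e : SquareEdge m} :
    (collapsedSquare m).Incident (0, 0) e ↔ match e with
      | .horizontal i _ => i = 0 ∨ i = Fin.last m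
      | .vertical _ j => j = 0 ∨ j = Fin.last m
      | .diagonal i j => (i = 0 ∨ i = Fin.last m) ∨ j = 0 ∨ j = Fin.last m := by
  rcases e with ⟨i, j⟩ | ⟨i, j⟩ | ⟨i, j⟩ <;>
    simp only [CellComplex.Incident, collapseSides_eq_zero_iff, squareInterior, Set.mem_prod,
      Set.mem_Icc, Fin.ext_iff, Fin.val_zero, Fin.val_last] <;> omega

lemma side_eq_of_incident_zero {s : SquareFace m → ZMod 2}
    (hs : ∀ e, (collapsedSquare m).Incident (0, 0) e →
      s ((collapsedSquare m).left e) = s ((collapsedSquare m).right e))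
    {e : SquareEdge m} (he : (collapsedSquare m).Incident (0, 0) e) :
    s ((collapsedSquare m).left e) = s (lower 0 0) := by
  have hcol (i : Fin (m + 1)) (hi : i = 0 ∨ i = Fin.last m) :=
    eq_lower_column (s := s) (i := i) (fun j => hs (horizontal i j) (incident_zero_iff.2 hi))
      fun j => hs (diagonal i j) (incident_zero_iff.2 (.inl hi))
  have hrow (j : Fin (m + 1)) (hj : j = 0 ∨ j = Fin.last m) :=
    eq_lower_row (s := s) (j := j) (fun i => hs (vertical i j) (incident_zero_iff.2 hj))
      fun i => hs (diagonal i j) (incident_zero_iff.2 (.inr hj))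
  have hcol₀ i := (hrow 0 (.inl rfl) i).1
  have hrow₀ j := (hcol 0 (.inl rfl) j).1
  have he' := incident_zero_iff.1 he
  rcases e with ⟨i, j⟩ | ⟨i, j⟩ | ⟨i, j⟩
  · exact (hcol i he' _).1.trans (hcol₀ i)
  · exact (hrow j he' _).2.trans (hrow₀ j)
  · rcases he' with hi | hj
    · exact (hcol i hi _).2.trans (hcol₀ i)
    · exact (hrow j hj _).2.trans (hrow₀ j)

end CollapsedSquare

theorem isSphere_collapsedSquare : (collapsedSquare m).IsSphere where
  left_ne_right := by rintro (_ | _ | _) <;> simp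
  card_sides_le := CollapsedSquare.card_sides_le
  edgeBoundary_faceBoundary := CollapsedSquare.edgeBoundary_faceBoundary
  exists_faceBoundary_eq := CollapsedSquare.exists_faceBoundary_eq
  eq_of_faceBoundary_eq_zero := CollapsedSquare.eq_of_faceBoundary_eq_zero
  side_eq p s hp e e' he he' := by
    have hs (e : SquareEdge m) := CellComplex.left_eq_right_of_notMem_support (e := e) hp
    by_cases h₀ : p = (0, 0)
    · subst h₀
      exact (CollapsedSquare.side_eq_of_incident_zero hs he).trans
        (CollapsedSquare.side_eq_of_incident_zero hs he').symm
    · obtain ⟨i, j, rfl⟩ := exists_interiorPoint_eq (mem_squareInterior_of_mem_ends ⟨e, he⟩ h₀)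
      have hs' (e) (he : e ∈ edgesAt i j) := hs e (incident_of_mem_edgesAt he)
      exact (CollapsedSquare.side_eq_of_mem_edgesAt hs' (mem_edgesAt_of_incident he)).trans
        (CollapsedSquare.side_eq_of_mem_edgesAt hs' (mem_edgesAt_of_incident he')).symm

end Lattice

section MinorModel

variable {V P : Type*} {G : SimpleGraph V} {H : SimpleGraph P} {B : V → Set P}

/-- A model of `G` as a minor of `H`: pairwise disjoint connected branch sets `B g`, with an edge
of `H` between the branch sets of any two adjacent vertices of `G`. -/
structure IsMinorModel (G : SimpleGraph V) (H : SimpleGraph P) (B : V → Set P) : Prop where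
  connected (g : V) : (H.induce (B g)).Connected
  disjoint : Pairwise (Function.onFun Disjoint B)
  exists_adj {g h : V} : G.Adj g h → ∃ p ∈ B g, ∃ q ∈ B h, H.Adj p q

lemma exists_adj_of_preconnected_induce {S T : Set P} (hS : (H.induce S).Preconnected)
    (hST : (S ∩ T).Nonempty) (hST' : (S \ T).Nonempty) : ∃ a ∈ S ∩ T, ∃ b ∈ S \ T, H.Adj a b := by
  obtain ⟨p, hp, hpT⟩ := hST
  obtain ⟨q, hq, hqT⟩ := hST'
  obtain ⟨w⟩ := hS ⟨p, hp⟩ ⟨q, hq⟩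
  obtain ⟨d, -, h₁, h₂⟩ := w.exists_boundary_dart {x | x.1 ∈ T} hpT hqT
  exact ⟨d.fst, ⟨d.fst.2, h₁⟩, d.snd, ⟨d.snd.2, h₂⟩, d.adj⟩

lemma connected_induce_singleton (b : P) : (H.induce {b}).Connected := by
  rw [SimpleGraph.induce_singleton_eq_top]
  exact SimpleGraph.connected_top

lemma connected_induce_insert {S : Set P} {a b : P} (hS : (H.induce S).Connected) (ha : a ∈ S)
    (hab : H.Adj a b) : (H.induce (insert b S)).Connected := by
  rw [Set.insert_eq, Set.union_comm]
  exact SimpleGraph.connected_induce_union hS.preconnected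
    (connected_induce_singleton b).preconnected ha rfl hab

namespace IsMinorModel

open scoped Classical in
lemma insert (hB : IsMinorModel G H B) {g : V} {a b : P} (ha : a ∈ B g) (hb : ∀ h, b ∉ B h)
    (hab : H.Adj a b) : IsMinorModel G H (Function.update B g (insert b (B g))) := by
  have hle (h : V) : B h ⊆ Function.update B g (Insert.insert b (B g)) h := by
    by_cases hh : h = g
    · subst hh; simp
    · simp [hh]
  refine ⟨fun h => ?_, fun h h' hne => ?_, fun hgh => ?_⟩
  · by_cases hh : h = g
    · subst hh
      rw [Function.update_self]
      exact connected_induce_insert (hB.connected h) ha hab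
    · rw [Function.update_of_ne hh]
      exact hB.connected h
  · have := hB.disjoint hne
    simp only [Function.onFun, Function.update_apply] at this ⊢
    split_ifs with h₁ h₂ h₂
    · exact absurd (h₁.trans h₂.symm) hne
    · exact Set.disjoint_insert_left.2 ⟨hb h', h₁ ▸ this⟩
    · exact Set.disjoint_insert_right.2 ⟨hb h, h₂ ▸ this⟩
    · exact this
  · obtain ⟨p, hp, q, hq, hpq⟩ := hB.exists_adj hgh
    exact ⟨p, hle _ hp, q, hle _ hq, hpq⟩

lemma exists_iUnion_eq [Nonempty V] {I : Set P} (hI : I.Finite) (hconn : (H.induce I).Preconnected)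
    (hB : IsMinorModel G H B) (hBI : ∀ g, B g ⊆ I) :
    ∃ B', IsMinorModel G H B' ∧ ⋃ g, B' g = I := by
  classical
  induction hk : (I \ ⋃ g, B g).ncard using Nat.strong_induction_on generalizing B with
  | _ k ih =>
  obtain hempty | hne := (I \ ⋃ g, B g).eq_empty_or_nonempty
  · exact ⟨B, hB, (Set.iUnion_subset hBI).antisymm (Set.sdiff_eq_empty.1 hempty)⟩
  have hmeet : (I ∩ ⋃ g, B g).Nonempty := by
    obtain ⟨g⟩ := ‹Nonempty V›
    obtain ⟨p, hp⟩ := (hB.connected g).nonempty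
    exact ⟨p, hBI g hp, Set.mem_iUnion_of_mem g hp⟩
  obtain ⟨a, ⟨-, ha⟩, b, ⟨hbI, hb⟩, hab⟩ := exists_adj_of_preconnected_induce hconn hmeet hne
  obtain ⟨g, hg⟩ := Set.mem_iUnion.1 ha
  have hb' : ∀ h, b ∉ B h := fun h hh => hb (Set.mem_iUnion_of_mem h hh)
  refine ih _ ?_ (hB.insert hg hb' hab) (fun h => ?_) rfl
  · rw [← hk]
    refine Set.ncard_lt_ncard ?_ (hI.subset Set.sdiff_subset)
    refine Set.ssubset_iff_of_subset (Set.sdiff_subset_sdiff_right (Set.iUnion_mono fun h => ?_))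
      |>.2 ⟨b, ⟨hbI, hb⟩, fun h => h.2 (Set.mem_iUnion_of_mem g (by simp))⟩
    by_cases hh : h = g
    · subst hh; simp
    · simp [hh]
  · by_cases hh : h = g
    · subst hh; simpa using Set.insert_subset hbI (hBI h)
    · simpa [hh] using hBI h

lemma exists_colouring (hB : IsMinorModel G H B) (g₀ : V) :
    ∃ col : P → V, (∀ g, ∀ p ∈ B g, col p = g) ∧ ∀ p ∉ ⋃ g, B g, col p = g₀ := by
  classical
  refine ⟨fun p => if h : ∃ g, p ∈ B g then h.choose else g₀, fun g p hp => ?_, fun p hp => ?_⟩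
  · have hex : ∃ g, p ∈ B g := ⟨g, hp⟩
    dsimp only
    rw [dif_pos hex]
    exact hB.disjoint.eq (Set.not_disjoint_iff.2 ⟨p, hex.choose_spec, hp⟩)
  · exact dif_neg (mt Set.mem_iUnion.2 hp)

end IsMinorModel

/-- The piece of `S` that is cut off by removing `T` and contains `b`. -/
def componentOutside (H : SimpleGraph P) (S T : Set P) (b : P) : Set P :=
  {p | ∃ C ⊆ S \ T, b ∈ C ∧ p ∈ C ∧ (H.induce C).Connected}

lemma componentOutside_subset {S T : Set P} {b : P} : componentOutside H S T b ⊆ S \ T :=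
  fun _ ⟨_, hC, _, hp, _⟩ => hC hp

lemma mem_componentOutside {S T : Set P} {b : P} (hb : b ∈ S \ T) :
    b ∈ componentOutside H S T b :=
  ⟨{b}, Set.singleton_subset_iff.2 hb, rfl, rfl, connected_induce_singleton b⟩

lemma connected_componentOutside {S T : Set P} {b : P} (hb : b ∈ S \ T) :
    (H.induce (componentOutside H S T b)).Connected := by
  refine SimpleGraph.induce_connected_of_patches b (mem_componentOutside hb) ?_
  rintro p ⟨C, hC, hbC, hpC, hconn⟩
  exact ⟨C, fun q hq => ⟨C, hC, hbC, hq, hconn⟩, hbC, hpC, hconn.preconnected _ _⟩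

lemma mem_componentOutside_of_adj {S T : Set P} {b p q : P} (hp : p ∈ componentOutside H S T b)
    (hq : q ∈ S \ T) (hpq : H.Adj p q) : q ∈ componentOutside H S T b := by
  obtain ⟨C, hC, hbC, hpC, hconn⟩ := hp
  exact ⟨insert q C, Set.insert_subset hq hC, .inr hbC, .inl rfl,
    connected_induce_insert hconn hpC hpq⟩

lemma exists_adj_componentOutside {S T : Set P} {b : P} (hS : (H.induce S).Preconnected)
    (hb : b ∈ S \ T) (hST : (S ∩ T).Nonempty) :
    ∃ p ∈ componentOutside H S T b, ∃ q ∈ T, H.Adj p q := by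
  have hsub : componentOutside H S T b ⊆ S \ T := componentOutside_subset
  obtain ⟨p, ⟨-, hp⟩, q, ⟨hqS, hq⟩, hpq⟩ := exists_adj_of_preconnected_induce hS
    ⟨b, hb.1, mem_componentOutside (H := H) hb⟩
    (hST.mono fun x hx => ⟨hx.1, fun hx' => (hsub hx').2 hx.2⟩)
  exact ⟨p, hp, q, by_contra fun hqT => hq (mem_componentOutside_of_adj hp ⟨hqS, hqT⟩ hpq), hpq⟩

/-- Of each pair of overlapping sets `S g h` and `S h g`, one is cut back to the component of its
base point outside the other. -/
lemma exists_disjoint_pieces (S : V → V → Set P) (b : V → P)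
    (hS : ∀ g h, G.Adj g h → (H.induce (S g h)).Preconnected)
    (hb : ∀ g h, G.Adj g h → b g ∈ S g h \ S h g)
    (hmeet : ∀ g h, G.Adj g h → (S g h ∩ S h g).Nonempty) :
    ∃ T : V → V → Set P, ∀ g h, G.Adj g h →
      (T g h ⊆ S g h ∧ b g ∈ T g h ∧ (H.induce (T g h)).Preconnected) ∧
        Disjoint (T g h) (T h g) ∧ ∃ p ∈ T g h, ∃ q ∈ T h g, H.Adj p q := by
  classical
  let T (g h : V) : Set P :=
    if WellOrderingRel g h then S g h else componentOutside H (S g h) (S h g) (b g)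
  refine ⟨T, fun g h hgh => ⟨?_, ?_⟩⟩
  · by_cases hlt : WellOrderingRel g h
    · rw [show T g h = S g h from if_pos hlt]
      exact ⟨subset_rfl, (hb g h hgh).1, hS g h hgh⟩
    · rw [show T g h = componentOutside H (S g h) (S h g) (b g) from if_neg hlt]
      exact ⟨componentOutside_subset.trans Set.sdiff_subset, mem_componentOutside (hb g h hgh),
        (connected_componentOutside (hb g h hgh)).preconnected⟩
  · wlog hlt : WellOrderingRel g h generalizing g h
    · obtain ⟨hd, p, hp, q, hq, hpq⟩ := this h g hgh.symm
        ((trichotomous_of WellOrderingRel g h).resolve_left hlt |>.resolve_left hgh.ne)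
      exact ⟨hd.symm, q, hq, p, hp, hpq.symm⟩
    rw [show T g h = S g h from if_pos hlt,
      show T h g = componentOutside H (S h g) (S g h) (b h) from if_neg (asymm hlt)]
    obtain ⟨p, hp, q, hq, hpq⟩ := exists_adj_componentOutside (hS h g hgh.symm) (hb h g hgh.symm)
      (hmeet h g hgh.symm)
    exact ⟨Set.disjoint_sdiff_right.mono_right componentOutside_subset, q, hq, p, hp, hpq.symm⟩

theorem exists_isMinorModel_of_pieces (S : V → V → Set P) (b : V → P)
    (hdeg : ∀ g, ∃ h, G.Adj g h)
    (hS : ∀ g h, G.Adj g h → (H.induce (S g h)).Preconnected)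
    (hb : ∀ g h, G.Adj g h → b g ∈ S g h \ S h g)
    (hmeet : ∀ g h, G.Adj g h → (S g h ∩ S h g).Nonempty)
    (hdisj : ∀ g h g' h', G.Adj g h → G.Adj g' h' → g ≠ g' → s(g, h) ≠ s(g', h') →
      Disjoint (S g h) (S g' h')) :
    ∃ B : V → Set P, IsMinorModel G H B ∧ ∀ g, B g ⊆ ⋃ (h) (_ : G.Adj g h), S g h := by
  obtain ⟨T, hT⟩ := exists_disjoint_pieces S b hS hb hmeet
  have hmem (g h : V) (hgh : G.Adj g h) : T g h ⊆ ⋃ (h) (_ : G.Adj g h), T g h :=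
    Set.subset_iUnion₂ (s := fun h (_ : G.Adj g h) => T g h) h hgh
  refine ⟨fun g => ⋃ (h) (_ : G.Adj g h), T g h, ⟨fun g => ?_, fun g g' hne => ?_, ?_⟩,
    fun g => Set.iUnion₂_mono fun h hgh => (hT g h hgh).1.1⟩
  · obtain ⟨h, hgh⟩ := hdeg g
    refine SimpleGraph.induce_connected_of_patches (b g) (hmem g h hgh (hT g h hgh).1.2.1) ?_
    intro p hp
    obtain ⟨h', hgh', hp⟩ := Set.mem_iUnion₂.1 hp
    obtain ⟨-, hb', hconn⟩ := (hT g h' hgh').1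
    exact ⟨T g h', hmem g h' hgh', hb', hp, hconn _ _⟩
  · simp only [Function.onFun, Set.disjoint_iUnion_left, Set.disjoint_iUnion_right]
    intro h' hgh' h hgh
    by_cases hs : s(g, h) = s(g', h')
    · obtain ⟨rfl, rfl⟩ := (Sym2.eq_iff.1 hs).resolve_left fun h => hne h.1
      exact (hT _ _ hgh).2.1
    · exact (hdisj g h g' h' hgh hgh' hne hs).mono (hT g h hgh).1.1 (hT g' h' hgh').1.1
  · intro g h hgh
    obtain ⟨-, -, p, hp, q, hq, hpq⟩ := hT g h hgh
    exact ⟨p, hmem g h hgh hp, q, hmem h g hgh.symm hq, hpq⟩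

end MinorModel

section PlanarModel

/-- The point of the plane that the lattice point `p` stands for, in the square grid of mesh `δ`
with corner `o`. -/
def latticePoint (o : ℝ × ℝ) (δ : ℝ) (p : ℕ × ℕ) : ℝ × ℝ := o + δ • ((p.1 : ℝ), (p.2 : ℝ))

/-- The lattice points at distance less than the mesh `δ` from the set `A`. -/
def nearPoints (o : ℝ × ℝ) (δ : ℝ) (A : Set (ℝ × ℝ)) : Set (ℕ × ℕ) :=
  latticePoint o δ ⁻¹' Metric.thickening δ A

variable {o x : ℝ × ℝ} {δ : ℝ} {A B : Set (ℝ × ℝ)} {p q : ℕ × ℕ}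

lemma mem_nearPoints : p ∈ nearPoints o δ A ↔ ∃ x ∈ A, dist (latticePoint o δ p) x < δ :=
  Metric.mem_thickening_iff

lemma dist_latticePoint_lt_iff : dist (latticePoint o δ p) x < δ ↔
    |o.1 + δ * p.1 - x.1| < δ ∧ |o.2 + δ * p.2 - x.2| < δ := by
  simp [latticePoint, Prod.dist_eq, Real.dist_eq]

lemma triangularLattice_adj_iff : triangularLattice.Adj p q ↔
    (q = p + (1, 0) ∨ q = p + (0, 1) ∨ q = p + (1, 1)) ∨
      (p = q + (1, 0) ∨ p = q + (0, 1) ∨ p = q + (1, 1)) := by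
  simp only [triangularLattice, SimpleGraph.fromRel_adj, and_iff_right_iff_imp]
  rintro h rfl
  simp [Prod.ext_iff] at h

lemma reachable_of_same_row {S : Set (ℕ × ℕ)} {i i' j : ℕ} (hp : (i, j) ∈ S) (hq : (i', j) ∈ S)
    (h : i ≤ i' + 1) (h' : i' ≤ i + 1) :
    (triangularLattice.induce S).Reachable ⟨_, hp⟩ ⟨_, hq⟩ := by
  obtain rfl | hne := eq_or_ne i i'
  · rfl
  · refine SimpleGraph.Adj.reachable (SimpleGraph.induce_adj.2 (triangularLattice_adj_iff.2 ?_))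
    simp only [Prod.mk_add_mk, Prod.mk.injEq]
    lia

lemma reachable_of_same_column {S : Set (ℕ × ℕ)} {i j j' : ℕ} (hp : (i, j) ∈ S)
    (hq : (i, j') ∈ S) (h : j ≤ j' + 1) (h' : j' ≤ j + 1) :
    (triangularLattice.induce S).Reachable ⟨_, hp⟩ ⟨_, hq⟩ := by
  obtain rfl | hne := eq_or_ne j j'
  · rfl
  · refine SimpleGraph.Adj.reachable (SimpleGraph.induce_adj.2 (triangularLattice_adj_iff.2 ?_))
    simp only [Prod.mk_add_mk, Prod.mk.injEq]
    lia

lemma finite_squareInterior (m : ℕ) : (squareInterior m).Finite :=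
  (Set.finite_Icc 1 m).prod (Set.finite_Icc 1 m)

lemma preconnected_induce_squareInterior (m : ℕ) :
    (triangularLattice.induce (squareInterior m)).Preconnected := by
  suffices h : ∀ i j, ∀ hp : (i + 1, j + 1) ∈ squareInterior m,
      ∀ h₁ : (1, 1) ∈ squareInterior m,
        (triangularLattice.induce (squareInterior m)).Reachable ⟨_, hp⟩ ⟨_, h₁⟩ by
    have hcorner {p : ℕ × ℕ} (hp : p ∈ squareInterior m) : (1, 1) ∈ squareInterior m := by
      simp only [squareInterior, Set.mem_prod, Set.mem_Icc] at hp ⊢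
      lia
    have hall (p : squareInterior m) :
        (triangularLattice.induce (squareInterior m)).Reachable p ⟨_, hcorner p.2⟩ := by
      obtain ⟨⟨i, j⟩, hp⟩ := p
      obtain ⟨hi, hj⟩ := hp
      obtain ⟨i, rfl⟩ := Nat.exists_eq_add_of_le' hi.1
      obtain ⟨j, rfl⟩ := Nat.exists_eq_add_of_le' hj.1
      exact h i j _ _
    exact fun p q => (hall p).trans (hall q).symm
  have hmem {i j : ℕ} : (i + 1, j + 1) ∈ squareInterior m ↔ i + 1 ≤ m ∧ j + 1 ≤ m := by
    simp [squareInterior]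
  intro i j
  induction i with
  | zero =>
    induction j with
    | zero => exact fun _ _ => .rfl
    | succ j ih =>
      intro hp h₁
      have hq : (0 + 1, j + 1) ∈ squareInterior m := by rw [hmem] at hp ⊢; lia
      exact (reachable_of_same_column hp hq (by lia) (by lia)).trans (ih hq h₁)
  | succ i ih =>
    intro hp h₁
    have hq : (i + 1, j + 1) ∈ squareInterior m := by rw [hmem] at hp ⊢; lia
    exact (reachable_of_same_row hp hq (by lia) (by lia)).trans (ih hq h₁)

lemma exists_dist_latticePoint_lt (hδ : 0 < δ) (hx : o ≤ x) :
    ∃ p, dist (latticePoint o δ p) x < δ := by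
  have hfloor {a b : ℝ} (hab : a ≤ b) : |a + δ * ⌊(b - a) / δ⌋₊ - b| < δ := by
    have h₁ := Nat.floor_le (div_nonneg (sub_nonneg.2 hab) hδ.le)
    have h₂ := Nat.lt_floor_add_one ((b - a) / δ)
    rw [le_div_iff₀ hδ] at h₁
    rw [div_lt_iff₀ hδ] at h₂
    rw [abs_lt]
    constructor <;> linarith
  exact ⟨(_, _), dist_latticePoint_lt_iff.2 ⟨hfloor hx.1, hfloor hx.2⟩⟩

lemma le_add_one_of_abs_sub_lt {a b : ℝ} {i j : ℕ} (hi : |a + δ * i - b| < δ)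
    (hj : |a + δ * j - b| < δ) : i ≤ j + 1 := by
  have hδ : 0 < δ := (abs_nonneg _).trans_lt hi
  rw [abs_lt] at hi hj
  have hlt : (i : ℝ) < j + 2 := lt_of_mul_lt_mul_left (by linarith) hδ.le
  exact Nat.lt_succ_iff.1 (mod_cast hlt)

lemma reachable_of_dist_latticePoint_lt (hx : x ∈ A) (p q : nearPoints o δ A)
    (hp : dist (latticePoint o δ p) x < δ) (hq : dist (latticePoint o δ q) x < δ) :
    (triangularLattice.induce (nearPoints o δ A)).Reachable p q := by
  obtain ⟨⟨i, j⟩, _⟩ := p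
  obtain ⟨⟨i', j'⟩, _⟩ := q
  obtain ⟨hi, hj⟩ := dist_latticePoint_lt_iff.1 hp
  obtain ⟨hi', hj'⟩ := dist_latticePoint_lt_iff.1 hq
  have hr : (i', j) ∈ nearPoints o δ A :=
    mem_nearPoints.2 ⟨x, hx, dist_latticePoint_lt_iff.2 ⟨hi', hj⟩⟩
  exact (reachable_of_same_row _ hr (le_add_one_of_abs_sub_lt hi hi')
    (le_add_one_of_abs_sub_lt hi' hi)).trans (reachable_of_same_column hr _
    (le_add_one_of_abs_sub_lt hj hj') (le_add_one_of_abs_sub_lt hj' hj))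

lemma preconnected_induce_nearPoints (hδ : 0 < δ) (hA : IsPreconnected A) (ho : ∀ x ∈ A, o ≤ x) :
    (triangularLattice.induce (nearPoints o δ A)).Preconnected := by
  have hnear (x) (hx : x ∈ A) : ∃ r : nearPoints o δ A, dist (latticePoint o δ r) x < δ := by
    obtain ⟨r, hr⟩ := exists_dist_latticePoint_lt hδ (ho x hx)
    exact ⟨⟨r, mem_nearPoints.2 ⟨x, hx, hr⟩⟩, hr⟩
  intro p q
  obtain ⟨x, hx, hpx⟩ := mem_nearPoints.1 p.2
  obtain ⟨y, hy, hqy⟩ := mem_nearPoints.1 q.2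
  refine hA.induction₂ (fun x y => ∀ p q : nearPoints o δ A, dist (latticePoint o δ p) x < δ →
    dist (latticePoint o δ q) y < δ → (triangularLattice.induce (nearPoints o δ A)).Reachable p q)
    (fun x hx => ?_) (fun x y z _ hy _ hxy hyz p q hp hq => ?_)
    (fun x y _ _ h p q hp hq => (h q p hq hp).symm) hx hy p q hpx hqy
  · obtain ⟨r, hr⟩ := hnear x hx
    have hopen : ∀ᶠ y in nhdsWithin x A, dist (latticePoint o δ r) y < δ :=
      nhdsWithin_le_nhds ((continuous_const.dist continuous_id).continuousAt.eventually_lt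
        continuousAt_const hr)
    filter_upwards [hopen, self_mem_nhdsWithin] with y hy hyA p q hp hq
    exact (reachable_of_dist_latticePoint_lt hx p r hp hr).trans
      (reachable_of_dist_latticePoint_lt hyA r q hy hq)
  · obtain ⟨r, hr⟩ := hnear y hy
    exact (hxy p r hp hr).trans (hyz r q hr hq)

lemma nearPoints_subset_squareInterior {R : ℝ} {m : ℕ} (hδ : δ ≤ 1) (hR : ∀ x ∈ A, ‖x‖ ≤ R)
    (hm : 2 * R + 2 ≤ δ * m) : nearPoints (-R - 1, -R - 1) δ A ⊆ squareInterior m := by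
  have key {i : ℕ} {a : ℝ} (ha : ‖a‖ ≤ R) (hi : |-R - 1 + δ * i - a| < δ) : i ∈ Set.Icc 1 m := by
    have hδ₀ : 0 < δ := (abs_nonneg _).trans_lt hi
    rw [Real.norm_eq_abs, abs_le] at ha
    rw [abs_lt] at hi
    refine ⟨Nat.one_le_iff_ne_zero.2 ?_, ?_⟩
    · rintro rfl
      norm_num at hi
      linarith
    · exact_mod_cast (lt_of_mul_lt_mul_left (show δ * i < δ * m by linarith) hδ₀.le).le
  intro p hp
  obtain ⟨x, hx, hpx⟩ := mem_nearPoints.1 hp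
  obtain ⟨h₁, h₂⟩ := dist_latticePoint_lt_iff.1 hpx
  exact ⟨key ((norm_fst_le x).trans (hR x hx)) h₁, key ((norm_snd_le x).trans (hR x hx)) h₂⟩

namespace PlaneEmbedding

variable {V : Type*} {G : SimpleGraph V} (E : PlaneEmbedding G) {g h g' h' : V}

/-- The half of the arc of the edge `gh` that starts at `g`. -/
def halfArc (g h : V) : Set (ℝ × ℝ) := E.arc g h '' Set.Icc 0 (1 / 2)

lemma halfArc_subset : E.halfArc g h ⊆ E.arc g h '' Set.Icc 0 1 :=
  Set.image_mono (Set.Icc_subset_Icc_right (by norm_num))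

lemma isCompact_halfArc (hgh : G.Adj g h) : IsCompact (E.halfArc g h) :=
  isCompact_Icc.image (E.arc_cont hgh)

lemma isPreconnected_halfArc (hgh : G.Adj g h) : IsPreconnected (E.halfArc g h) :=
  isPreconnected_Icc.image _ (E.arc_cont hgh).continuousOn

lemma pos_mem_halfArc (hgh : G.Adj g h) : E.pos g ∈ E.halfArc g h :=
  ⟨0, by norm_num, E.arc_zero hgh⟩

lemma pos_notMem_halfArc (hgh : G.Adj g h) : E.pos h ∉ E.halfArc g h := by
  rintro ⟨t, ht, hth⟩
  have := E.arc_injOn hgh ⟨ht.1, ht.2.trans (by norm_num)⟩ (Set.right_mem_Icc.2 zero_le_one)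
    (hth.trans (E.arc_one hgh).symm)
  norm_num [this] at ht

lemma halfArc_inter_halfArc_nonempty (hgh : G.Adj g h) :
    (E.halfArc g h ∩ E.halfArc h g).Nonempty := by
  refine ⟨E.arc g h (1 / 2), ⟨1 / 2, by norm_num, rfl⟩, 1 / 2, by norm_num, ?_⟩
  rw [E.arc_symm hgh]
  norm_num

lemma disjoint_halfArc (hgh : G.Adj g h) (hgh' : G.Adj g' h') (hne : g ≠ g')
    (hs : s(g, h) ≠ s(g', h')) : Disjoint (E.halfArc g h) (E.halfArc g' h') := by
  refine Set.disjoint_left.2 fun x hx hx' => hne (E.pos_inj ?_)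
  obtain ⟨h₁, h₂⟩ := E.arc_meet hgh hgh' hs ⟨E.halfArc_subset hx, E.halfArc_subset hx'⟩
  obtain rfl := h₁.resolve_right fun h => E.pos_notMem_halfArc hgh (h ▸ hx)
  exact h₂.resolve_right fun h => E.pos_notMem_halfArc hgh' (h ▸ hx')

open Filter Topology in
lemma eventually_disjoint_thickening {A B : Set (ℝ × ℝ)} (hA : IsCompact A) (hB : IsCompact B)
    (hAB : Disjoint A B) :
    ∀ᶠ δ in 𝓝[>] (0 : ℝ), Disjoint (Metric.thickening δ A) (Metric.thickening δ B) := by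
  obtain ⟨ε, hε, hd⟩ := hAB.exists_thickenings hA hB.isClosed
  filter_upwards [Ioo_mem_nhdsGT hε] with δ hδ
  exact hd.mono (Metric.thickening_mono hδ.2.le _) (Metric.thickening_mono hδ.2.le _)

open Filter Topology in
lemma exists_mesh [Finite V] : ∃ δ : ℝ, 0 < δ ∧ δ < 1 ∧
    (∀ g h g' h', G.Adj g h → G.Adj g' h' → g ≠ g' → s(g, h) ≠ s(g', h') →
      Disjoint (Metric.thickening δ (E.halfArc g h)) (Metric.thickening δ (E.halfArc g' h'))) ∧
    ∀ g h, G.Adj g h →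
      Disjoint (Metric.thickening δ (E.halfArc g h)) (Metric.thickening δ {E.pos h}) := by
  have harcs : ∀ᶠ δ in 𝓝[>] (0 : ℝ), ∀ g h g' h', G.Adj g h → G.Adj g' h' → g ≠ g' →
      s(g, h) ≠ s(g', h') →
        Disjoint (Metric.thickening δ (E.halfArc g h)) (Metric.thickening δ (E.halfArc g' h')) := by
    simp only [eventually_all]
    exact fun g h g' h' hgh hgh' hne hs => eventually_disjoint_thickening
      (E.isCompact_halfArc hgh) (E.isCompact_halfArc hgh') (E.disjoint_halfArc hgh hgh' hne hs)
  have hends : ∀ᶠ δ in 𝓝[>] (0 : ℝ), ∀ g h, G.Adj g h →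
      Disjoint (Metric.thickening δ (E.halfArc g h)) (Metric.thickening δ {E.pos h}) := by
    simp only [eventually_all]
    exact fun g h hgh => eventually_disjoint_thickening (E.isCompact_halfArc hgh)
      isCompact_singleton (Set.disjoint_singleton_right.2 (E.pos_notMem_halfArc hgh))
  obtain ⟨δ, h₁, h₂, hδ⟩ := (harcs.and
    (hends.and (eventually_mem_set.2 (Ioo_mem_nhdsGT one_pos)))).exists
  exact ⟨δ, hδ.1, hδ.2, h₁, h₂⟩

lemma exists_norm_le_of_mem_halfArc [Finite V] :
    ∃ R : ℝ, ∀ g h, G.Adj g h → ∀ x ∈ E.halfArc g h, ‖x‖ ≤ R := by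
  have hbdd : Bornology.IsBounded
      (⋃ e : {e : V × V // G.Adj e.1 e.2}, E.halfArc e.1.1 e.1.2) :=
    Bornology.isBounded_iUnion.2 fun e => (E.isCompact_halfArc e.2).isBounded
  obtain ⟨R, hR⟩ := hbdd.exists_norm_le
  exact ⟨R, fun g h hgh x hx => hR x (Set.mem_iUnion_of_mem ⟨(g, h), hgh⟩ hx)⟩

theorem exists_isMinorModel [Finite V] (E : PlaneEmbedding G) (hdeg : ∀ g, ∃ h, G.Adj g h) :
    ∃ (m : ℕ) (B : V → Set (ℕ × ℕ)),
      IsMinorModel G triangularLattice B ∧ ∀ g, B g ⊆ squareInterior m := by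
  obtain ⟨δ, hδ, hδ₁, harcs, hends⟩ := E.exists_mesh
  obtain ⟨R, hR⟩ := E.exists_norm_le_of_mem_halfArc
  set o : ℝ × ℝ := (-R - 1, -R - 1)
  have ho (g h) (hgh : G.Adj g h) (x) (hx : x ∈ E.halfArc g h) : o ≤ x := by
    have h₁ := (norm_fst_le x).trans (hR g h hgh x hx)
    have h₂ := (norm_snd_le x).trans (hR g h hgh x hx)
    rw [Real.norm_eq_abs, abs_le] at h₁ h₂
    exact ⟨by linarith, by linarith⟩
  have hbase (g : V) : ∃ p, dist (latticePoint o δ p) (E.pos g) < δ := by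
    obtain ⟨h, hgh⟩ := hdeg g
    exact exists_dist_latticePoint_lt hδ (ho g h hgh _ (E.pos_mem_halfArc hgh))
  choose b hb using hbase
  obtain ⟨m, hm⟩ := exists_nat_ge ((2 * R + 2) / δ)
  rw [div_le_iff₀' hδ] at hm
  obtain ⟨B, hB, hBS⟩ := exists_isMinorModel_of_pieces (H := triangularLattice)
    (fun g h => nearPoints o δ (E.halfArc g h)) b hdeg
    (fun g h hgh => preconnected_induce_nearPoints hδ (E.isPreconnected_halfArc hgh) (ho g h hgh))
    (fun g h hgh => ⟨mem_nearPoints.2 ⟨_, E.pos_mem_halfArc hgh, hb g⟩, fun hmem =>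
      (hends h g hgh.symm).notMem_of_mem_left hmem (Metric.mem_thickening_iff.2 ⟨_, rfl, hb g⟩)⟩)
    (fun g h hgh => by
      obtain ⟨x, hx, hx'⟩ := E.halfArc_inter_halfArc_nonempty hgh
      obtain ⟨p, hp⟩ := exists_dist_latticePoint_lt hδ (ho g h hgh x hx)
      exact ⟨p, mem_nearPoints.2 ⟨x, hx, hp⟩, mem_nearPoints.2 ⟨x, hx', hp⟩⟩)
    (fun g h g' h' hgh hgh' hne hs => (harcs g h g' h' hgh hgh' hne hs).preimage _)
  exact ⟨m, B, hB, fun g => (hBS g).trans (Set.iUnion₂_subset fun h hgh =>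
    nearPoints_subset_squareInterior hδ₁.le (hR g h hgh) hm)⟩

end PlaneEmbedding

lemma exists_edge_eq_of_adj {m : ℕ} (hp : p ∈ squareInterior m) (hq : q ∈ squareInterior m)
    (hpq : triangularLattice.Adj p q) :
    ∃ e, s((collapsedSquare m).src e, (collapsedSquare m).tgt e) = s(p, q) := by
  wlog h : q = p + (1, 0) ∨ q = p + (0, 1) ∨ q = p + (1, 1) generalizing p q
  · obtain ⟨e, he⟩ := this hq hp hpq.symm ((triangularLattice_adj_iff.1 hpq).resolve_left h)
    exact ⟨e, he.trans Sym2.eq_swap⟩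
  obtain ⟨i, j, rfl⟩ := exists_interiorPoint_eq hp
  have hends {p' q' : ℕ × ℕ} (hp' : p' = interiorPoint i j) (hq' : q' = q) :
      s(collapseSides m p', collapseSides m q') = s(interiorPoint i j, q) := by
    rw [hp', hq', collapseSides_of_mem hp, collapseSides_of_mem hq]
  rcases h with h | h | h
  · exact ⟨.horizontal i.succ j, hends rfl h.symm⟩
  · exact ⟨.vertical i j.succ, hends rfl h.symm⟩
  · exact ⟨.diagonal i.succ j.succ, hends rfl h.symm⟩

section Colouring

variable {V : Type*} {G : SimpleGraph V} {B : V → Set (ℕ × ℕ)} {m : ℕ}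

lemma monoConnected_of_mem_branch {col : ℕ × ℕ → V} {g : V} (hcol : ∀ p ∈ B g, col p = g)
    (hconn : (triangularLattice.induce (B g)).Preconnected) (hm : B g ⊆ squareInterior m)
    (hp : p ∈ B g) (hq : q ∈ B g) : (collapsedSquare m).MonoConnected col p q := by
  obtain ⟨w⟩ := hconn ⟨p, hp⟩ ⟨q, hq⟩
  suffices h : ∀ x y : B g, (triangularLattice.induce (B g)).Walk x y →
      (collapsedSquare m).MonoConnected col x y from h _ _ w
  intro x y w
  induction w with
  | nil => exact .refl _
  | @cons x y z hxy _ ih =>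
    refine .trans _ _ _ ?_ ih
    obtain ⟨e, he⟩ := exists_edge_eq_of_adj (hm x.2) (hm y.2) (SimpleGraph.induce_adj.1 hxy)
    have hcol' : col x = col y := (hcol x x.2).trans (hcol y y.2).symm
    obtain ⟨h₁, h₂⟩ | ⟨h₁, h₂⟩ := Sym2.eq_iff.1 he
    · exact .rel _ _ ⟨e, h₁, h₂, hcol'⟩
    · exact .symm _ _ (.rel _ _ ⟨e, h₁, h₂, hcol'.symm⟩)

lemma monoConnected_collapsedSquare (hB : IsMinorModel G triangularLattice B)
    (hm : ⋃ g, B g = squareInterior m) {col : ℕ × ℕ → V} (hcol : ∀ g, ∀ p ∈ B g, col p = g)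
    (h₀ : col (0, 0) = col (1, 1)) (h₁ : (1, 1) ∈ squareInterior m) :
    ∀ p ∈ (collapsedSquare m).ends, ∀ q ∈ (collapsedSquare m).ends, col p = col q →
      (collapsedSquare m).MonoConnected col p q := by
  have hinner (p) (hp : p ∈ (collapsedSquare m).ends) : ∃ p' ∈ ⋃ g, B g, col p' = col p ∧
      (collapsedSquare m).MonoConnected col p p' := by
    rw [hm]
    obtain rfl | hne := eq_or_ne p (0, 0)
    · refine ⟨(1, 1), h₁, h₀.symm, .rel _ _ ⟨.diagonal 0 0, ?_, collapseSides_of_mem h₁, h₀⟩⟩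
      exact collapseSides_eq_zero_iff.2 fun h => absurd h.1.1 (by simp)
    · exact ⟨p, mem_squareInterior_of_mem_ends hp hne, rfl, .refl _⟩
  intro p hp q hq hpq
  obtain ⟨p', hp', hpc, hpp'⟩ := hinner p hp
  obtain ⟨q', hq', hqc, hqq'⟩ := hinner q hq
  obtain ⟨g, hpg⟩ := Set.mem_iUnion.1 hp'
  obtain ⟨h, hqh⟩ := Set.mem_iUnion.1 hq'
  obtain rfl : g = h := by rw [← hcol g p' hpg, ← hcol h q' hqh, hpc, hqc, hpq]
  exact hpp'.trans _ _ _ ((monoConnected_of_mem_branch (hcol g) (hB.connected g).preconnected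
    (hm ▸ Set.subset_iUnion B g) hpg hqh).trans _ _ _ (hqq'.symm _ _))

/-- A plane embedding gives a minor model of `G` in the triangular lattice; after enlarging the
branch sets to fill a square, they are the vertices of a sphere. -/
theorem exists_isSphere_of_isPlanar [Finite V] [Nontrivial V] (hconn : G.Preconnected)
    (hplanar : IsPlanar G) :
    ∃ M : CellComplex V, M.IsSphere ∧ ∀ g h, G.Adj g h → ∃ e, s(M.src e, M.tgt e) = s(g, h) := by
  obtain ⟨E⟩ := hplanar
  obtain ⟨m, B₀, hB₀, hB₀m⟩ := E.exists_isMinorModel hconn.exists_adj_of_nontrivial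
  obtain ⟨B, hB, hm⟩ := hB₀.exists_iUnion_eq (finite_squareInterior m)
    (preconnected_induce_squareInterior m) hB₀m
  have h₁ : (1, 1) ∈ squareInterior m := by
    obtain ⟨g⟩ := ‹Nontrivial V›.to_nonempty
    obtain ⟨p, hp⟩ := (hB₀.connected g).nonempty
    obtain ⟨⟨h₁, h₂⟩, h₃, h₄⟩ := hB₀m g hp
    exact ⟨⟨le_rfl, h₁.trans h₂⟩, le_rfl, h₃.trans h₄⟩
  obtain ⟨g₀, hg₀⟩ := Set.mem_iUnion.1 (hm ▸ h₁)
  obtain ⟨col, hcol, hcol₀⟩ := hB.exists_colouring g₀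
  have h₀ : col (0, 0) = col (1, 1) := by
    rw [hcol₀ _ (fun h => absurd (hm ▸ h : (0, 0) ∈ squareInterior m).1.1 (by simp)),
      hcol g₀ _ hg₀]
  obtain ⟨M, hM, hedge⟩ := isSphere_collapsedSquare.exists_isSphere_of_colouring
    (monoConnected_collapsedSquare hB hm hcol h₀ h₁)
  refine ⟨M, hM, fun g h hgh => ?_⟩
  obtain ⟨p, hp, q, hq, hpq⟩ := hB.exists_adj hgh
  have hsub (g) : B g ⊆ squareInterior m := hm ▸ Set.subset_iUnion B g
  obtain ⟨e, he⟩ := exists_edge_eq_of_adj (hsub g hp) (hsub h hq) hpq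
  have hce : s(col ((collapsedSquare m).src e), col ((collapsedSquare m).tgt e)) = s(g, h) := by
    rw [← Sym2.map_mk, he, Sym2.map_mk, hcol g p hp, hcol h q hq]
  obtain ⟨e', h₁, h₂⟩ := hedge e fun heq =>
    hgh.ne (Sym2.mk_isDiag_iff.1 (hce ▸ Sym2.mk_isDiag_iff.2 heq))
  exact ⟨e', by rw [h₁, h₂, hce]⟩

end Colouring

end PlanarModel

section Tree

variable {V : Type*}

/-- The vertices obtained from `g` by iterating the parent function, `g` included. -/
def ancestors (parent : V → V) (g : V) : Set V :=
  {h | ∃ k, parent^[k] g = h}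

variable {parent : V → V} {a b c g h x : V}

lemma mem_ancestors_self (parent : V → V) (g : V) : g ∈ ancestors parent g := ⟨0, rfl⟩

lemma iterate_mem_ancestors (parent : V → V) (k : ℕ) (g : V) :
    parent^[k] g ∈ ancestors parent g := ⟨k, rfl⟩

lemma mem_ancestors_trans (hb : b ∈ ancestors parent a) (hc : c ∈ ancestors parent b) :
    c ∈ ancestors parent a := by
  obtain ⟨k, rfl⟩ := hb
  obtain ⟨l, rfl⟩ := hc
  exact ⟨l + k, Function.iterate_add_apply ..⟩

lemma ancestors_parent_subset (parent : V → V) (g : V) :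
    ancestors parent (parent g) ⊆ ancestors parent g :=
  fun _ => mem_ancestors_trans ⟨1, rfl⟩

lemma eq_or_mem_ancestors_parent (hh : h ∈ ancestors parent g) :
    h = g ∨ h ∈ ancestors parent (parent g) := by
  obtain ⟨_ | k, rfl⟩ := hh
  exacts [.inl rfl, .inr ⟨k, rfl⟩]

/-- A parent function describing a breadth-first spanning tree of `G` rooted at `v`. -/
structure IsBFSTree (G : SimpleGraph V) (v : V) (parent : V → V) : Prop where
  parent_root : parent v = v
  adj_parent : ∀ ⦃g⦄, g ≠ v → G.Adj (parent g) g
  dist_eq : ∀ ⦃g⦄, g ≠ v → G.dist v g = G.dist v (parent g) + 1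

namespace IsBFSTree

variable {G : SimpleGraph V} {v : V}

lemma eq_root_of_mem_ancestors (T : IsBFSTree G v parent) (hg : g ∈ ancestors parent v) :
    g = v := by
  obtain ⟨k, rfl⟩ := hg
  exact Function.iterate_fixed T.parent_root k

@[elab_as_elim]
lemma induction (T : IsBFSTree G v parent) {p : V → Prop} (root : p v)
    (step : ∀ g, g ≠ v → p (parent g) → p g) (g : V) : p g := by
  induction hn : G.dist v g using Nat.strong_induction_on generalizing g with
  | _ n ih =>
    by_cases hg : g = v
    · exact hg ▸ root
    · exact step g hg (ih _ (by have := T.dist_eq hg; lia) _ rfl)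

lemma root_mem_ancestors (T : IsBFSTree G v parent) (g : V) : v ∈ ancestors parent g :=
  T.induction (mem_ancestors_self ..) (fun g _ ih => ancestors_parent_subset parent g ih) g

lemma iterate_dist (T : IsBFSTree G v parent) (g : V) : parent^[G.dist v g] g = v := by
  induction g using T.induction with
  | root => exact Function.iterate_fixed T.parent_root _
  | step g hg ih => rw [T.dist_eq hg, Function.iterate_succ_apply, ih]

lemma dist_le_of_mem_ancestors (T : IsBFSTree G v parent) (hh : h ∈ ancestors parent g) :
    G.dist v h ≤ G.dist v g := by
  induction g using T.induction with
  | root => rw [T.eq_root_of_mem_ancestors hh]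
  | step g hg ih =>
    rcases eq_or_mem_ancestors_parent hh with rfl | hh
    · rfl
    · have := ih hh
      have := T.dist_eq hg
      lia

lemma mem_ancestors_of_dist_le (T : IsBFSTree G v parent) (hg : g ∈ ancestors parent x)
    (hh : h ∈ ancestors parent x) (hle : G.dist v h ≤ G.dist v g) : h ∈ ancestors parent g := by
  induction x using T.induction with
  | root =>
    rw [T.eq_root_of_mem_ancestors hh]
    exact T.root_mem_ancestors g
  | step x hx ih =>
    rcases eq_or_mem_ancestors_parent hg with rfl | hg'
    · exact hh
    rcases eq_or_mem_ancestors_parent hh with rfl | hh'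
    · have := T.dist_le_of_mem_ancestors hg'
      have := T.dist_eq hx
      lia
    · exact ih hg' hh'

lemma injOn_dist_ancestors (T : IsBFSTree G v parent) (x : V) :
    (ancestors parent x).InjOn (G.dist v) := by
  intro g hg h hh hgh
  rcases eq_or_mem_ancestors_parent (T.mem_ancestors_of_dist_le hg hh hgh.ge) with rfl | hh'
  · rfl
  by_cases hgv : g = v
  · subst hgv
    rw [T.parent_root] at hh'
    exact (T.eq_root_of_mem_ancestors hh').symm
  · have := T.dist_le_of_mem_ancestors hh'
    have := T.dist_eq hgv
    lia

end IsBFSTree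

section Geodesic

variable {G : SimpleGraph V} {v w y : V}

/-- `q` restricted to `0, …, m` is a shortest path of `G`. -/
structure IsGeodesic (G : SimpleGraph V) (q : ℕ → V) (m : ℕ) : Prop where
  adj : ∀ ⦃i⦄, i < m → G.Adj (q i) (q (i + 1))
  dist_eq : ∀ ⦃i⦄, i ≤ m → G.dist (q 0) (q i) = i

lemma IsGeodesic.mono {q : ℕ → V} {m n : ℕ} (hq : IsGeodesic G q n) (hmn : m ≤ n) :
    IsGeodesic G q m :=
  ⟨fun _ hi => hq.adj (hi.trans_le hmn), fun _ hi => hq.dist_eq (hi.trans hmn)⟩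

lemma IsGeodesic.injOn_dist {q : ℕ → V} {m : ℕ} (hq : IsGeodesic G q m) :
    (q '' Set.Iic m).InjOn (G.dist (q 0)) := by
  rintro _ ⟨i, hi, rfl⟩ _ ⟨j, hj, rfl⟩ hij
  rw [hq.dist_eq hi, hq.dist_eq hj] at hij
  rw [hij]

lemma IsGeodesic.dist_lt_of_adj {q : ℕ → V} {m : ℕ} (hq : IsGeodesic G q m) (hm : 2 ≤ m)
    (hy : G.Adj (q 0) y) : G.dist (q 0) y < G.dist (q 0) (q m) := by
  rw [hq.dist_eq le_rfl, SimpleGraph.dist_eq_one_iff_adj.2 hy]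
  exact hm

lemma IsGeodesic.notMem_image_of_adj {q : ℕ → V} {m : ℕ} {S : Set V} (hq : IsGeodesic G q m)
    (hm : 2 ≤ m) (hS : ∀ k, 1 ≤ k → k < m → q k ∉ S) (hyS : y ∈ S) (hy : G.Adj (q 0) y) :
    y ∉ q '' Set.Iic m := by
  rintro ⟨k, hk, rfl⟩
  rcases Nat.eq_zero_or_pos k with rfl | hk0
  · exact hy.ne rfl
  rcases (show k ≤ m from hk).lt_or_eq with hkm | rfl
  · exact hS k hk0 hkm hyS
  · exact (hq.dist_lt_of_adj hm hy).ne rfl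

lemma exists_isGeodesic (hconn : G.Connected) (hvy : G.Adj v y)
    (hyw : G.dist y w + 1 = G.dist v w) :
    ∃ q, IsGeodesic G q (G.dist v w) ∧ q 0 = v ∧ q 1 = y ∧ q (G.dist v w) = w := by
  obtain ⟨p, hp⟩ := hconn.exists_walk_length_eq_dist y w
  set p' := SimpleGraph.Walk.cons hvy p with hp'
  have hlen : p'.length = G.dist v w := by rw [hp', SimpleGraph.Walk.length_cons, hp, hyw]
  refine ⟨p'.getVert, ⟨fun i hi => p'.adj_getVert_succ (hlen ▸ hi), fun i hi => ?_⟩,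
    p'.getVert_zero, by simp [hp'], hlen ▸ p'.getVert_length⟩
  have htake := SimpleGraph.dist_le (p'.take i)
  have hdrop := SimpleGraph.dist_le (p'.drop i)
  rw [SimpleGraph.Walk.take_length] at htake
  rw [SimpleGraph.Walk.drop_length] at hdrop
  have := hconn.dist_triangle (u := v) (v := p'.getVert i) (w := w)
  rw [SimpleGraph.Walk.getVert_zero]
  lia

end Geodesic

end Tree

section Separator

variable {V : Type*}

/-- A separator for fires starting at `v`: a vertex set `C`, contained up to `v` in two sets `P` and
`Q` meeting every distance class from `v` at most once, such that the components of its complement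
can be coloured with two sides `s`. One firefighter protects `P ∩ C` and the other one `Q ∩ C`. -/
structure IsSeparator (G : SimpleGraph V) (v : V) (C : Set V) (s : V → ZMod 2) (P Q : Set V) :
    Prop where
  subset : C ⊆ insert v (P ∪ Q)
  injOn_left : P.InjOn (G.dist v)
  injOn_right : Q.InjOn (G.dist v)
  side_eq : ∀ ⦃g h⦄, g ∉ C → h ∉ C → G.Adj g h → s g = s h

/-- The side `i` of a separator `C`, together with `C` but without the source `v` of the fire. -/
def closedSide (v : V) (C : Set V) (s : V → ZMod 2) (i : ZMod 2) : Set V :=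
  {g | g ≠ v ∧ (g ∈ C ∨ s g = i)}

/-- There is a separator with a side that is at least a sixth of the graph and avoids `u` as well
as one of `z` and `z'`, all three being neighbours of `v` in the application. -/
def HasSeparatorAvoiding (G : SimpleGraph V) (v u z z' : V) : Prop :=
  ∃ C s P Q, IsSeparator G v C s P Q ∧ u ∉ closedSide v C s 1 ∧
    (z ∉ closedSide v C s 1 ∨ z' ∉ closedSide v C s 1) ∧
    Nat.card V ≤ 6 * (closedSide v C s 1).ncard + 1

lemma HasSeparatorAvoiding.swap {G : SimpleGraph V} {v u z z' : V}
    (h : HasSeparatorAvoiding G v u z z') :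
    HasSeparatorAvoiding G v u z' z := by
  obtain ⟨C, s, P, Q, hsep, hu, hz, hcard⟩ := h
  exact ⟨C, s, P, Q, hsep, hu, hz.symm, hcard⟩

namespace CellComplex

/-- `M` contains the edge `edge g h` joining `g` and `h` for every edge `gh` of `G`. -/
def Carries (M : CellComplex V) (G : SimpleGraph V) (edge : V → V → M.Edge) : Prop :=
  ∀ ⦃g h⦄, G.Adj g h → s(M.src (edge g h), M.tgt (edge g h)) = s(g, h)

variable {M : CellComplex V} {G : SimpleGraph V} {edge : V → V → M.Edge} {g h : V}

lemma Carries.incident_left (hM : M.Carries G edge) (hgh : G.Adj g h) :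
    M.Incident g (edge g h) := by
  rcases Sym2.eq_iff.1 (hM hgh) with ⟨h₁, -⟩ | ⟨-, h₁⟩
  exacts [.inl h₁, .inr h₁]

lemma Carries.incident_right (hM : M.Carries G edge) (hgh : G.Adj g h) :
    M.Incident h (edge g h) := by
  rcases Sym2.eq_iff.1 (hM hgh) with ⟨-, h₁⟩ | ⟨h₁, -⟩
  exacts [.inr h₁, .inl h₁]

open scoped Classical in
/-- The value of a set of faces at the faces around the vertex `g`, for `g` off its boundary. -/
noncomputable def side (M : CellComplex V) (φ : M.Face → ZMod 2) (g : V) : ZMod 2 :=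
  if h : ∃ e, M.Incident g e then φ (M.left h.choose) else 0

variable {φ : M.Face → ZMod 2} {e : M.Edge}

lemma IsSphere.left_eq_side (hS : M.IsSphere) (hg : g ∉ M.support (M.faceBoundary φ))
    (he : M.Incident g e) : φ (M.left e) = M.side φ g := by
  have h : ∃ e, M.Incident g e := ⟨e, he⟩
  rw [side, dif_pos h]
  exact hS.side_eq g φ hg _ _ he h.choose_spec

lemma IsSphere.right_eq_side (hS : M.IsSphere) (hg : g ∉ M.support (M.faceBoundary φ))
    (he : M.Incident g e) : φ (M.right e) = M.side φ g :=
  (left_eq_right_of_notMem_support hg he).symm.trans (hS.left_eq_side hg he)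

lemma mem_support_faceBoundary_iff :
    g ∈ M.support (M.faceBoundary φ) ↔ ∃ e, M.Incident g e ∧ φ (M.left e) ≠ φ (M.right e) := by
  simp only [support, faceBoundary_apply, ne_eq, CharTwo.add_eq_zero, Set.mem_ofPred_eq]

lemma eq_or_eq_of_ne {a b : ZMod 2} (hab : a ≠ b) (i : ZMod 2) : a = i ∨ b = i := by
  decide +revert

lemma IsSphere.mem_or_side_eq_iff (hS : M.IsSphere) (he : M.Incident g e) (i : ZMod 2) :
    g ∈ M.support (M.faceBoundary φ) ∨ M.side φ g = i ↔
      ∃ e, M.Incident g e ∧ (φ (M.left e) = i ∨ φ (M.right e) = i) := by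
  constructor
  · intro h
    by_cases hg : g ∈ M.support (M.faceBoundary φ)
    · obtain ⟨e, he, hne⟩ := mem_support_faceBoundary_iff.1 hg
      exact ⟨e, he, eq_or_eq_of_ne hne i⟩
    · exact ⟨e, he, .inl ((hS.left_eq_side hg he).trans (h.resolve_left hg))⟩
  · rintro ⟨e, he, hi⟩
    by_cases hg : g ∈ M.support (M.faceBoundary φ)
    · exact .inl hg
    · rw [hS.left_eq_side hg he, hS.right_eq_side hg he, or_self] at hi
      exact .inr hi

lemma IsSphere.isSeparator {v : V} {P Q : Set V} (hS : M.IsSphere) (hM : M.Carries G edge)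
    (hsub : M.support (M.faceBoundary φ) ⊆ insert v (P ∪ Q))
    (hP : P.InjOn (G.dist v)) (hQ : Q.InjOn (G.dist v)) :
    IsSeparator G v (M.support (M.faceBoundary φ)) (M.side φ) P Q where
  subset := hsub
  injOn_left := hP
  injOn_right := hQ
  side_eq g h hg hh hgh := by
    rw [← hS.left_eq_side hg (hM.incident_left hgh),
      ← hS.left_eq_side hh (hM.incident_right hgh)]

end CellComplex

end Separator

section FundamentalCycle

namespace CellComplex

variable {V : Type*} {M : CellComplex V} {G : SimpleGraph V} {edge : V → V → M.Edge}
  {v g h : V} {parent : V → V}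

lemma support_add_subset (c d : M.Edge → ZMod 2) :
    M.support (c + d) ⊆ M.support c ∪ M.support d := by
  rintro g ⟨e, he, hne⟩
  by_cases hc : c e = 0
  · exact .inr ⟨e, he, by rwa [Pi.add_apply, hc, zero_add] at hne⟩
  · exact .inl ⟨e, he, hc⟩

open scoped Classical in
lemma Carries.edgeBoundary_single_edge (hM : M.Carries G edge) (hgh : G.Adj g h) :
    M.edgeBoundary (Pi.single (edge g h) 1) = .single g 1 + .single h 1 := by
  rw [edgeBoundary_single]
  rcases Sym2.eq_iff.1 (hM hgh) with ⟨h₁, h₂⟩ | ⟨h₁, h₂⟩ <;> rw [h₁, h₂]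
  exact add_comm _ _

open scoped Classical in
/-- The set of edges `edge (q i) (q (i + 1))` with `i < m`. -/
noncomputable def pathChain (edge : V → V → M.Edge) (q : ℕ → V) (m : ℕ) : M.Edge → ZMod 2 :=
  ∑ i ∈ Finset.range m, Pi.single (edge (q i) (q (i + 1))) 1

lemma exists_eq_edge_of_pathChain_ne_zero {q : ℕ → V} {m : ℕ} {e : M.Edge}
    (he : pathChain edge q m e ≠ 0) : ∃ i < m, e = edge (q i) (q (i + 1)) := by
  classical
  rw [pathChain, Finset.sum_apply] at he
  obtain ⟨i, hi, hne⟩ := Finset.exists_ne_zero_of_sum_ne_zero he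
  refine ⟨i, Finset.mem_range.1 hi, ?_⟩
  by_contra h
  exact hne (Pi.single_eq_of_ne h 1)

lemma Carries.edgeBoundary_pathChain (hM : M.Carries G edge) {q : ℕ → V} {m : ℕ}
    (hq : ∀ i < m, G.Adj (q i) (q (i + 1))) :
    M.edgeBoundary (pathChain edge q m) = .single (q 0) 1 + .single (q m) 1 := by
  classical
  induction m with
  | zero => simp [pathChain, ZModModule.add_self]
  | succ m ih =>
    rw [pathChain, Finset.sum_range_succ, map_add, ← pathChain, ih fun i hi => hq i (by lia),
      hM.edgeBoundary_single_edge (hq m m.lt_succ_self), add_assoc,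
      ← add_assoc (Finsupp.single (q m) (1 : ZMod 2)), ZModModule.add_self, zero_add]

lemma Carries.mem_support_pathChain (hM : M.Carries G edge) {q : ℕ → V} {m : ℕ}
    (hq : ∀ i < m, G.Adj (q i) (q (i + 1))) (hg : g ∈ M.support (pathChain edge q m)) :
    ∃ i ≤ m, g = q i := by
  obtain ⟨e, hge, he⟩ := hg
  obtain ⟨i, hi, rfl⟩ := exists_eq_edge_of_pathChain_ne_zero he
  have hgi : g ∈ s(q i, q (i + 1)) := by
    rw [← hM (hq i hi), Sym2.mem_iff]
    exact hge.imp Eq.symm Eq.symm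
  rcases Sym2.mem_iff.1 hgi with h | h
  exacts [⟨i, hi.le, h⟩, ⟨i + 1, hi, h⟩]

/-- The edges of the path from `g` to the root `v` of a breadth-first tree. -/
noncomputable def rootPath (G : SimpleGraph V) (edge : V → V → M.Edge) (v : V) (parent : V → V)
    (g : V) : M.Edge → ZMod 2 :=
  pathChain edge (fun i => parent^[i] g) (G.dist v g)

lemma adj_iterate_parent (T : IsBFSTree G v parent) {i : ℕ} (hi : i < G.dist v g) :
    G.Adj (parent^[i] g) (parent^[i + 1] g) := by
  rw [Function.iterate_succ_apply']
  refine (T.adj_parent fun h => ?_).symm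
  have hdist (j : ℕ) : G.dist v g ≤ G.dist v (parent^[j] g) + j := by
    induction j with
    | zero => rfl
    | succ j ih =>
      rw [Function.iterate_succ_apply']
      by_cases hj : parent^[j] g = v
      · rw [hj, T.parent_root, ← hj]
        lia
      · have := T.dist_eq hj
        lia
  have := hdist i
  rw [h, SimpleGraph.dist_self] at this
  lia

open scoped Classical in
lemma rootPath_of_ne (T : IsBFSTree G v parent) (hg : g ≠ v) :
    rootPath G edge v parent g = rootPath G edge v parent (parent g) +
      Pi.single (edge g (parent g)) 1 := by
  simp only [rootPath, pathChain, T.dist_eq hg, Finset.sum_range_succ', Function.iterate_succ_apply,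
    Function.iterate_zero_apply]

lemma exists_mem_ancestors_of_rootPath_ne_zero (T : IsBFSTree G v parent) {e : M.Edge}
    (he : rootPath G edge v parent g e ≠ 0) :
    ∃ h ∈ ancestors parent g, h ≠ v ∧ e = edge h (parent h) := by
  obtain ⟨i, hi, rfl⟩ := exists_eq_edge_of_pathChain_ne_zero he
  refine ⟨parent^[i] g, iterate_mem_ancestors .., ?_, by rw [Function.iterate_succ_apply']⟩
  intro h
  have := adj_iterate_parent T hi
  rw [Function.iterate_succ_apply', h, T.parent_root] at this
  exact this.ne rfl

lemma edgeBoundary_rootPath (T : IsBFSTree G v parent) (hM : M.Carries G edge) (g : V) :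
    M.edgeBoundary (rootPath G edge v parent g) = .single g 1 + .single v 1 := by
  rw [rootPath, hM.edgeBoundary_pathChain (q := fun i => parent^[i] g)
    fun i hi => adj_iterate_parent T hi, Function.iterate_zero_apply, T.iterate_dist]

lemma support_rootPath_subset (T : IsBFSTree G v parent) (hM : M.Carries G edge) (g : V) :
    M.support (rootPath G edge v parent g) ⊆ ancestors parent g := by
  intro h hh
  obtain ⟨i, -, rfl⟩ := hM.mem_support_pathChain (q := fun i => parent^[i] g)
    (fun i hi => adj_iterate_parent T hi) hh
  exact iterate_mem_ancestors ..

open scoped Classical in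
/-- The fundamental cycle of the edge `e` with respect to a breadth-first tree. -/
noncomputable def fundamentalCycle (G : SimpleGraph V) (edge : V → V → M.Edge) (v : V)
    (parent : V → V) (e : M.Edge) : M.Edge → ZMod 2 :=
  Pi.single e 1 + (rootPath G edge v parent (M.src e) + rootPath G edge v parent (M.tgt e))

lemma edgeBoundary_fundamentalCycle (T : IsBFSTree G v parent) (hM : M.Carries G edge)
    (e : M.Edge) :
    M.edgeBoundary (fundamentalCycle G edge v parent e) = 0 := by
  classical
  rw [fundamentalCycle, map_add, map_add, edgeBoundary_single, edgeBoundary_rootPath T hM,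
    edgeBoundary_rootPath T hM, add_add_add_comm (Finsupp.single (M.src e) (1 : ZMod 2))
      (.single v 1), ZModModule.add_self, add_zero, ZModModule.add_self]

lemma support_fundamentalCycle_subset (T : IsBFSTree G v parent) (hM : M.Carries G edge)
    (e : M.Edge) :
    M.support (fundamentalCycle G edge v parent e) ⊆
      ancestors parent (M.src e) ∪ ancestors parent (M.tgt e) := by
  classical
  have hpath (g : V) : M.support (rootPath G edge v parent g) ⊆ ancestors parent g :=
    support_rootPath_subset T hM g
  refine (support_add_subset _ _).trans (Set.union_subset ?_
    ((support_add_subset _ _).trans (Set.union_subset_union (hpath _) (hpath _))))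
  rintro g ⟨e', hg, hne⟩
  obtain rfl : e' = e := by_contra fun h => hne (Pi.single_eq_of_ne h 1)
  rcases hg with rfl | rfl
  exacts [.inl (mem_ancestors_self ..), .inr (mem_ancestors_self ..)]

lemma fundamentalCycle_treeEdge (T : IsBFSTree G v parent) (hM : M.Carries G edge) (hg : g ≠ v) :
    fundamentalCycle G edge v parent (edge g (parent g)) = 0 := by
  classical
  have hends : rootPath G edge v parent (M.src (edge g (parent g))) +
      rootPath G edge v parent (M.tgt (edge g (parent g))) =
        rootPath G edge v parent (parent g) + rootPath G edge v parent g := by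
    rcases Sym2.eq_iff.1 (hM (T.adj_parent hg).symm) with ⟨h₁, h₂⟩ | ⟨h₁, h₂⟩ <;> rw [h₁, h₂]
    exact add_comm _ _
  rw [fundamentalCycle, hends, rootPath_of_ne T hg, ← add_assoc (rootPath _ _ _ _ _),
    ZModModule.add_self, zero_add, ZModModule.add_self]

lemma sum_smul_fundamentalCycle {c : M.Edge → ZMod 2} (hc : M.edgeBoundary c = 0) :
    ∑ e, c e • fundamentalCycle G edge v parent e = c := by
  classical
  have hpaths : ∑ e, c e • (rootPath G edge v parent (M.src e) +
      rootPath G edge v parent (M.tgt e)) = 0 := by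
    have := congrArg (Finsupp.linearCombination (ZMod 2) (rootPath G edge v parent)) hc
    simpa only [edgeBoundary_eq_sum, map_sum, map_smul, map_add, map_zero,
      Finsupp.linearCombination_single, one_smul] using this
  simp only [fundamentalCycle, smul_add _ (Pi.single _ _), Finset.sum_add_distrib, hpaths, add_zero]
  ext e
  simp [Pi.single_apply]

lemma eq_smul_fundamentalCycle {c : M.Edge → ZMod 2} {e : M.Edge} (hc : M.edgeBoundary c = 0)
    (h : ∀ e', c e' ≠ 0 → e' ≠ e → fundamentalCycle G edge v parent e' = 0) :
    c = c e • fundamentalCycle G edge v parent e := by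
  rw [← sum_smul_fundamentalCycle (G := G) (edge := edge) (v := v) (parent := parent) hc]
  nth_rw 1 [Finset.sum_eq_single e]
  · rw [sum_smul_fundamentalCycle hc]
  · intro e' _ hne
    by_cases h0 : c e' = 0
    · rw [h0, zero_smul]
    · rw [h e' h0 hne, smul_zero]
  · exact fun h => absurd (Finset.mem_univ e) h

end CellComplex

end FundamentalCycle

section Balanced

namespace CellComplex

variable {V : Type*} {M : CellComplex V} {G : SimpleGraph V} {edge : V → V → M.Edge}
  {v g : V} {parent : V → V}

/-- The vertices other than `v` on the faces at which the set of faces `φ` takes the value `i`. -/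
noncomputable def closedFaceSide (M : CellComplex V) (v : V) (φ : M.Face → ZMod 2) (i : ZMod 2) :
    Set V :=
  closedSide v (M.support (M.faceBoundary φ)) (M.side φ) i

lemma IsSphere.mem_closedFaceSide_iff (hS : M.IsSphere) {e : M.Edge} (he : M.Incident g e)
    {φ : M.Face → ZMod 2} {i : ZMod 2} :
    g ∈ M.closedFaceSide v φ i ↔
      g ≠ v ∧ ∃ e, M.Incident g e ∧ (φ (M.left e) = i ∨ φ (M.right e) = i) :=
  and_congr_right fun _ => hS.mem_or_side_eq_iff he i

open scoped Classical in
lemma IsSphere.exists_face_forall_sum_eq_one [Nonempty M.Face] (hS : M.IsSphere)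
    {φ : M.Edge → M.Face → ZMod 2}
    (hφ : ∀ e, M.faceBoundary (φ e) = fundamentalCycle G edge v parent e) :
    ∃ f, ∀ f' ≠ f, ∑ e, M.faceBoundary (Pi.single f 1) e * φ e f' = 1 := by
  by_contra! hne
  have hsingle (f : M.Face) :
      ∑ e, M.faceBoundary (Pi.single f 1) e • φ e = Pi.single f 1 := by
    obtain ⟨f', hf', h1⟩ := hne f
    have hbd : M.faceBoundary (∑ e, M.faceBoundary (Pi.single f 1) e • φ e + Pi.single f 1) =
        0 := by
      rw [map_add, map_sum]
      simp only [map_smul, hφ]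
      rw [sum_smul_fundamentalCycle (hS.edgeBoundary_faceBoundary _), ZModModule.add_self]
    funext f''
    have hconst := hS.eq_of_faceBoundary_eq_zero _ hbd f'' f'
    simp only [Pi.add_apply, Finset.sum_apply, Pi.smul_apply, smul_eq_mul,
      Pi.single_eq_of_ne hf', add_zero, (eq_or_eq_of_ne h1 0).resolve_right one_ne_zero] at hconst
    simp only [Finset.sum_apply, Pi.smul_apply, smul_eq_mul]
    exact CharTwo.add_eq_zero.1 hconst
  have hone : (∑ f : M.Face, Pi.single f (1 : ZMod 2)) = fun _ => 1 :=
    Finset.univ_sum_single fun _ => (1 : ZMod 2)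
  have hzero : (∑ f : M.Face, Pi.single f (1 : ZMod 2)) = 0 := by
    rw [← Finset.sum_congr rfl fun f _ => hsingle f, Finset.sum_comm]
    simp_rw [← Finset.sum_smul, ← Finset.sum_apply, ← map_sum, hone, faceBoundary_const,
      Pi.zero_apply, zero_smul, Finset.sum_const_zero]
  exact one_ne_zero (congrFun (hone.symm.trans hzero) (Classical.arbitrary M.Face))

lemma IsSphere.exists_face_subset_biUnion [Nonempty M.Face] (hS : M.IsSphere)
    (hcov : ∀ g, ∃ e, M.Incident g e)
    {φ : M.Edge → M.Face → ZMod 2}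
    (hφ : ∀ e, M.faceBoundary (φ e) = fundamentalCycle G edge v parent e) :
    ∃ f, {v}ᶜ ⊆ ⋃ e ∈ {e | M.left e = f ∨ M.right e = f}, M.closedFaceSide v (φ e) 1 := by
  classical
  obtain ⟨f, hf⟩ := hS.exists_face_forall_sum_eq_one hφ
  refine ⟨f, fun g hg => ?_⟩
  obtain ⟨e, he⟩ := hcov g
  obtain ⟨f', hf', hef'⟩ : ∃ f' ≠ f, M.left e = f' ∨ M.right e = f' := by
    by_cases h : M.left e = f
    · exact ⟨M.right e, h ▸ (hS.left_ne_right e).symm, .inr rfl⟩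
    · exact ⟨M.left e, h, .inl rfl⟩
  obtain ⟨d, -, hd⟩ := Finset.exists_ne_zero_of_sum_ne_zero (hf f' hf' ▸ one_ne_zero)
  refine Set.mem_biUnion (x := d) ?_ ((hS.mem_closedFaceSide_iff he).2 ⟨hg, e, he, ?_⟩)
  · by_contra hdf
    obtain ⟨hl, hr⟩ := not_or.1 hdf
    rw [faceBoundary_apply, Pi.single_eq_of_ne hl, Pi.single_eq_of_ne hr, add_zero, zero_mul] at hd
    exact hd rfl
  · have hone : φ d f' = 1 := Fin.eq_one_of_ne_zero _ (right_ne_zero_of_mul hd)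
    exact hef'.imp (fun h => (congrArg (φ d) h).trans hone) fun h => (congrArg (φ d) h).trans hone

/-- If the smaller sides of all fundamental cycles contained less than a third of the vertices,
then the at most three of them belonging to the edges of some face could not cover the graph. -/
lemma IsSphere.exists_balanced [Finite V] (hS : M.IsSphere) (T : IsBFSTree G v parent)
    (hM : M.Carries G edge) (hcov : ∀ g, ∃ e, M.Incident g e) :
    ∃ e φ, M.faceBoundary φ = fundamentalCycle G edge v parent e ∧
      ∀ i, Nat.card V ≤ 3 * (M.closedFaceSide v φ i).ncard + 1 := by
  by_contra! hsmall
  have hφ (e : M.Edge) : ∃ φ, M.faceBoundary φ = fundamentalCycle G edge v parent e ∧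
      3 * (M.closedFaceSide v φ 1).ncard + 1 < Nat.card V := by
    obtain ⟨φ, hφ⟩ := hS.exists_faceBoundary_eq _ (edgeBoundary_fundamentalCycle T hM e)
    obtain ⟨i, hi⟩ := hsmall e φ hφ
    have hswap : M.closedFaceSide v (φ + fun _ => i + 1) 1 = M.closedFaceSide v φ i := by
      ext g
      obtain ⟨d, hd⟩ := hcov g
      rw [hS.mem_closedFaceSide_iff hd, hS.mem_closedFaceSide_iff hd]
      simp only [Pi.add_apply, ← add_assoc, add_eq_right, CharTwo.add_eq_zero]
    exact ⟨φ + fun _ => i + 1, by rw [map_add, faceBoundary_const, add_zero, hφ], hswap ▸ hi⟩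
  choose φ hφ hlt using hφ
  obtain ⟨e, -⟩ := hcov v
  have : Nonempty M.Face := ⟨M.left e⟩
  obtain ⟨f, hf⟩ := hS.exists_face_subset_biUnion hcov hφ
  classical
  set S : Finset M.Edge := {e | M.left e = f ∨ M.right e = f} with hSdef
  have hcard : S.card ≤ 3 := by
    rw [hSdef, ← Set.ncard_coe_finset, Finset.coe_filter_univ]
    exact hS.card_sides_le f
  have hle : Nat.card V - 1 ≤ ∑ e ∈ S, (M.closedFaceSide v (φ e) 1).ncard := by
    rw [← Set.ncard_singleton v, ← Set.ncard_compl]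
    refine (Set.ncard_le_ncard (t := ⋃ e ∈ S, M.closedFaceSide v (φ e) 1) ?_).trans
      (Finset.set_ncard_biUnion_le _ _)
    simpa [S] using hf
  have hsum : ∑ e ∈ S, 3 * (M.closedFaceSide v (φ e) 1).ncard ≤ S.card • (Nat.card V - 2) :=
    Finset.sum_le_card_nsmul _ _ _ fun e _ => by have := hlt e; lia
  rw [← Finset.mul_sum, smul_eq_mul] at hsum
  have := Nat.mul_le_mul_right (Nat.card V - 2) hcard
  have := hlt e
  lia

end CellComplex

end Balanced

section Reroute

namespace CellComplex

variable {V : Type*} {M : CellComplex V} {G : SimpleGraph V} {edge : V → V → M.Edge}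
  {v u w x x' y z z' : V} {parent : V → V} {φ t : M.Face → ZMod 2} {e : M.Edge}

lemma fundamentalCycle_eq_zero_of_mem (T : IsBFSTree G v parent) (hM : M.Carries G edge)
    {d : M.Edge} (hd : fundamentalCycle G edge v parent e d ≠ 0) (hde : d ≠ e) :
    fundamentalCycle G edge v parent d = 0 := by
  classical
  rw [fundamentalCycle, Pi.add_apply, Pi.single_eq_of_ne hde, zero_add, Pi.add_apply] at hd
  obtain ⟨g, hg⟩ : ∃ g, rootPath G edge v parent g d ≠ 0 := by
    by_contra! h0
    exact hd (by rw [h0, h0, add_zero])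
  obtain ⟨h, -, hh, rfl⟩ := exists_mem_ancestors_of_rootPath_ne_zero T hg
  exact fundamentalCycle_treeEdge T hM hh

/-- A fundamental cycle meets the interior of its side `i` in no edge, so a set of faces whose
boundary there consists of edges of the tree is constant there. -/
lemma IsSphere.eq_of_eq_side (hS : M.IsSphere) (T : IsBFSTree G v parent) (hM : M.Carries G edge)
    (hφ : M.faceBoundary φ = fundamentalCycle G edge v parent e) {i : ZMod 2}
    (ht : ∀ d, M.faceBoundary t d ≠ 0 → φ (M.left d) = i → φ (M.right d) = i →
      fundamentalCycle G edge v parent d = 0) {f f' : M.Face} (hf : φ f = i) (hf' : φ f' = i) :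
    t f = t f' := by
  set ψ : M.Face → ZMod 2 := fun f => t f * (φ f + i + 1) with hψ
  have hψ_cycle := eq_smul_fundamentalCycle (G := G) (edge := edge) (v := v) (parent := parent)
    (hS.edgeBoundary_faceBoundary ψ) (e := e) fun d hd hde => by
      by_cases hφd : φ (M.left d) = φ (M.right d)
      · have hi : φ (M.right d) = i := by
          by_contra hi
          have hne : φ (M.right d) + i = 1 :=
            Fin.eq_one_of_ne_zero _ fun h => hi (CharTwo.add_eq_zero.1 h)
          refine hd ?_
          simp only [hψ, faceBoundary_apply, hφd, hne, CharTwo.add_self_eq_zero, mul_zero]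
        refine ht d (fun h0 => hd ?_) (hφd.trans hi) hi
        rw [faceBoundary_apply] at h0 ⊢
        simp only [hψ, hφd, ← add_mul, h0, zero_mul]
      · exact fundamentalCycle_eq_zero_of_mem T hM (e := e)
          (hφ ▸ fun h => hφd (CharTwo.add_eq_zero.1 h)) hde
  have hconst := hS.eq_of_faceBoundary_eq_zero (ψ + M.faceBoundary ψ e • φ)
    (by rw [map_add, map_smul, hφ, ← hψ_cycle, ZModModule.add_self]) f f'
  simpa [hψ, hf, hf', CharTwo.add_self_eq_zero] using hconst

/-- A shortest path whose interior lies on the side other than `i` of a fundamental cycle can be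
closed up along the tree to a cycle, the detour, which avoids the side `i`. -/
lemma IsSphere.exists_detour (hS : M.IsSphere) (T : IsBFSTree G v parent) (hM : M.Carries G edge)
    (hφ : M.faceBoundary φ = fundamentalCycle G edge v parent e) {q : ℕ → V} {m : ℕ} {i : ZMod 2}
    (hq : IsGeodesic G q m) (hq0 : q 0 = v) (hqm : q m = w) (hm : 2 ≤ m)
    (hint : ∀ k, 1 ≤ k → k < m → q k ∉ M.support (M.faceBoundary φ) ∧ M.side φ (q k) ≠ i) :
    ∃ t, M.faceBoundary t = pathChain edge q m + rootPath G edge v parent w ∧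
      ∀ f, φ f = i → t f = 0 := by
  have hcycle : M.edgeBoundary (pathChain edge q m + rootPath G edge v parent w) = 0 := by
    rw [map_add, hM.edgeBoundary_pathChain (q := q) fun i hi => hq.adj hi,
      edgeBoundary_rootPath T hM, hq0, hqm, add_comm (Finsupp.single w (1 : ZMod 2)),
      ZModModule.add_self]
  obtain ⟨t, ht⟩ := hS.exists_faceBoundary_eq _ hcycle
  have hconst {f f' : M.Face} (hf : φ f = i) (hf' : φ f' = i) : t f = t f' := by
    refine hS.eq_of_eq_side T hM hφ (fun d hd hl _ => ?_) hf hf'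
    by_cases hQ : pathChain edge q m d = 0
    · rw [ht, Pi.add_apply, hQ, zero_add] at hd
      obtain ⟨h, -, hh, rfl⟩ := exists_mem_ancestors_of_rootPath_ne_zero T hd
      exact fundamentalCycle_treeEdge T hM hh
    · obtain ⟨k, hk, rfl⟩ := exists_eq_edge_of_pathChain_ne_zero hQ
      obtain ⟨k', hk1, hkm, hinc⟩ :
          ∃ k', 1 ≤ k' ∧ k' < m ∧ M.Incident (q k') (edge (q k) (q (k + 1))) := by
        rcases Nat.eq_zero_or_pos k with rfl | hk0
        · exact ⟨1, le_rfl, hm, hM.incident_right (hq.adj hk)⟩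
        · exact ⟨k, hk0, hk, hM.incident_left (hq.adj hk)⟩
      obtain ⟨hC, hside⟩ := hint k' hk1 hkm
      exact absurd ((hS.left_eq_side hC hinc).symm.trans hl) hside
  by_cases hf : ∃ f, φ f = i
  · obtain ⟨f, hf⟩ := hf
    refine ⟨t + fun _ => t f, by rw [map_add, faceBoundary_const, add_zero, ht], fun f' hf' => ?_⟩
    rw [Pi.add_apply, hconst hf' hf, CharTwo.add_self_eq_zero]
  · exact ⟨t, ht, fun f h => absurd ⟨f, h⟩ hf⟩

lemma support_rootPath_add_rootPath_subset (T : IsBFSTree G v parent) (hM : M.Carries G edge)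
    (hw : w ∈ ancestors parent x) :
    M.support (rootPath G edge v parent x + rootPath G edge v parent w) ⊆
      {h ∈ ancestors parent x | G.dist v w ≤ G.dist v h} := by
  classical
  induction x using T.induction with
  | root =>
    rw [T.eq_root_of_mem_ancestors hw, ZModModule.add_self]
    exact fun g ⟨e, _, he⟩ => absurd rfl he
  | step x hx ih =>
    rcases eq_or_mem_ancestors_parent hw with rfl | hw
    · rw [ZModModule.add_self]
      exact fun g ⟨e, _, he⟩ => absurd rfl he
    rw [rootPath_of_ne T hx, add_right_comm]
    refine (support_add_subset _ _).trans (Set.union_subset ?_ ?_)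
    · exact (ih hw).trans fun h hh => ⟨ancestors_parent_subset parent x hh.1, hh.2⟩
    · rintro g ⟨d, hg, hd⟩
      obtain rfl : d = edge x (parent x) := by_contra fun h => hd (Pi.single_eq_of_ne h 1)
      have hgx : g ∈ s(x, parent x) := by
        rw [← hM (T.adj_parent hx).symm, Sym2.mem_iff]
        exact hg.imp Eq.symm Eq.symm
      have hwx := T.dist_le_of_mem_ancestors hw
      rcases Sym2.mem_iff.1 hgx with rfl | rfl
      · exact ⟨mem_ancestors_self .., hwx.trans (by rw [T.dist_eq hx]; lia)⟩
      · exact ⟨ancestors_parent_subset parent x (mem_ancestors_self ..), hwx⟩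

lemma IsSphere.notMem_closedFaceSide_of_notMem_support (hS : M.IsSphere)
    {ψ : M.Face → ZMod 2} {i : ZMod 2} (hψ : ∀ f, φ f = i → ψ f = 0)
    (hu : u ∉ M.support (M.faceBoundary φ)) (hui : M.side φ u = i) {d : M.Edge}
    (hd : M.Incident u d) : u ∉ M.closedFaceSide v ψ 1 := by
  rw [hS.mem_closedFaceSide_iff hd]
  rintro ⟨-, d', hd', h | h⟩
  · exact zero_ne_one ((hψ _ ((hS.left_eq_side hu hd').trans hui)).symm.trans h)
  · exact zero_ne_one ((hψ _ ((hS.right_eq_side hu hd').trans hui)).symm.trans h)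

lemma IsSphere.notMem_closedFaceSide_of_mem_support (hS : M.IsSphere)
    {ψ : M.Face → ZMod 2} {i : ZMod 2} (hψ : ∀ f, φ f = i → ψ f = 0)
    (hz : z ∈ M.support (M.faceBoundary φ)) (hzψ : z ∉ M.support (M.faceBoundary ψ)) :
    z ∉ M.closedFaceSide v ψ 1 := by
  obtain ⟨d, hd, hne⟩ := mem_support_faceBoundary_iff.1 hz
  have hside : M.side ψ z = 0 := by
    rcases eq_or_eq_of_ne hne i with h | h
    · rw [← hS.left_eq_side hzψ hd, hψ _ h]
    · rw [← hS.right_eq_side hzψ hd, hψ _ h]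
  exact fun h => h.2.elim hzψ fun h1 => zero_ne_one (hside.symm.trans h1)

variable {q : ℕ → V} {m : ℕ}

lemma support_remainder_subset (T : IsBFSTree G v parent) (hM : M.Carries G edge)
    (hφ : M.faceBoundary φ = fundamentalCycle G edge v parent e)
    (hends : s(M.src e, M.tgt e) = s(x, x')) (hwx : w ∈ ancestors parent x)
    (ht : M.faceBoundary t = pathChain edge q m + rootPath G edge v parent w)
    (hq : IsGeodesic G q m) (i : ZMod 2) :
    M.support (M.faceBoundary (φ + (fun _ => i) + t)) ⊆
      (q '' Set.Iic m ∪ {h ∈ ancestors parent x | G.dist v w ≤ G.dist v h}) ∪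
        ancestors parent x' := by
  classical
  have hpaths : rootPath G edge v parent (M.src e) + rootPath G edge v parent (M.tgt e) =
      rootPath G edge v parent x + rootPath G edge v parent x' := by
    rcases Sym2.eq_iff.1 hends with ⟨h₁, h₂⟩ | ⟨h₁, h₂⟩ <;> rw [h₁, h₂]
    exact add_comm _ _
  have hbd : M.faceBoundary (φ + (fun _ => i) + t) = Pi.single e 1 + (pathChain edge q m +
      ((rootPath G edge v parent x + rootPath G edge v parent w) +
        rootPath G edge v parent x')) := by
    rw [map_add, map_add, faceBoundary_const, hφ, ht, fundamentalCycle, hpaths]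
    abel
  rw [hbd]
  refine (support_add_subset _ _).trans (Set.union_subset ?_ ((support_add_subset _ _).trans
    (Set.union_subset ?_ ((support_add_subset _ _).trans (Set.union_subset ?_ ?_)))))
  · rintro g ⟨d, hg, hd⟩
    obtain rfl : d = e := by_contra fun h => hd (Pi.single_eq_of_ne h 1)
    have hgx : g ∈ s(x, x') := by
      rw [← hends, Sym2.mem_iff]
      exact hg.imp Eq.symm Eq.symm
    rcases Sym2.mem_iff.1 hgx with rfl | rfl
    · exact .inl (.inr ⟨mem_ancestors_self .., T.dist_le_of_mem_ancestors hwx⟩)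
    · exact .inr (mem_ancestors_self ..)
  · intro g hg
    obtain ⟨k, hk, rfl⟩ := hM.mem_support_pathChain (q := q) (fun i hi => hq.adj hi) hg
    exact .inl (.inl ⟨k, hk, rfl⟩)
  · exact fun g hg => .inl (.inr (support_rootPath_add_rootPath_subset T hM hwx hg))
  · exact fun g hg => .inr (support_rootPath_subset T hM x' hg)

lemma injOn_dist_remainder (T : IsBFSTree G v parent) (hwx : w ∈ ancestors parent x)
    (hq : IsGeodesic G q m) (hq0 : q 0 = v) (hqm : q m = w) :
    (q '' Set.Iic m ∪ {h ∈ ancestors parent x | G.dist v w ≤ G.dist v h}).InjOn (G.dist v) := by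
  have hmix {k : ℕ} {h : V} (hk : k ≤ m) (hh : h ∈ ancestors parent x)
      (hle : G.dist v w ≤ G.dist v h) (heq : G.dist v (q k) = G.dist v h) : q k = h := by
    subst hq0 hqm
    rw [hq.dist_eq hk] at heq
    rw [hq.dist_eq le_rfl] at hle
    obtain rfl : k = m := by lia
    exact T.injOn_dist_ancestors x hwx hh ((hq.dist_eq hk).trans heq)
  rintro g (hg | hg) h (hh | hh) heq
  · subst hq0
    exact hq.injOn_dist hg hh heq
  · obtain ⟨k, hk, rfl⟩ := hg
    exact hmix hk hh.1 hh.2 heq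
  · obtain ⟨k, hk, rfl⟩ := hh
    exact (hmix hk hg.1 hg.2 heq.symm).symm
  · exact T.injOn_dist_ancestors x hg.1 hh.1 heq

lemma support_detour_subset (T : IsBFSTree G v parent) (hM : M.Carries G edge)
    (ht : M.faceBoundary t = pathChain edge q m + rootPath G edge v parent w)
    (hq : IsGeodesic G q m) :
    M.support (M.faceBoundary t) ⊆ q '' Set.Iic m ∪ ancestors parent w := by
  rw [ht]
  refine (support_add_subset _ _).trans
    (Set.union_subset_union (fun g hg => ?_) (support_rootPath_subset T hM w))
  obtain ⟨k, hk, rfl⟩ := hM.mem_support_pathChain (q := q) (fun i hi => hq.adj hi) hg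
  exact ⟨k, hk, rfl⟩

lemma IsSphere.closedFaceSide_subset_union (hS : M.IsSphere) (hcov : ∀ g, ∃ d, M.Incident g d)
    (i : ZMod 2) : M.closedFaceSide v φ (i + 1) ⊆
      M.closedFaceSide v t 1 ∪ M.closedFaceSide v (φ + (fun _ => i) + t) 1 := by
  have hface (f : M.Face) (hf : φ f = i + 1) : t f = 1 ∨ φ f + i + t f = 1 := by
    have hbit : ∀ j a : ZMod 2, a = 1 ∨ j + 1 + j + a = 1 := by decide
    rw [hf]
    exact hbit i (t f)
  intro g hg
  obtain ⟨d, hd⟩ := hcov g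
  rw [Set.mem_union, hS.mem_closedFaceSide_iff hd, hS.mem_closedFaceSide_iff hd]
  obtain ⟨hgv, d', hd', h | h⟩ := (hS.mem_closedFaceSide_iff hd).1 hg
  · exact (hface _ h).imp (fun h => ⟨hgv, d', hd', .inl h⟩) fun h => ⟨hgv, d', hd', .inl h⟩
  · exact (hface _ h).imp (fun h => ⟨hgv, d', hd', .inr h⟩) fun h => ⟨hgv, d', hd', .inr h⟩

/-- The detour `t` and the rest of the side containing its path are both bounded by separators. -/
lemma IsSphere.hasSeparatorAvoiding [Finite V] (hS : M.IsSphere) (T : IsBFSTree G v parent)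
    (hM : M.Carries G edge) (hcov : ∀ g, ∃ d, M.Incident g d)
    (hφ : M.faceBoundary φ = fundamentalCycle G edge v parent e)
    (hends : s(M.src e, M.tgt e) = s(x, x')) {i : ZMod 2}
    (hbal : Nat.card V ≤ 3 * (M.closedFaceSide v φ (i + 1)).ncard + 1)
    (hq : IsGeodesic G q m) (hq0 : q 0 = v) (hqm : q m = w) (hm : 2 ≤ m)
    (hint : ∀ k, 1 ≤ k → k < m → q k ∉ M.support (M.faceBoundary φ) ∧ M.side φ (q k) ≠ i)
    (hwx : w ∈ ancestors parent x)
    (hu : u ∉ M.support (M.faceBoundary φ)) (hui : M.side φ u = i)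
    (hz : z ∈ M.support (M.faceBoundary φ)) (hvz : G.Adj v z) (hzx' : z ∉ ancestors parent x')
    (hz' : z' ∈ M.support (M.faceBoundary φ)) (hvz' : G.Adj v z') (hz'x : z' ∉ ancestors parent x) :
    HasSeparatorAvoiding G v u z z' := by
  obtain ⟨t, ht, ht0⟩ := hS.exists_detour T hM hφ hq hq0 hqm hm hint
  set r := φ + (fun _ => i) + t with hr
  have hr0 (f : M.Face) (hf : φ f = i) : r f = 0 := by
    rw [hr, Pi.add_apply, Pi.add_apply, hf, ht0 f hf, CharTwo.add_self_eq_zero, add_zero]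
  have hnotMem {g : V} (hvg : G.Adj v g) (hg : g ∈ M.support (M.faceBoundary φ)) :
      g ∉ q '' Set.Iic m :=
    hq.notMem_image_of_adj hm (fun k hk1 hkm => (hint k hk1 hkm).1) hg (hq0.symm ▸ hvg)
  have hrC := support_remainder_subset T hM hφ hends hwx ht hq i
  have hcover : M.closedFaceSide v φ (i + 1) ⊆
      M.closedFaceSide v t 1 ∪ M.closedFaceSide v r 1 :=
    hS.closedFaceSide_subset_union hcov i
  obtain ⟨d, hd⟩ := hcov u
  have hcard := (Set.ncard_le_ncard hcover).trans (Set.ncard_union_le _ _)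
  rcases (by lia : Nat.card V ≤ 6 * (M.closedFaceSide v t 1).ncard + 1 ∨
    Nat.card V ≤ 6 * (M.closedFaceSide v r 1).ncard + 1) with h | h
  · refine ⟨_, _, _, _, hS.isSeparator hM
        ((support_detour_subset T hM ht hq).trans (Set.subset_insert ..))
      (hq0 ▸ hq.injOn_dist) (T.injOn_dist_ancestors w),
      hS.notMem_closedFaceSide_of_notMem_support ht0 hu hui hd,
      .inr (hS.notMem_closedFaceSide_of_mem_support ht0 hz' fun hz't => ?_), h⟩
    rcases support_detour_subset T hM ht hq hz't with h | h
    exacts [hnotMem hvz' hz' h, hz'x (mem_ancestors_trans hwx h)]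
  · refine ⟨_, _, _, _, hS.isSeparator hM (hrC.trans (Set.subset_insert ..))
      (injOn_dist_remainder T hwx hq hq0 hqm) (T.injOn_dist_ancestors x'),
      hS.notMem_closedFaceSide_of_notMem_support hr0 hu hui hd,
      .inl (hS.notMem_closedFaceSide_of_mem_support hr0 hz fun hzr => ?_), h⟩
    rcases hrC hzr with (h | h) | h
    · exact hnotMem hvz hz h
    · subst hq0 hqm
      exact (hq.dist_lt_of_adj hm hvz).not_ge h.2
    · exact hzx' h

lemma IsSphere.exists_geodesic_to_support (hS : M.IsSphere) (hM : M.Carries G edge)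
    (hconn : G.Connected) (hvy : G.Adj v y) (hy : y ∉ M.support (M.faceBoundary φ))
    (hw : w ∈ M.support (M.faceBoundary φ)) (hyw : G.dist y w + 1 = G.dist v w) :
    ∃ q m, IsGeodesic G q m ∧ q 0 = v ∧ 2 ≤ m ∧ q m ∈ M.support (M.faceBoundary φ) ∧
      ∀ k, 1 ≤ k → k < m →
        q k ∉ M.support (M.faceBoundary φ) ∧ M.side φ (q k) = M.side φ y := by
  classical
  obtain ⟨q, hq, hq0, hq1, hqw⟩ := exists_isGeodesic hconn hvy hyw
  have hex : ∃ m, 1 ≤ m ∧ q m ∈ M.support (M.faceBoundary φ) :=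
    ⟨G.dist v w, by lia, hqw.symm ▸ hw⟩
  have hle : Nat.find hex ≤ G.dist v w := Nat.find_min' hex ⟨by lia, hqw.symm ▸ hw⟩
  obtain ⟨hpos, hmem⟩ := Nat.find_spec hex
  have hfirst (k : ℕ) (hk1 : 1 ≤ k) (hk : k < Nat.find hex) :
      q k ∉ M.support (M.faceBoundary φ) := fun h => Nat.find_min hex hk ⟨hk1, h⟩
  refine ⟨q, Nat.find hex, hq.mono hle, hq0, ?_, hmem, fun k hk1 hk => ⟨hfirst k hk1 hk, ?_⟩⟩
  · by_contra! h
    rw [show Nat.find hex = 1 by lia, hq1] at hmem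
    exact hy hmem
  · induction k, hk1 using Nat.le_induction with
    | base => rw [hq1]
    | succ k hk1 ih =>
      have hadj : G.Adj (q k) (q (k + 1)) := hq.adj (by lia)
      rw [← ih (by lia), ← hS.left_eq_side (hfirst k hk1 (by lia)) (hM.incident_left hadj),
        ← hS.left_eq_side (hfirst (k + 1) (by lia) hk) (hM.incident_right hadj)]

end CellComplex

open CellComplex

/-- The last clause reroutes the separator along a shortest path from `v` to `w ∈ C` whose second
vertex `y` is off the separator. -/
theorem exists_balanced_separator {V : Type*} [Finite V] [Nontrivial V] {G : SimpleGraph V}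
    {parent : V → V} {v : V} (hconn : G.Connected) (hplanar : IsPlanar G)
    (T : IsBFSTree G v parent) :
    ∃ x x' C s, IsSeparator G v C s (ancestors parent x) (ancestors parent x') ∧
      (∀ i, Nat.card V ≤ 3 * (closedSide v C s i).ncard + 1) ∧
      ∀ ⦃z z' u y w⦄, G.Adj v z → z ∈ C → z ∉ ancestors parent x' →
        G.Adj v z' → z' ∈ C → z' ∉ ancestors parent x → u ∉ C → G.Adj v y → y ∉ C → s u ≠ s y →
        w ∈ C → G.dist y w + 1 = G.dist v w → HasSeparatorAvoiding G v u z z' := by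
  obtain ⟨M, hS, hM⟩ := exists_isSphere_of_isPlanar hconn.preconnected hplanar
  obtain ⟨edge, hM⟩ : ∃ edge, M.Carries G edge := by
    have : Nonempty M.Edge := by
      obtain ⟨h, hvh⟩ := hconn.preconnected.exists_adj_of_nontrivial v
      exact ⟨(hM v h hvh).choose⟩
    choose! edge hedge using hM
    exact ⟨edge, hedge⟩
  have hcov (g : V) : ∃ d, M.Incident g d :=
    let ⟨_, hgh⟩ := hconn.preconnected.exists_adj_of_nontrivial g
    ⟨_, hM.incident_left hgh⟩
  obtain ⟨e, φ, hφ, hbal⟩ := hS.exists_balanced T hM hcov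
  have hC := hφ.symm ▸ support_fundamentalCycle_subset T hM e
  refine ⟨_, _, _, _, hS.isSeparator hM (hC.trans (Set.subset_insert ..))
    (T.injOn_dist_ancestors _) (T.injOn_dist_ancestors _), hbal, ?_⟩
  intro z z' u y w hvz hz hzx' hvz' hz' hz'x hu hvy hy huy hw hyw
  obtain ⟨q, m, hq, hq0, hm, hqm, hint⟩ := hS.exists_geodesic_to_support hM hconn hvy hy hw hyw
  have hint' (k : ℕ) (hk1 : 1 ≤ k) (hkm : k < m) :
      q k ∉ M.support (M.faceBoundary φ) ∧ M.side φ (q k) ≠ M.side φ u :=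
    ⟨(hint k hk1 hkm).1, (hint k hk1 hkm).2 ▸ huy.symm⟩
  rcases hC hqm with hx | hx
  · exact hS.hasSeparatorAvoiding T hM hcov hφ rfl (hbal _) hq hq0 rfl hm hint' hx hu rfl
      hz hvz hzx' hz' hvz' hz'x
  · exact (hS.hasSeparatorAvoiding T hM hcov hφ Sym2.eq_swap (hbal _) hq hq0 rfl hm hint' hx hu rfl
      hz' hvz' hz'x hz hvz hzx').swap

end Reroute

section Euler

namespace CellComplex

variable {V : Type*} {M : CellComplex V} {G : SimpleGraph V}

/-- The subcomplex with edge set `K`; deleting an edge merges the faces on its two sides. -/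
noncomputable def restrict (M : CellComplex V) (K : Set M.Edge) : CellComplex V where
  Edge := K
  Face := Quot fun f f' => ∃ e ∉ K, M.left e = f ∧ M.right e = f'
  fintypeEdge := Fintype.ofFinite _
  fintypeFace := Fintype.ofFinite _
  src e := M.src e
  tgt e := M.tgt e
  left e := Quot.mk _ (M.left e)
  right e := Quot.mk _ (M.right e)

lemma edgeBoundary_restrict {K : Set M.Edge} {c : (M.restrict K).Edge → ZMod 2}
    {c' : M.Edge → ZMod 2} (hc : ∀ e : K, c' e = c e) (h0 : ∀ e ∉ K, c' e = 0) :
    (M.restrict K).edgeBoundary c = M.edgeBoundary c' := by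
  rw [edgeBoundary_eq_sum, edgeBoundary_eq_sum]
  refine Fintype.sum_of_injective (ι := (M.restrict K).Edge) (Subtype.val : K → M.Edge)
    Subtype.val_injective _ _ ?_ ?_
  · intro e he
    rw [h0 e fun h => he ⟨⟨e, h⟩, rfl⟩, zero_smul]
  · exact fun e => congrArg (· • _) (hc e).symm

lemma faceBoundary_comp_mk_of_notMem {K : Set M.Edge} (s : (M.restrict K).Face → ZMod 2)
    {e : M.Edge} (he : e ∉ K) : M.faceBoundary (s ∘ Quot.mk _) e = 0 :=
  CharTwo.add_eq_zero.2 (congrArg s (Quot.sound ⟨e, he, rfl, rfl⟩))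

lemma HasSphereHomology.restrict (hM : M.HasSphereHomology) (K : Set M.Edge) :
    (M.restrict K).HasSphereHomology where
  edgeBoundary_faceBoundary s :=
    (edgeBoundary_restrict (fun _ => rfl) fun _ => faceBoundary_comp_mk_of_notMem s).trans
      (hM.edgeBoundary_faceBoundary _)
  exists_faceBoundary_eq c hc := by
    classical
    set c' : M.Edge → ZMod 2 := fun e => if h : e ∈ K then c ⟨e, h⟩ else 0
    have hcK (e : K) : c' e = c e := dif_pos e.2
    obtain ⟨s, hs⟩ := hM.exists_faceBoundary_eq c' <|
      (edgeBoundary_restrict hcK fun e he => dif_neg he).symm.trans hc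
    refine ⟨Quot.lift s ?_, funext fun e => (congrFun hs e.1).trans (hcK e)⟩
    rintro _ _ ⟨e, he, rfl, rfl⟩
    exact CharTwo.add_eq_zero.1 ((congrFun hs e).trans (dif_neg he))
  eq_of_faceBoundary_eq_zero s hs := by
    rintro ⟨f⟩ ⟨f'⟩
    refine hM.eq_of_faceBoundary_eq_zero (s ∘ Quot.mk _) (funext fun e => ?_) f f'
    by_cases he : e ∈ K
    · exact congrFun hs ⟨e, he⟩
    · exact faceBoundary_comp_mk_of_notMem s he

open Module in
/-- Euler's inequality, from the ranks of the two boundary maps. -/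
lemma HasSphereHomology.card_edge_add_two_le [Finite V] [Nonempty V] [Nonempty M.Face]
    (hM : M.HasSphereHomology) : Nat.card M.Edge + 2 ≤ Nat.card M.Face + Nat.card V := by
  have := Fintype.ofFinite V
  have hrank₁ := M.edgeBoundary.finrank_range_add_finrank_ker
  have hrank₂ := M.faceBoundary.finrank_range_add_finrank_ker
  have hrange : M.edgeBoundary.range ≠ ⊤ := by
    intro htop
    obtain ⟨g⟩ := ‹Nonempty V›
    obtain ⟨c, hc⟩ := LinearMap.range_eq_top.1 htop (.single g 1)
    have := congrArg (Finsupp.linearCombination (ZMod 2) fun _ => (1 : ZMod 2)) hc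
    rw [edgeBoundary_eq_sum, map_sum, Finset.sum_eq_zero fun e _ => by
      simp [CharTwo.add_self_eq_zero]] at this
    simp at this
  have hker₂ : 1 ≤ finrank (ZMod 2) M.faceBoundary.ker := by
    rw [Submodule.one_le_finrank_iff, Submodule.ne_bot_iff]
    exact ⟨1, M.faceBoundary_const 1, one_ne_zero⟩
  have hker₁ : finrank (ZMod 2) M.edgeBoundary.ker ≤ finrank (ZMod 2) M.faceBoundary.range :=
    Submodule.finrank_mono fun c hc => hM.exists_faceBoundary_eq c hc
  have hlt := Submodule.finrank_lt hrange
  rw [finrank_fintype_fun_eq_card] at hrank₁ hrank₂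
  rw [finrank_finsupp_self] at hlt
  simp only [Nat.card_eq_fintype_card]
  lia

/-- The pair of ends of an edge. -/
def pair (M : CellComplex V) (e : M.Edge) : Sym2 V := s(M.src e, M.tgt e)

/-- The edges of `G` are the edges of a cell complex with the homology of the sphere. -/
lemma IsSphere.exists_hasSphereHomology (hM : M.IsSphere)
    (hG : ∀ g h, G.Adj g h → ∃ e, s(M.src e, M.tgt e) = s(g, h)) :
    ∃ N : CellComplex V, N.HasSphereHomology ∧ N.pair.Injective ∧ Set.range N.pair = G.edgeSet := by
  have hpair (p : G.edgeSet) : ∃ e, M.pair e = p := by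
    obtain ⟨⟨g, h⟩, hp⟩ := p
    exact hG g h hp
  choose κ hκ using hpair
  refine ⟨M.restrict (Set.range κ), hM.toHasSphereHomology.restrict _, ?_, ?_⟩
  · rintro ⟨_, p, rfl⟩ ⟨_, p', rfl⟩ h
    obtain rfl : p = p' := Subtype.ext ((hκ p).symm.trans (h.trans (hκ p')))
    rfl
  · ext p
    constructor
    · rintro ⟨⟨_, p, rfl⟩, rfl⟩
      exact (hκ p).symm ▸ p.2
    · exact fun hp => ⟨⟨κ ⟨p, hp⟩, ⟨p, hp⟩, rfl⟩, hκ ⟨p, hp⟩⟩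

open scoped Classical in
/-- The boundary of the face `f`, as a set of pairs of vertices. -/
noncomputable def facePairs (M : CellComplex V) (f : M.Face) : Set (Sym2 V) :=
  M.pair '' {e | M.faceBoundary (Pi.single f 1) e ≠ 0}

lemma exists_of_mem_facePairs {f : M.Face} {p : Sym2 V} (hp : p ∈ M.facePairs f) :
    ∃ e, M.pair e = p ∧ (M.left e = f ∨ M.right e = f) := by
  obtain ⟨e, he, rfl⟩ := hp
  refine ⟨e, rfl, ?_⟩
  by_contra! hne
  exact he (by simp [hne])

lemma HasSphereHomology.exists_ne_mem_facePairs (hM : M.HasSphereHomology) {f : M.Face}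
    (hloop : ∀ e, M.src e ≠ M.tgt e) (hinj : M.pair.Injective) {g x : V}
    (hx : s(g, x) ∈ M.facePairs f) : ∃ y ≠ x, s(g, y) ∈ M.facePairs f := by
  obtain ⟨e₀, he₀, hpair⟩ := hx
  have hincident {e : M.Edge} : g ∈ M.pair e ↔ M.Incident g e :=
    Sym2.mem_iff.trans (or_congr eq_comm eq_comm)
  by_contra! hy
  refine he₀ (apply_eq_zero_of_edgeBoundary_eq_zero (hM.edgeBoundary_faceBoundary _) (hloop e₀)
    (hincident.1 (hpair.symm ▸ Sym2.mem_mk_left g x)) fun e hne hg => ?_)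
  obtain ⟨y, hey⟩ := Sym2.mem_iff_exists.1 (hincident.2 hg)
  by_contra he
  refine hy y ?_ ⟨e, he, hey⟩
  rintro rfl
  exact hne (hinj (hey.trans hpair.symm))

lemma HasSphereHomology.facePairs_nonempty (hM : M.HasSphereHomology) {f f' : M.Face}
    (hne : f ≠ f') : (M.facePairs f).Nonempty := by
  classical
  refine Set.Nonempty.image _ ?_
  by_contra! h
  have hzero : M.faceBoundary (Pi.single f 1) = 0 :=
    funext fun e => not_not.1 (Set.eq_empty_iff_forall_notMem.1 h e)
  exact one_ne_zero (α := ZMod 2)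
    (by simpa [hne.symm] using hM.eq_of_faceBoundary_eq_zero _ hzero f f')

lemma HasSphereHomology.facePairs_injective (hM : M.HasSphereHomology) (hinj : M.pair.Injective)
    (hcard : 2 < Nat.card M.Face) : M.facePairs.Injective := by
  classical
  intro f₁ f₂ heq
  by_contra hne
  obtain ⟨f, hf₁, hf₂⟩ : ∃ f, f ≠ f₁ ∧ f ≠ f₂ := by
    rw [Nat.card_eq_fintype_card] at hcard
    obtain ⟨f, -, h⟩ := Finset.exists_mem_notMem_of_card_lt_card
      (s := {f₁, f₂}) (t := Finset.univ) (Finset.card_le_two.trans_lt hcard)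
    exact ⟨f, by simpa using h⟩
  have hsupport := Set.image_injective.2 hinj heq
  have hboundary : M.faceBoundary (Pi.single f₁ 1) = M.faceBoundary (Pi.single f₂ 1) := by
    have hbit : ∀ a b : ZMod 2, (a ≠ 0 ↔ b ≠ 0) → a = b := by decide
    exact funext fun e => hbit _ _ (Set.ext_iff.1 hsupport e)
  have hconst := hM.eq_of_faceBoundary_eq_zero (Pi.single f₁ 1 + Pi.single f₂ 1)
    (by rw [map_add, hboundary, ZModModule.add_self]) f₁ f
  simp [hne, hf₁, hf₂] at hconst

end CellComplex

end Euler

section FourCycleFree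

variable {V : Type*} {G : SimpleGraph V} {D : Set (Sym2 V)} {a b c x y : V}

/-- No cycle of `G` has length four: the diagonals of a closed walk of length four degenerate. -/
def FourCycleFree (G : SimpleGraph V) : Prop :=
  ∀ ⦃a b c d⦄, G.Adj a b → G.Adj b c → G.Adj c d → G.Adj d a → a = c ∨ b = d

lemma fourCycleFree_of_isCycle
    (hG : ∀ (v : V) (c : G.Walk v v), c.IsCycle → c.length ≠ 4) : FourCycleFree G := by
  intro a b c d hab hbc hcd hda
  by_contra! hne
  refine hG a (.cons hab (.cons hbc (.cons hcd (.cons hda .nil)))) ?_ rfl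
  have := hab.ne
  have := hbc.ne
  have := hcd.ne
  have := hda.ne
  rw [SimpleGraph.Walk.cons_isCycle_iff]
  constructor
  · simp only [SimpleGraph.Walk.isPath_def, SimpleGraph.Walk.support_cons,
      SimpleGraph.Walk.support_nil]
    grind
  · simp only [SimpleGraph.Walk.edges_cons, SimpleGraph.Walk.edges_nil]
    grind

/-- `D` is the set of the three edges of a triangle of `G`. -/
def IsTriangle (G : SimpleGraph V) (D : Set (Sym2 V)) : Prop :=
  ∃ a b c, G.Adj a b ∧ G.Adj b c ∧ G.Adj c a ∧ D = {s(a, b), s(b, c), s(c, a)}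

/-- The edges of `G` that lie in no triangle. -/
def trianglelessEdges (G : SimpleGraph V) : Set (Sym2 V) :=
  {p ∈ G.edgeSet | ∀ D, IsTriangle G D → p ∉ D}

lemma IsTriangle.ncard_eq (hD : IsTriangle G D) : D.ncard = 3 := by
  obtain ⟨a, b, c, hab, hbc, hca, rfl⟩ := hD
  have := hab.ne
  have := hbc.ne
  have := hca.ne
  rw [Set.ncard_eq_three]
  refine ⟨_, _, _, ?_, ?_, ?_, rfl⟩ <;> grind

lemma IsTriangle.subset_edgeSet (hD : IsTriangle G D) : D ⊆ G.edgeSet := by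
  obtain ⟨a, b, c, hab, hbc, hca, rfl⟩ := hD
  rintro p (rfl | rfl | rfl)
  exacts [hab, hbc, hca]

lemma IsTriangle.exists_apex (hD : IsTriangle G D) (hxy : s(x, y) ∈ D) :
    ∃ z, G.Adj y z ∧ G.Adj z x ∧ D = {s(x, y), s(y, z), s(z, x)} := by
  obtain ⟨a, b, c, hab, hbc, hca, rfl⟩ := hD
  simp only [Set.mem_insert_iff, Set.mem_singleton_iff, Sym2.eq_iff] at hxy
  rcases hxy with (⟨rfl, rfl⟩ | ⟨rfl, rfl⟩) | (⟨rfl, rfl⟩ | ⟨rfl, rfl⟩) | (⟨rfl, rfl⟩ | ⟨rfl, rfl⟩)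
  · exact ⟨c, hbc, hca, rfl⟩
  · exact ⟨c, hca.symm, hbc.symm, by grind⟩
  · exact ⟨a, hca, hab, by grind⟩
  · exact ⟨a, hab.symm, hca.symm, by grind⟩
  · exact ⟨b, hab, hbc, by grind⟩
  · exact ⟨b, hbc.symm, hab.symm, by grind⟩

lemma FourCycleFree.disjoint_of_isTriangle (h4 : FourCycleFree G) {D' : Set (Sym2 V)}
    (hD : IsTriangle G D) (hD' : IsTriangle G D') (hne : D ≠ D') : Disjoint D D' := by
  rw [Set.disjoint_left]
  rintro ⟨x, y⟩ hp hp'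
  obtain ⟨z, hyz, hzx, hDz⟩ := hD.exists_apex hp
  obtain ⟨z', hyz', hzx', hDz'⟩ := hD'.exists_apex hp'
  rcases h4 hzx.symm hyz.symm hyz' hzx' with h | rfl
  · exact (show G.Adj x y from hD.subset_edgeSet hp).ne h
  · exact hne (hDz.trans hDz'.symm)

lemma FourCycleFree.three_mul_ncard_isTriangle_add_le [Finite V] (h4 : FourCycleFree G) :
    3 * {D | IsTriangle G D}.ncard + (trianglelessEdges G).ncard ≤ G.edgeSet.ncard := by
  classical
  have := Fintype.ofFinite V
  have hunion : (⋃ D : {D // IsTriangle G D}, (D : Set (Sym2 V))).ncard =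
      3 * {D | IsTriangle G D}.ncard := by
    rw [Set.ncard_iUnion_of_finite (fun _ => Set.toFinite _) fun D D' hne =>
        h4.disjoint_of_isTriangle D.2 D'.2 (Subtype.coe_injective.ne hne),
      finsum_eq_sum_of_fintype, Finset.sum_congr rfl fun D _ => D.2.ncard_eq, Finset.sum_const,
      smul_eq_mul, mul_comm, Finset.card_univ, ← Nat.card_eq_fintype_card]
    rfl
  have hdisjoint : Disjoint (⋃ D : {D // IsTriangle G D}, (D : Set (Sym2 V)))
      (trianglelessEdges G) := by
    rw [Set.disjoint_left]
    intro p hp hp0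
    obtain ⟨D, hpD⟩ := Set.mem_iUnion.1 hp
    exact hp0.2 D D.2 hpD
  rw [← hunion, ← Set.ncard_union_eq hdisjoint]
  exact Set.ncard_le_ncard
    (Set.union_subset (Set.iUnion_subset fun D => D.2.subset_edgeSet) fun _ hp => hp.1)

lemma length_le_ncard_of_nodup {α : Type*} {l : List α} {s : Set α} (hl : l.Nodup)
    (hls : ∀ a ∈ l, a ∈ s) (hs : s.Finite) : l.length ≤ s.ncard := by
  classical
  rw [← List.toFinset_card_of_nodup hl, ← Set.ncard_coe_finset]
  exact Set.ncard_le_ncard (fun a ha => hls a (List.mem_toFinset.1 ha)) hs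

lemma isTriangle_or_five_le_ncard_of_mem [Finite V] (hD : D ⊆ G.edgeSet)
    (hleaf : ∀ ⦃g x⦄, s(g, x) ∈ D → ∃ y ≠ x, s(g, y) ∈ D)
    (hab : s(a, b) ∈ D) (hbc : s(b, c) ∈ D) (hca : s(c, a) ∈ D) :
    IsTriangle G D ∨ 5 ≤ D.ncard := by
  have habG : G.Adj a b := hD hab
  have hbcG : G.Adj b c := hD hbc
  have hcaG : G.Adj c a := hD hca
  by_cases hsub : D ⊆ {s(a, b), s(b, c), s(c, a)}
  · refine .inl ⟨a, b, c, habG, hbcG, hcaG, hsub.antisymm ?_⟩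
    rintro p (rfl | rfl | rfl)
    exacts [hab, hbc, hca]
  obtain ⟨p, q, hpq, hpa, hpb, hpc⟩ : ∃ p q, s(p, q) ∈ D ∧ p ≠ a ∧ p ≠ b ∧ p ≠ c := by
    obtain ⟨⟨p, q⟩, hpq, hnot⟩ := Set.not_subset.1 hsub
    have hne : G.Adj p q := hD hpq
    by_cases hp : p ≠ a ∧ p ≠ b ∧ p ≠ c
    · exact ⟨p, q, hpq, hp⟩
    · refine ⟨q, p, Sym2.eq_swap ▸ hpq, ?_⟩
      have := hne.ne
      simp only [Set.mem_insert_iff, Set.mem_singleton_iff, Sym2.eq_iff] at hnot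
      grind
  obtain ⟨r, hrq, hpr⟩ := hleaf hpq
  have := habG.ne
  have := hbcG.ne
  have := hcaG.ne
  refine .inr (length_le_ncard_of_nodup (l := [s(a, b), s(b, c), s(c, a), s(p, q), s(p, r)])
    ?_ ?_ (Set.toFinite D))
  · simp only [List.nodup_cons, List.mem_cons, List.not_mem_nil, Sym2.eq_iff]
    grind
  · simp [*]

/-- Extending an edge in both directions gives a path of three edges; it closes up to a triangle,
to a cycle of length four, or extends to five edges. -/
lemma FourCycleFree.isTriangle_or_five_le_ncard [Finite V] (h4 : FourCycleFree G)
    (hD : D ⊆ G.edgeSet) (hleaf : ∀ ⦃g x⦄, s(g, x) ∈ D → ∃ y ≠ x, s(g, y) ∈ D)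
    (hne : D.Nonempty) : IsTriangle G D ∨ 5 ≤ D.ncard := by
  obtain ⟨⟨a, b⟩, hab⟩ := hne
  change s(a, b) ∈ D at hab
  have hswap {x y : V} (h : s(x, y) ∈ D) : s(y, x) ∈ D := Sym2.eq_swap ▸ h
  obtain ⟨c, hcb, hac⟩ := hleaf hab
  obtain ⟨x, hxa, hbx⟩ := hleaf (hswap hab)
  obtain rfl | hxc := eq_or_ne x c
  · exact isTriangle_or_five_le_ncard_of_mem hD hleaf hab hbx (hswap hac)
  obtain ⟨d, hda, hcd⟩ := hleaf (hswap hac)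
  obtain rfl | hdb := eq_or_ne d b
  · exact isTriangle_or_five_le_ncard_of_mem hD hleaf hab (hswap hcd) (hswap hac)
  have habG : G.Adj a b := hD hab
  have hacG : G.Adj a c := hD hac
  have hbxG : G.Adj b x := hD hbx
  have hcdG : G.Adj c d := hD hcd
  obtain rfl | hdx := eq_or_ne d x
  · rcases h4 habG hbxG hcdG.symm hacG.symm with h | h
    exacts [absurd h.symm hxa, absurd h.symm hcb]
  obtain ⟨y, hyc, hdy⟩ := hleaf (hswap hcd)
  have := habG.ne
  have := hacG.ne
  have := hbxG.ne
  have := hcdG.ne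
  refine .inr (length_le_ncard_of_nodup (l := [s(a, b), s(a, c), s(b, x), s(c, d), s(d, y)])
    ?_ ?_ (Set.toFinite D))
  · simp only [List.nodup_cons, List.mem_cons, List.not_mem_nil, Sym2.eq_iff]
    grind
  · simp [*]

end FourCycleFree

section EulerBound

variable {V : Type*} {G : SimpleGraph V} {M : CellComplex V}

lemma CellComplex.sum_ncard_facePairs_le (M : CellComplex V) :
    ∑ f, (M.facePairs f).ncard ≤ 2 * Nat.card M.Edge := by
  classical
  have hface (f : M.Face) : (M.facePairs f).ncard ≤
      ∑ e, ((if M.left e = f then 1 else 0) + if M.right e = f then 1 else 0) := by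
    have hsub : M.facePairs f ⊆ M.pair '' {e | M.left e = f ∨ M.right e = f} := by
      intro p hp
      obtain ⟨e, rfl, he⟩ := M.exists_of_mem_facePairs hp
      exact Set.mem_image_of_mem _ he
    calc (M.facePairs f).ncard
        ≤ {e | M.left e = f ∨ M.right e = f}.ncard :=
          (Set.ncard_le_ncard hsub ((Set.toFinite _).image _)).trans
            (Set.ncard_image_le (Set.toFinite _))
      _ ≤ {e | M.left e = f}.ncard + {e | M.right e = f}.ncard := Set.ncard_union_le _ _
      _ = _ := by simp [Finset.sum_add_distrib, Set.ncard_eq_toFinset_card']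
  calc ∑ f, (M.facePairs f).ncard
      ≤ ∑ f, ∑ e, ((if M.left e = f then 1 else 0) + if M.right e = f then 1 else 0) :=
        Finset.sum_le_sum fun f _ => hface f
    _ = ∑ e, ∑ f, ((if M.left e = f then 1 else 0) + if M.right e = f then 1 else 0) :=
        Finset.sum_comm
    _ = 2 * Nat.card M.Edge := by simp [Finset.sum_add_distrib, mul_comm]

/-- All but the triangular faces have at least five edges. -/
lemma CellComplex.HasSphereHomology.five_mul_card_face_le [Finite V] (hM : M.HasSphereHomology)
    (hinj : M.pair.Injective) (hrange : Set.range M.pair = G.edgeSet) (h4 : FourCycleFree G)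
    (hcard : 2 < Nat.card M.Face) :
    5 * Nat.card M.Face ≤ 2 * Nat.card M.Edge + 2 * {D | IsTriangle G D}.ncard := by
  classical
  have hloop (e : M.Edge) : M.src e ≠ M.tgt e :=
    SimpleGraph.Adj.ne (show M.pair e ∈ G.edgeSet from hrange ▸ ⟨e, rfl⟩)
  have hedge (f : M.Face) : M.facePairs f ⊆ G.edgeSet :=
    hrange ▸ Set.image_subset_range _ _
  have hface (f : M.Face) :
      5 ≤ (M.facePairs f).ncard + 2 * if IsTriangle G (M.facePairs f) then 1 else 0 := by
    have := Fintype.one_lt_card_iff_nontrivial.1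
      ((Nat.card_eq_fintype_card (α := M.Face)).symm ▸ one_lt_two.trans hcard)
    obtain ⟨f', hf'⟩ := exists_ne f
    rcases h4.isTriangle_or_five_le_ncard (hedge f)
      (fun _ _ => hM.exists_ne_mem_facePairs hloop hinj) (hM.facePairs_nonempty hf'.symm)
      with htri | hle
    · simp [htri, htri.ncard_eq]
    · lia
  have htriangle : (∑ f, if IsTriangle G (M.facePairs f) then 1 else 0) ≤
      {D | IsTriangle G D}.ncard := by
    rw [Finset.sum_boole, Nat.cast_id, ← Set.ncard_coe_finset]
    exact Set.ncard_le_ncard_of_injOn M.facePairs (by simp)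
      (hM.facePairs_injective hinj hcard).injOn
  have hsum := Finset.sum_le_sum fun f (_ : f ∈ Finset.univ) => hface f
  rw [Finset.sum_const, Finset.card_univ, smul_eq_mul, Finset.sum_add_distrib,
    ← Finset.mul_sum] at hsum
  rw [Nat.card_eq_fintype_card (α := M.Face)]
  have := M.sum_ncard_facePairs_le
  lia

lemma FourCycleFree.ncard_edgeSet_le_or [Finite V] [Nontrivial V] (h4 : FourCycleFree G)
    (hconn : G.Preconnected) (hplanar : IsPlanar G) :
    G.edgeSet.ncard ≤ Nat.card V ∨
      7 * G.edgeSet.ncard + 30 + 2 * (trianglelessEdges G).ncard ≤ 15 * Nat.card V := by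
  obtain ⟨S, hS, hSG⟩ := exists_isSphere_of_isPlanar hconn hplanar
  obtain ⟨M, hM, hinj, hrange⟩ := hS.exists_hasSphereHomology hSG
  have hedges : Nat.card M.Edge = G.edgeSet.ncard := by
    rw [← hrange, ← Set.image_univ, Set.ncard_image_of_injective _ hinj, Set.ncard_univ]
  obtain ⟨g⟩ := ‹Nontrivial V›.to_nonempty
  obtain ⟨h, hgh⟩ := hconn.exists_adj_of_nontrivial g
  obtain ⟨e, -⟩ : s(g, h) ∈ Set.range M.pair := hrange ▸ hgh
  have : Nonempty M.Face := ⟨M.left e⟩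
  have heuler := hM.card_edge_add_two_le
  obtain hcard | hcard := le_or_gt (Nat.card M.Face) 2
  · lia
  have hfaces := hM.five_mul_card_face_le hinj hrange h4 hcard
  have htriangles := h4.three_mul_ncard_isTriangle_add_le
  lia

end EulerBound

section Firefighting

variable {V : Type*} {G : SimpleGraph V} {v w : V} {b : ℕ → ℕ}

lemma burnedSet_mono (G : SimpleGraph V) (v : V) (P : ℕ → Set V) : Monotone (burnedSet G v P) :=
  monotone_nat_of_le_succ fun _ => Set.subset_union_left

lemma exists_dist_lt_of_mem_burnedSet {P : ℕ → Set V} {t : ℕ} (hw : w ∈ burnedSet G v P t) :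
    w = v ∨ ∃ n, G.Adj v n ∧ n ∉ P 0 ∧ G.dist n w < t := by
  induction t generalizing w with
  | zero => exact .inl hw
  | succ t ih =>
    rcases hw with hw | ⟨⟨u, hu, huw⟩, hP⟩
    · exact (ih hw).imp_right fun ⟨n, hn, hnP, hlt⟩ => ⟨n, hn, hnP, hlt.trans t.lt_succ_self⟩
    · right
      rcases ih hu with rfl | ⟨n, hn, hnP, hlt⟩
      · exact ⟨w, huw, hP 0 t.zero_le, by simp⟩
      · have := huw.reachable.dist_triangle_right n
        rw [SimpleGraph.dist_eq_one_iff_adj.2 huw] at this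
        exact ⟨n, hn, hnP, by lia⟩

/-- The second vertices of the shortest paths from `v` to `w`. -/
def firstSteps (G : SimpleGraph V) (v w : V) : Set V :=
  {n | G.Adj v n ∧ G.dist n w + 1 = G.dist v w}

/-- The vertices of `S` with a neighbour outside `S`. -/
def innerBoundary (G : SimpleGraph V) (S : Set V) : Set V :=
  {w ∈ S | ∃ x ∉ S, G.Adj x w}

lemma ncard_le_sn_of_validStrategy [Finite V] {P : ℕ → Set V} (hP : ValidStrategy G b v P)
    {S : Set V} (hS : ∀ w ∈ S, ∀ t, w ∉ burnedSet G v P t) : S.ncard ≤ sn G b v := by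
  refine le_trans ?_ (le_csSup ⟨Nat.card V, ?_⟩ ⟨P, hP, rfl⟩)
  · exact Set.ncard_le_ncard hS
  · rintro _ ⟨P, -, rfl⟩
    exact Set.ncard_le_card _

/-- It suffices to protect every vertex `w` on the boundary of `S` in round `τ w + 1`. Normally the
fire may reach `w` right after round `dist v w`; it is delayed by one round if all the first steps
towards `w` are protected at once. -/
lemma ncard_le_sn [Finite V] {S : Set V} (τ : V → ℕ) (hvS : v ∉ S)
    (hbudget : ∀ t, {w ∈ innerBoundary G S | τ w = t}.ncard ≤ b t)
    (htime : ∀ w ∈ innerBoundary G S, τ w < G.dist v w ∨ τ w ≤ G.dist v w ∧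
      ∀ n ∈ firstSteps G v w, n ∈ S ∧ τ n = 0) :
    S.ncard ≤ sn G b v := by
  set P : ℕ → Set V := fun t => {w ∈ innerBoundary G S | τ w = t}
  have hdisjoint (t : ℕ) : Disjoint (P t) (burnedSet G v P t) := by
    rw [Set.disjoint_left]
    rintro w ⟨hw, rfl⟩ hburned
    obtain rfl | ⟨n, hvn, hnP, hlt⟩ := exists_dist_lt_of_mem_burnedSet hburned
    · exact hvS hw.1
    have htriangle := hvn.reachable.dist_triangle_left w
    rw [SimpleGraph.dist_eq_one_iff_adj.2 hvn] at htriangle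
    rcases htime w hw with hlt' | ⟨hle, hfirst⟩
    · lia
    · obtain ⟨hnS, hτn⟩ := hfirst n ⟨hvn, by lia⟩
      exact hnP ⟨⟨hnS, v, hvS, hvn⟩, hτn⟩
  refine ncard_le_sn_of_validStrategy (fun t => ⟨Set.toFinite _, hbudget t, hdisjoint t⟩) ?_
  intro w hw t
  induction t generalizing w with
  | zero => exact fun h => hvS (h ▸ hw)
  | succ t ih =>
    intro hburned
    rcases id hburned with h | ⟨⟨u, hu, huw⟩, hunprotected⟩
    · exact ih w hw h
    have hboundary : w ∈ innerBoundary G S := ⟨hw, u, fun huS => ih u huS hu, huw⟩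
    obtain hle | hlt := le_or_gt (τ w) t
    · exact hunprotected _ hle ⟨hboundary, rfl⟩
    · exact Set.disjoint_left.1 (hdisjoint (τ w)) ⟨hboundary, rfl⟩
        (burnedSet_mono G v P hlt hburned)

lemma innerBoundary_compl_singleton_subset : innerBoundary G {v}ᶜ ⊆ G.neighborSet v := by
  rintro w ⟨-, x, hx, hxw⟩
  rwa [Set.notMem_compl_iff.1 hx] at hxw

lemma card_le_sn_add_one [Finite V] (hd : (G.neighborSet v).ncard ≤ b 0) :
    Nat.card V ≤ sn G b v + 1 := by
  have h := ncard_le_sn (G := G) (v := v) (b := b) (S := {v}ᶜ) (fun _ => 0) (by simp) ?_ ?_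
  · rw [Set.ncard_compl, Set.ncard_singleton] at h
    lia
  · rintro (_ | t)
    · exact (Set.ncard_le_ncard fun w hw => innerBoundary_compl_singleton_subset hw.1).trans hd
    · simp
  · exact fun w hw => .inl (SimpleGraph.dist_eq_one_iff_adj.2
      (innerBoundary_compl_singleton_subset hw) ▸ one_pos)

lemma sn_pos [Finite V] [Nontrivial V] (hconn : G.Connected) (hb : 0 < b 0) (v : V) :
    0 < sn G b v := by
  obtain ⟨w, hw⟩ := exists_ne v
  suffices h : ({w} : Set V).ncard ≤ sn G b v by rwa [Set.ncard_singleton] at h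
  refine ncard_le_sn (fun _ => 0) hw.symm ?_ ?_
  · rintro (_ | t)
    · exact (Set.ncard_le_ncard (t := {w}) fun x hx => hx.1.1).trans
        ((Set.ncard_singleton w).trans_le hb)
    · simp
  · rintro _ ⟨rfl, -⟩
    exact .inl (hconn.pos_dist_of_ne hw.symm)

end Firefighting

section Strategies

variable {V : Type*} {G : SimpleGraph V} {v w : V} {C P Q B R : Set V} {s : V → ZMod 2}
  {i : ZMod 2} {b : ℕ → ℕ}

/-- The neighbours of `c` at distance two from `v`, for a neighbour `c` of `v`. -/
def outerNeighbors (G : SimpleGraph V) (v c : V) : Set V :=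
  {n | G.Adj c n ∧ n ≠ v ∧ ¬ G.Adj v n}

lemma IsSeparator.mem_of_mem_innerBoundary (hS : IsSeparator G v C s P Q)
    (hw : w ∈ innerBoundary G (closedSide v C s i \ B)) :
    w ∈ C ∨ G.Adj v w ∨ s w = i ∧ ∃ c ∈ B, G.Adj c w := by
  obtain ⟨⟨⟨-, hwi⟩, -⟩, x, hx, hxw⟩ := hw
  refine or_iff_not_imp_left.2 fun hwC => or_iff_not_imp_left.2 fun hvw => ?_
  have hxv : x ≠ v := by
    rintro rfl
    exact hvw hxw
  have hwi := hwi.resolve_left hwC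
  refine ⟨hwi, x, by_contra fun hxB => hx ⟨⟨hxv, ?_⟩, hxB⟩, hxw⟩
  exact or_iff_not_imp_left.2 fun hxC => (hS.side_eq hxC hwC hxw).trans hwi

open scoped Classical in
/-- The round, counted from zero, in which the vertex `w` of a separator `C` or next to a burning
neighbour of `v` is protected: the part of `C` outside `R` is protected one round ahead of the fire,
while the part in `R` is protected just in time for a fire delayed by one round. -/
noncomputable def protectionRound (G : SimpleGraph V) (v : V) (C R : Set V) (w : V) : ℕ :=
  if G.Adj v w then 0 else if w ∈ C then if w ∈ R then G.dist v w else G.dist v w - 1 else 1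

lemma protectionRound_eq_zero (hw : G.Adj v w) : protectionRound G v C R w = 0 :=
  if_pos hw

lemma protectionRound_cases (hconn : G.Connected) (hwv : w ≠ v) :
    (G.Adj v w ∧ protectionRound G v C R w = 0) ∨
      ¬ G.Adj v w ∧ 1 < G.dist v w ∧
        ((w ∈ C ∩ R ∧ protectionRound G v C R w = G.dist v w) ∨
          (w ∈ C \ R ∧ protectionRound G v C R w = G.dist v w - 1) ∨
          (w ∉ C ∧ protectionRound G v C R w = 1)) := by
  by_cases hvw : G.Adj v w
  · exact .inl ⟨hvw, if_pos hvw⟩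
  have := hconn.one_lt_dist_of_ne_of_not_adj hwv.symm hvw
  rw [protectionRound, if_neg hvw]
  grind

lemma IsSeparator.ncard_innerBoundary_le [Finite V] (hS : IsSeparator G v C s P Q)
    (hconn : G.Connected)
    (hadj : (G.neighborSet v ∩ (closedSide v C s i \ B)).ncard ≤ b 0)
    (hone : {n | n ∉ C ∧ s n = i ∧ ∃ c ∈ B, n ∈ outerNeighbors G v c}.ncard +
      {w ∈ C \ R | G.dist v w = 2}.ncard ≤ b 1)
    (htwo : ∀ t, 2 ≤ t →
      {w ∈ C ∩ R | G.dist v w = t}.ncard + {w ∈ C \ R | G.dist v w = t + 1}.ncard ≤ b t) (t : ℕ) :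
    {w ∈ innerBoundary G (closedSide v C s i \ B) | protectionRound G v C R w = t}.ncard ≤ b t := by
  have hcases {w : V} (hw : w ∈ innerBoundary G (closedSide v C s i \ B)) :=
    protectionRound_cases (C := C) (R := R) hconn hw.1.1.1
  obtain rfl | rfl | ht : t = 0 ∨ t = 1 ∨ 2 ≤ t := by lia
  · refine (Set.ncard_le_ncard ?_).trans hadj
    rintro w ⟨hw, hround⟩
    exact ⟨by have := hcases hw; grind [SimpleGraph.mem_neighborSet], hw.1⟩
  · refine (Set.ncard_le_ncard ?_).trans ((Set.ncard_union_le _ _).trans hone)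
    rintro w ⟨hw, hround⟩
    have hB := hS.mem_of_mem_innerBoundary hw
    rcases hcases hw with ⟨-, h⟩ | ⟨hvw, hdist, ⟨-, h⟩ | ⟨hC, h⟩ | ⟨hC, -⟩⟩
    · lia
    · lia
    · exact .inr ⟨hC, by lia⟩
    · obtain ⟨hi, c, hc, hcw⟩ := (hB.resolve_left hC).resolve_left hvw
      exact .inl ⟨hC, hi, c, hc, hcw, hw.1.1.1, hvw⟩
  · refine (Set.ncard_le_ncard ?_).trans ((Set.ncard_union_le _ _).trans (htwo t ht))
    rintro w ⟨hw, hround⟩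
    rcases hcases hw with ⟨-, h⟩ | ⟨-, hdist, ⟨hC, h⟩ | ⟨hC, h⟩ | ⟨-, h⟩⟩
    · lia
    · exact .inl ⟨hC, by lia⟩
    · exact .inr ⟨hC, by lia⟩
    · lia

lemma IsSeparator.ncard_closedSide_diff_le_sn [Finite V] (hS : IsSeparator G v C s P Q)
    (hconn : G.Connected)
    (hadj : (G.neighborSet v ∩ (closedSide v C s i \ B)).ncard ≤ b 0)
    (hone : {n | n ∉ C ∧ s n = i ∧ ∃ c ∈ B, n ∈ outerNeighbors G v c}.ncard +
      {w ∈ C \ R | G.dist v w = 2}.ncard ≤ b 1)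
    (htwo : ∀ t, 2 ≤ t →
      {w ∈ C ∩ R | G.dist v w = t}.ncard + {w ∈ C \ R | G.dist v w = t + 1}.ncard ≤ b t)
    (hfirst : ∀ w ∈ C ∩ R, w ≠ v → firstSteps G v w ⊆ closedSide v C s i \ B) :
    (closedSide v C s i \ B).ncard ≤ sn G b v := by
  refine ncard_le_sn (protectionRound G v C R) (fun h => h.1.1 rfl)
    (hS.ncard_innerBoundary_le hconn hadj hone htwo) fun w hw => ?_
  have hwv : w ≠ v := hw.1.1.1
  rcases protectionRound_cases (C := C) (R := R) hconn hwv with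
    ⟨-, h⟩ | ⟨-, hdist, ⟨hC, h⟩ | ⟨-, h⟩ | ⟨-, h⟩⟩
  · exact .inl (h ▸ hconn.pos_dist_of_ne hwv.symm)
  · exact .inr ⟨h.le, fun n hn => ⟨hfirst w hC hwv hn, protectionRound_eq_zero hn.1⟩⟩
  · exact .inl (by lia)
  · exact .inl (by lia)

end Strategies

section Crossing

variable {V : Type*} {G : SimpleGraph V} {v x z z' : V} {C P Q : Set V} {s : V → ZMod 2}
  {i : ZMod 2} {u : ZMod 2 → V} {parent : V → V} {t : ℕ}

lemma ncard_fiber_le_one [Finite V] {f : V → ℕ} (hP : P.InjOn f) : {w ∈ P | f w = t}.ncard ≤ 1 :=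
  (Set.ncard_le_one_iff (Set.toFinite _)).2 fun ha hb => hP ha.1 hb.1 (ha.2.trans hb.2.symm)

lemma ncard_eq_sum_sides [Finite V] (A : Set V) (s : V → ZMod 2) :
    A.ncard = {n ∈ A | s n = 0}.ncard + {n ∈ A | s n = 1}.ncard := by
  rw [← Set.ncard_union_eq]
  · congr 1
    ext n
    have : ∀ i : ZMod 2, i = 0 ∨ i = 1 := by decide
    have := this (s n)
    simp only [Set.mem_union, Set.mem_ofPred_eq]
    tauto
  · rw [Set.disjoint_left]
    rintro n ⟨-, h₀⟩ ⟨-, h₁⟩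
    exact zero_ne_one (h₀.symm.trans h₁)

lemma ncard_closedSide_le [Finite V] (z : V) :
    (closedSide v C s i).ncard ≤ (closedSide v C s i \ {z}).ncard + 1 := by
  have := Set.ncard_le_ncard_sdiff_add_ncard (closedSide v C s i) {z}
  rwa [Set.ncard_singleton] at this

namespace IsSeparator

lemma swap (hS : IsSeparator G v C s P Q) : IsSeparator G v C s Q P :=
  ⟨Set.union_comm P Q ▸ hS.subset, hS.injOn_right, hS.injOn_left, hS.side_eq⟩

lemma ncard_level_le_two [Finite V] (hS : IsSeparator G v C s P Q) (ht : 1 ≤ t) :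
    {w ∈ C | G.dist v w = t}.ncard ≤ 2 := by
  have hsub : {w ∈ C | G.dist v w = t} ⊆ {w ∈ P | G.dist v w = t} ∪ {w ∈ Q | G.dist v w = t} := by
    rintro w ⟨hwC, hw⟩
    rcases hS.subset hwC with rfl | hwP | hwQ
    · rw [SimpleGraph.dist_self] at hw
      lia
    · exact .inl ⟨hwP, hw⟩
    · exact .inr ⟨hwQ, hw⟩
  exact (Set.ncard_le_ncard hsub).trans <| (Set.ncard_union_le _ _).trans <|
    add_le_add (ncard_fiber_le_one hS.injOn_left) (ncard_fiber_le_one hS.injOn_right)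

lemma ncard_neighborSet_inter_le_two [Finite V] (hS : IsSeparator G v C s P Q) :
    (G.neighborSet v ∩ C).ncard ≤ 2 :=
  (Set.ncard_le_ncard (t := {w ∈ C | G.dist v w = 1})
    fun _ hn => ⟨hn.2, SimpleGraph.dist_eq_one_iff_adj.2 hn.1⟩).trans
      (hS.ncard_level_le_two le_rfl)

lemma ncard_diff_level_le_one [Finite V] (hS : IsSeparator G v C s P Q) (ht : 1 ≤ t) :
    {w ∈ C \ P | G.dist v w = t}.ncard ≤ 1 := by
  refine (Set.ncard_le_ncard ?_).trans (ncard_fiber_le_one hS.injOn_right (t := t))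
  rintro w ⟨⟨hwC, hwP⟩, hdist⟩
  rcases hS.subset hwC with rfl | h | h
  · rw [SimpleGraph.dist_self] at hdist
    lia
  · exact absurd h hwP
  · exact ⟨h, hdist⟩

lemma ncard_closedSide_le_sn [Finite V] (hS : IsSeparator G v C s P Q) (hconn : G.Connected)
    (hi : (G.neighborSet v ∩ closedSide v C s i).ncard ≤ 2) :
    (closedSide v C s i).ncard ≤ sn G (fun _ => 2) v := by
  have h := hS.ncard_closedSide_diff_le_sn (i := i) (B := ∅) (R := ∅) (b := fun _ => 2) hconn
  simp only [Set.sdiff_empty, Set.inter_empty, Set.mem_empty_iff_false, false_and, exists_false,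
    and_false, Set.ofPred_false, Set.ncard_empty, zero_add, false_imp_iff, implies_true,
    forall_true_left] at h
  exact h hi (hS.ncard_level_le_two one_le_two) fun t _ => hS.ncard_level_le_two t.succ_pos

end IsSeparator

/-- The configuration in which a separator splits the four neighbours of `v` evenly: the neighbours
`z` and `z'` lie on its two branches, and there is one neighbour `u i` on each side `i`. -/
structure IsCrossing (G : SimpleGraph V) (v : V) (C : Set V) (s : V → ZMod 2) (P Q : Set V)
    (z z' : V) (u : ZMod 2 → V) : Prop where
  adj_left : G.Adj v z
  adj_right : G.Adj v z'
  left_mem : z ∈ C ∩ (P \ Q)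
  right_mem : z' ∈ C ∩ (Q \ P)
  adj_side (i : ZMod 2) : G.Adj v (u i)
  side_notMem (i : ZMod 2) : u i ∉ C
  side_eq (i : ZMod 2) : s (u i) = i
  eq_of_adj ⦃n : V⦄ : G.Adj v n → n = z ∨ n = z' ∨ (n ∉ C ∧ n = u (s n))

namespace IsCrossing

lemma swap (hX : IsCrossing G v C s P Q z z' u) : IsCrossing G v C s Q P z' z u where
  adj_left := hX.adj_right
  adj_right := hX.adj_left
  left_mem := hX.right_mem
  right_mem := hX.left_mem
  adj_side := hX.adj_side
  side_notMem := hX.side_notMem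
  side_eq := hX.side_eq
  eq_of_adj _ hn := or_left_comm.1 (hX.eq_of_adj hn)

lemma ne_left (hX : IsCrossing G v C s P Q z z' u) (i : ZMod 2) : u i ≠ z := by
  rintro rfl
  exact hX.side_notMem i hX.left_mem.1

lemma ne_right (hX : IsCrossing G v C s P Q z z' u) (i : ZMod 2) : u i ≠ z' :=
  hX.swap.ne_left i

lemma left_ne_right (hX : IsCrossing G v C s P Q z z' u) : z ≠ z' := by
  rintro rfl
  exact hX.left_mem.2.2 hX.right_mem.2.1

lemma neighborSet_inter_closedSide_subset (hX : IsCrossing G v C s P Q z z' u) (i : ZMod 2) :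
    G.neighborSet v ∩ closedSide v C s i ⊆ {z, z', u i} := by
  rintro n ⟨hn, -, hside⟩
  rcases hX.eq_of_adj hn with rfl | rfl | ⟨hnC, hnu⟩
  · exact .inl rfl
  · exact .inr (.inl rfl)
  · exact .inr (.inr (hside.resolve_left hnC ▸ hnu))

lemma ncard_neighborSet_inter_diff_le_two [Finite V] (hX : IsCrossing G v C s P Q z z' u)
    {y : V} (hy : y = z' ∨ y = u i) :
    (G.neighborSet v ∩ (closedSide v C s i \ {y})).ncard ≤ 2 := by
  have hsub := hX.neighborSet_inter_closedSide_subset i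
  obtain ⟨y', hy'⟩ : ∃ y', G.neighborSet v ∩ (closedSide v C s i \ {y}) ⊆ {z, y'} := by
    rcases hy with rfl | rfl
    · exact ⟨u i, fun n hn => by have := hsub ⟨hn.1, hn.2.1⟩; have := hn.2.2; grind⟩
    · exact ⟨z', fun n hn => by have := hsub ⟨hn.1, hn.2.1⟩; have := hn.2.2; grind⟩
  exact (Set.ncard_le_ncard hy').trans ((Set.ncard_insert_le ..).trans_eq (by simp))

lemma left_mem_closedSide_diff (hX : IsCrossing G v C s P Q z z' u) {y : V} (hy : y ≠ z) :
    z ∈ closedSide v C s i \ {y} :=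
  ⟨⟨hX.adj_left.ne', .inl hX.left_mem.1⟩, hy.symm⟩

lemma diff_level_two_subset_outerNeighbors (T : IsBFSTree G v parent)
    (hS : IsSeparator G v C s P (ancestors parent x))
    (hX : IsCrossing G v C s P (ancestors parent x) z z' u) :
    {w ∈ C \ P | G.dist v w = 2} ⊆ outerNeighbors G v z' := by
  rintro w ⟨⟨hwC, hwP⟩, hdist⟩
  rcases hS.subset hwC with rfl | h | hwx
  · simp at hdist
  · exact absurd h hwP
  have hwv : w ≠ v := by
    rintro rfl
    simp at hdist
  have hz' : parent w = z' := by
    refine hS.injOn_right (mem_ancestors_trans hwx (iterate_mem_ancestors parent 1 w))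
      hX.right_mem.2.1 ?_
    rw [SimpleGraph.dist_eq_one_iff_adj.2 hX.adj_right]
    exact Nat.succ_injective ((T.dist_eq hwv).symm.trans hdist)
  refine ⟨hz' ▸ T.adj_parent hwv, hwv, fun hadj => ?_⟩
  rw [SimpleGraph.dist_eq_one_iff_adj.2 hadj] at hdist
  lia

/-- Leave `z'` to burn and protect its outer neighbours in the second round, on the side with fewer
of them. -/
lemma exists_ncard_closedSide_le_sn [Finite V] (hconn : G.Connected) (T : IsBFSTree G v parent)
    (hS : IsSeparator G v C s P (ancestors parent x))
    (hX : IsCrossing G v C s P (ancestors parent x) z z' u)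
    (hfirst : ∀ w ∈ C ∩ P, w ≠ v → firstSteps G v w ⊆ {z})
    (hout : (outerNeighbors G v z').ncard ≤ 4) :
    ∃ i, (closedSide v C s i).ncard ≤ sn G (fun _ => 2) v + 1 := by
  obtain ⟨i, hi⟩ : ∃ i, {n ∈ outerNeighbors G v z' \ C | s n = i}.ncard +
      {w ∈ C \ P | G.dist v w = 2}.ncard ≤ 2 := by
    have := Set.ncard_inter_add_ncard_sdiff_eq_ncard (outerNeighbors G v z') C
    have := ncard_eq_sum_sides (outerNeighbors G v z' \ C) s
    have : {w ∈ C \ P | G.dist v w = 2}.ncard ≤ (outerNeighbors G v z' ∩ C).ncard :=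
      Set.ncard_le_ncard fun w hw =>
        ⟨diff_level_two_subset_outerNeighbors T hS hX hw, hw.1.1⟩
    have := hS.ncard_diff_level_le_one one_le_two
    by_contra! hgt
    have := hgt 0
    have := hgt 1
    lia
  refine ⟨i, (ncard_closedSide_le z').trans (Nat.succ_le_succ ?_)⟩
  refine hS.ncard_closedSide_diff_le_sn (R := P) hconn
    (hX.ncard_neighborSet_inter_diff_le_two (.inl rfl)) ?_ ?_ ?_
  · refine le_trans (add_le_add_left (Set.ncard_le_ncard ?_) _) hi
    rintro n ⟨hnC, hni, c, rfl, hn⟩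
    exact ⟨⟨hn, hnC⟩, hni⟩
  · intro t _
    refine add_le_add ((Set.ncard_le_ncard ?_).trans (ncard_fiber_le_one hS.injOn_left (t := t)))
      (hS.ncard_diff_level_le_one t.succ_pos)
    exact fun w hw => ⟨hw.1.2, hw.2⟩
  · exact fun w hw hwv n hn =>
      hfirst w hw hwv hn ▸ hX.left_mem_closedSide_diff hX.left_ne_right.symm

lemma ncard_closedSide_le_sn_add_one [Finite V] (hconn : G.Connected)
    (hS : IsSeparator G v C s P Q) (hX : IsCrossing G v C s P Q z z' u)
    (hfirst : ∀ w ∈ C, w ≠ v → firstSteps G v w ⊆ {z, z'})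
    (hout : (outerNeighbors G v (u i)).ncard ≤ 2) :
    (closedSide v C s i).ncard ≤ sn G (fun _ => 2) v + 1 := by
  refine (ncard_closedSide_le (u i)).trans (Nat.succ_le_succ ?_)
  refine hS.ncard_closedSide_diff_le_sn (R := Set.univ) hconn
    (hX.ncard_neighborSet_inter_diff_le_two (.inr rfl)) ?_ ?_ ?_
  · simp only [Set.sdiff_univ, Set.mem_empty_iff_false, false_and, Set.ofPred_false,
      Set.ncard_empty, add_zero]
    refine (Set.ncard_le_ncard ?_).trans hout
    rintro n ⟨-, -, c, rfl, hn⟩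
    exact hn
  · intro t ht
    simp only [Set.sdiff_univ, Set.mem_empty_iff_false, false_and, Set.ofPred_false,
      Set.ncard_empty, add_zero, Set.inter_univ]
    exact hS.ncard_level_le_two (by lia)
  · intro w hw hwv n hn
    rcases hfirst w hw.1 hwv hn with rfl | rfl
    · exact hX.left_mem_closedSide_diff (hX.ne_left i)
    · exact hX.swap.left_mem_closedSide_diff (hX.ne_right i)

end IsCrossing

lemma ncard_neighborSet_inter_closedSide_le [Finite V] (G : SimpleGraph V) (v : V) (C : Set V)
    (s : V → ZMod 2) (i : ZMod 2) :
    (G.neighborSet v ∩ closedSide v C s i).ncard ≤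
      (G.neighborSet v ∩ C).ncard + {n ∈ G.neighborSet v \ C | s n = i}.ncard := by
  refine (Set.ncard_le_ncard ?_).trans (Set.ncard_union_le _ _)
  rintro n ⟨hn, -, hside⟩
  by_cases hC : n ∈ C
  · exact .inl ⟨hn, hC⟩
  · exact .inr ⟨⟨hn, hC⟩, hside.resolve_left hC⟩

namespace IsSeparator

lemma exists_isCrossing (hS : IsSeparator G v C s P Q) (hC : (G.neighborSet v ∩ C).ncard = 2)
    (hside : ∀ i, {n ∈ G.neighborSet v \ C | s n = i}.ncard = 1) :
    ∃ z z' u, IsCrossing G v C s P Q z z' u := by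
  obtain ⟨z, z', hne, hK⟩ := Set.ncard_eq_two.1 hC
  choose u hu using fun i => Set.ncard_eq_one.1 (hside i)
  have hu' (i : ZMod 2) : u i ∈ {n ∈ G.neighborSet v \ C | s n = i} := hu i ▸ rfl
  have hz : z ∈ G.neighborSet v ∩ C := hK ▸ .inl rfl
  have hz' : z' ∈ G.neighborSet v ∩ C := hK ▸ .inr rfl
  have heq : ∀ n, G.Adj v n → n = z ∨ n = z' ∨ (n ∉ C ∧ n = u (s n)) := by
    intro n hn
    by_cases hnC : n ∈ C
    · have : n ∈ ({z, z'} : Set V) := hK ▸ ⟨hn, hnC⟩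
      exact this.imp_right .inl
    · have : n ∈ ({u (s n)} : Set V) := hu (s n) ▸ ⟨⟨hn, hnC⟩, rfl⟩
      exact .inr (.inr ⟨hnC, this⟩)
  have hdist : G.dist v z = G.dist v z' :=
    (SimpleGraph.dist_eq_one_iff_adj.2 hz.1).trans (SimpleGraph.dist_eq_one_iff_adj.2 hz'.1).symm
  have hP : z ∈ P → z' ∉ P := fun h h' => hne (hS.injOn_left h h' hdist)
  have hQ : z ∈ Q → z' ∉ Q := fun h h' => hne (hS.injOn_right h h' hdist)
  have hzPQ := (hS.subset hz.2).resolve_left hz.1.ne'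
  have hzPQ' := (hS.subset hz'.2).resolve_left hz'.1.ne'
  have hcrossing {P Q : Set V} (h : z ∈ P \ Q) (h' : z' ∈ Q \ P) :
      IsCrossing G v C s P Q z z' u :=
    ⟨hz.1, hz'.1, ⟨hz.2, h⟩, ⟨hz'.2, h'⟩, fun i => (hu' i).1.1, fun i => (hu' i).1.2,
      fun i => (hu' i).2, heq⟩
  by_cases hzP : z ∈ P
  · have hQ' := hzPQ'.resolve_left (hP hzP)
    exact ⟨z, z', u, hcrossing ⟨hzP, fun h => hQ h hQ'⟩ ⟨hQ', hP hzP⟩⟩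
  · have hzQ := hzPQ.resolve_left hzP
    exact ⟨z', z, u, (hcrossing ⟨hzQ, hzP⟩ ⟨hzPQ'.resolve_right (hQ hzQ), hQ hzQ⟩).swap⟩

lemma exists_ncard_le_two_or_exists_isCrossing [Finite V]
    (hS : IsSeparator G v C s P Q) (hd : (G.neighborSet v).ncard ≤ 4) :
    (∃ i, (G.neighborSet v ∩ closedSide v C s i).ncard ≤ 2) ∨
      (G.neighborSet v).ncard = 4 ∧ ∃ z z' u, IsCrossing G v C s P Q z z' u := by
  refine or_iff_not_imp_left.2 fun hno => ?_
  push Not at hno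
  have hside (i : ZMod 2) := (hno i).trans_le (ncard_neighborSet_inter_closedSide_le G v C s i)
  have := hside 0
  have := hside 1
  have := hS.ncard_neighborSet_inter_le_two
  have := Set.ncard_inter_add_ncard_sdiff_eq_ncard (G.neighborSet v) C
  have := ncard_eq_sum_sides (G.neighborSet v \ C) s
  refine ⟨by lia, hS.exists_isCrossing (by lia) fun i => ?_⟩
  obtain rfl | rfl : i = 0 ∨ i = 1 := by decide +revert
  · lia
  · lia

end IsSeparator

end Crossing

section SmallDegree

variable {V : Type*} {G : SimpleGraph V} {v n w : V} {α : Type*} [LinearOrder α]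

lemma exists_adj_dist_eq_add_one (hconn : G.Connected) (h : n ≠ w) :
    ∃ x, G.Adj x w ∧ G.dist n w = G.dist n x + 1 := by
  obtain ⟨p, hp⟩ := (hconn.preconnected w n).exists_walk_length_eq_dist
  cases p with
  | nil => exact absurd rfl h
  | cons hwx p =>
    refine ⟨_, hwx.symm, ?_⟩
    have h₁ := SimpleGraph.dist_le p
    have h₂ := hwx.symm.reachable.dist_triangle_right n
    rw [SimpleGraph.dist_eq_one_iff_adj.2 hwx.symm] at h₂
    rw [SimpleGraph.dist_comm] at h₁
    rw [SimpleGraph.Walk.length_cons, SimpleGraph.dist_comm] at hp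
    lia

lemma exists_parent_of_priority [Finite V] (hconn : G.Connected) (priority : V → α) (h : w ≠ v) :
    ∃ x, G.Adj x w ∧ G.dist v w = G.dist v x + 1 ∧
      (x ≠ v → ∀ n ∈ firstSteps G v w, ∃ m ∈ firstSteps G v x, priority n ≤ priority m) := by
  by_cases hvw : G.Adj v w
  · refine ⟨v, hvw, ?_, fun h => absurd rfl h⟩
    rw [SimpleGraph.dist_eq_one_iff_adj.2 hvw, SimpleGraph.dist_self]
  have hne : (firstSteps G v w).Nonempty := by
    obtain ⟨x, hx, hdist⟩ := exists_adj_dist_eq_add_one hconn h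
    exact ⟨x, hx.symm, by rw [SimpleGraph.dist_comm, SimpleGraph.dist_comm (u := v), hdist]⟩
  obtain ⟨m, ⟨hvm, hmw⟩, hmax⟩ := Set.exists_max_image _ priority (Set.toFinite _) hne
  have hm : m ≠ w := by
    rintro rfl
    exact hvw hvm
  obtain ⟨x, hxw, hmx⟩ := exists_adj_dist_eq_add_one hconn hm
  have h₁ := hvm.reachable.dist_triangle_left x
  have h₂ := hxw.reachable.dist_triangle_right v
  rw [SimpleGraph.dist_eq_one_iff_adj.2 hvm] at h₁
  rw [SimpleGraph.dist_eq_one_iff_adj.2 hxw] at h₂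
  exact ⟨x, hxw, by lia, fun _ n hn => ⟨m, ⟨hvm, by lia⟩, hmax n hn⟩⟩

lemma eq_of_mem_firstSteps (hconn : G.Connected) (hvw : G.Adj v w) (hn : n ∈ firstSteps G v w) :
    n = w := by
  have := hn.2
  rw [SimpleGraph.dist_eq_one_iff_adj.2 hvw] at this
  exact hconn.dist_eq_zero_iff.1 (by lia)

/-- There is a breadth-first search tree in which every vertex is reached through its most
preferred first step. -/
lemma exists_isBFSTree_of_priority [Finite V] (hconn : G.Connected) (v : V) (priority : V → α) :
    ∃ parent, IsBFSTree G v parent ∧ ∀ w, ∀ f ∈ ancestors parent w, G.Adj v f →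
      ∀ n ∈ firstSteps G v w, priority n ≤ priority f := by
  choose! parent hadj hdist hpriority using
    fun w (hw : w ≠ v) => exists_parent_of_priority hconn priority hw
  classical
  have T : IsBFSTree G v (Function.update parent v v) :=
    ⟨by simp, fun _ hg => by simpa [hg] using hadj _ hg,
      fun _ hg => by simpa [hg] using hdist _ hg⟩
  refine ⟨_, T, fun w => ?_⟩
  induction w using T.induction with
  | root =>
    intro f hf hvf
    rw [T.eq_root_of_mem_ancestors hf] at hvf
    exact absurd rfl hvf.ne
  | step g hg ih =>
    intro f hf hvf n hn
    rcases eq_or_mem_ancestors_parent hf with rfl | hf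
    · rw [eq_of_mem_firstSteps hconn hvf hn]
    · rw [Function.update_of_ne hg] at ih hf
      have hparent : parent g ≠ v := by
        intro h
        rw [h] at hf
        rw [T.eq_root_of_mem_ancestors hf] at hvf
        exact hvf.ne rfl
      obtain ⟨m, hm, hnm⟩ := hpriority g hg hparent n hn
      exact hnm.trans (ih f hf hvf m hm)

lemma exists_injective_antitone_priority [Finite V] (f : V → ℕ) :
    ∃ priority : V → ℕᵒᵈ ×ₗ Fin (Nat.card V), priority.Injective ∧
      ∀ a b, priority a ≤ priority b → f b ≤ f a := by
  refine ⟨fun a => toLex (OrderDual.toDual (f a), Finite.equivFin V a), fun a b h => ?_, ?_⟩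
  · exact (Finite.equivFin V).injective (Prod.ext_iff.1 (toLex.injective h)).2
  · intro a b h
    rcases (Prod.Lex.toLex_le_toLex).1 h with h | ⟨h, -⟩
    · exact (OrderDual.toDual_lt_toDual.1 h).le
    · exact (OrderDual.toDual.injective h).ge

lemma HasSeparatorAvoiding.card_le [Finite V] {u z z' : V} (hconn : G.Connected)
    (h : HasSeparatorAvoiding G v u z z') (hd : (G.neighborSet v).ncard ≤ 4) (hu : G.Adj v u)
    (hz : G.Adj v z) (hz' : G.Adj v z') (huz : u ≠ z) (huz' : u ≠ z') :
    Nat.card V ≤ 6 * sn G (fun _ => 2) v + 1 := by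
  obtain ⟨C, s, P, Q, hS, hu', hzz', hcard⟩ := h
  obtain ⟨y, hy, huy, hy'⟩ : ∃ y, G.Adj v y ∧ u ≠ y ∧ y ∉ closedSide v C s 1 :=
    hzz'.elim (fun h => ⟨z, hz, huz, h⟩) fun h => ⟨z', hz', huz', h⟩
  have hside : (G.neighborSet v ∩ closedSide v C s 1).ncard ≤ 2 := by
    have hsub : ({u, y} : Set V) ⊆ G.neighborSet v := by
      rintro n (rfl | rfl)
      exacts [hu, hy]
    have hdiff := Set.ncard_sdiff_add_ncard_of_subset hsub
    rw [Set.ncard_pair huy] at hdiff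
    refine (Set.ncard_le_ncard (t := G.neighborSet v \ {u, y}) ?_).trans (by lia)
    rintro n ⟨hn, hn'⟩
    refine ⟨hn, ?_⟩
    rintro (rfl | rfl)
    exacts [hu' hn', hy' hn']
  have := hS.ncard_closedSide_le_sn hconn hside
  lia

lemma card_le_of_ncard_neighborSet_le_three [Finite V] [Nontrivial V] (hconn : G.Connected)
    (hplanar : IsPlanar G) (hd : (G.neighborSet v).ncard ≤ 3) :
    Nat.card V ≤ 3 * sn G (fun _ => 2) v + 1 := by
  obtain ⟨parent, T, -⟩ := exists_isBFSTree_of_priority hconn v fun _ => 0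
  obtain ⟨x, x', C, s, hS, hcard, -⟩ := exists_balanced_separator hconn hplanar T
  rcases hS.exists_ncard_le_two_or_exists_isCrossing (by lia) with ⟨i, hi⟩ | ⟨h, -⟩
  · have := hS.ncard_closedSide_le_sn hconn hi
    have := hcard i
    lia
  · lia

/-- The obstruction to saving a constant proportion of the graph from a fire at a vertex `v` of
degree four: every neighbour of `v` has too many outer neighbours to be left to burn off the
separator, and two of them have too many to be left to burn on the separator. -/
def IsObstructed (G : SimpleGraph V) (v : V) : Prop :=
  (∀ u, G.Adj v u → 3 ≤ (outerNeighbors G v u).ncard) ∧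
    ∃ a b, a ≠ b ∧ G.Adj v a ∧ G.Adj v b ∧
      5 ≤ (outerNeighbors G v a).ncard ∧ 5 ≤ (outerNeighbors G v b).ncard

namespace IsCrossing

variable {C : Set V} {s : V → ZMod 2} {z z' x x' : V} {u : ZMod 2 → V} {parent : V → V}
  {priority : V → α}

lemma exists_ncard_closedSide_le_sn_of_lt [Finite V] (hconn : G.Connected)
    (T : IsBFSTree G v parent)
    (hpriority : ∀ w, ∀ f ∈ ancestors parent w, G.Adj v f →
      ∀ n ∈ firstSteps G v w, priority n ≤ priority f)
    (hS : IsSeparator G v C s (ancestors parent x) (ancestors parent x'))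
    (hX : IsCrossing G v C s (ancestors parent x) (ancestors parent x') z z' u)
    (hfirst : ∀ w ∈ C, firstSteps G v w ⊆ {z, z'}) (hlt : priority z < priority z')
    (hout : (outerNeighbors G v z').ncard ≤ 4) :
    ∃ i, (closedSide v C s i).ncard ≤ sn G (fun _ => 2) v + 1 := by
  refine hX.exists_ncard_closedSide_le_sn hconn T hS (fun w hw hwv n hn => ?_) hout
  refine (hfirst w hw.1 hn).resolve_right ?_
  rintro rfl
  have hz : z ∈ ancestors parent w := by
    refine T.mem_ancestors_of_dist_le hw.2 hX.left_mem.2.1 ?_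
    rw [SimpleGraph.dist_eq_one_iff_adj.2 hX.adj_left]
    exact hconn.pos_dist_of_ne hwv.symm
  exact (hpriority w z hz hX.adj_left n hn).not_gt hlt

lemma exists_ncard_closedSide_le_sn_of_not_isObstructed [Finite V] (hconn : G.Connected)
    (T : IsBFSTree G v parent)
    (hpriority : ∀ w, ∀ f ∈ ancestors parent w, G.Adj v f →
      ∀ n ∈ firstSteps G v w, priority n ≤ priority f)
    (hinj : priority.Injective) (hanti : ∀ a b, priority a ≤ priority b →
      (outerNeighbors G v b).ncard ≤ (outerNeighbors G v a).ncard)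
    (hS : IsSeparator G v C s (ancestors parent x) (ancestors parent x'))
    (hX : IsCrossing G v C s (ancestors parent x) (ancestors parent x') z z' u)
    (hfirst : ∀ w ∈ C, firstSteps G v w ⊆ {z, z'}) (hobstructed : ¬ IsObstructed G v) :
    ∃ i, (closedSide v C s i).ncard ≤ sn G (fun _ => 2) v + 1 := by
  by_cases hout : 5 ≤ (outerNeighbors G v z).ncard ∧ 5 ≤ (outerNeighbors G v z').ncard
  · obtain ⟨y, hvy, hy⟩ : ∃ y, G.Adj v y ∧ (outerNeighbors G v y).ncard ≤ 2 := by
      by_contra! h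
      exact hobstructed ⟨h, z, z', hX.left_ne_right, hX.adj_left, hX.adj_right, hout⟩
    rcases hX.eq_of_adj hvy with rfl | rfl | ⟨-, hyu⟩
    · lia
    · lia
    · exact ⟨s y, hX.ncard_closedSide_le_sn_add_one hconn hS (fun w hw _ => hfirst w hw) (hyu ▸ hy)⟩
  rcases lt_or_gt_of_ne (hinj.ne hX.left_ne_right) with hlt | hlt
  · have := hanti _ _ hlt.le
    exact hX.exists_ncard_closedSide_le_sn_of_lt hconn T hpriority hS hfirst hlt (by lia)
  · have := hanti _ _ hlt.le
    exact hX.swap.exists_ncard_closedSide_le_sn_of_lt hconn T hpriority hS.swap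
      (fun w hw => Set.pair_comm z z' ▸ hfirst w hw) hlt (by lia)

end IsCrossing

lemma card_le_of_not_isObstructed [Finite V] [Nontrivial V] (hconn : G.Connected)
    (hplanar : IsPlanar G) (hd : (G.neighborSet v).ncard ≤ 4) (hobstructed : ¬ IsObstructed G v) :
    Nat.card V ≤ 6 * sn G (fun _ => 2) v + 1 := by
  obtain ⟨priority, hinj, hanti⟩ :=
    exists_injective_antitone_priority fun c => (outerNeighbors G v c).ncard
  obtain ⟨parent, T, hpriority⟩ := exists_isBFSTree_of_priority hconn v priority
  obtain ⟨x, x', C, s, hS, hcard, hreroute⟩ := exists_balanced_separator hconn hplanar T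
  have hpos : 0 < sn G (fun _ => 2) v := sn_pos hconn two_pos v
  suffices h : (∃ i, (closedSide v C s i).ncard ≤ sn G (fun _ => 2) v + 1) ∨
      Nat.card V ≤ 6 * sn G (fun _ => 2) v + 1 by
    rcases h with ⟨i, hi⟩ | h
    · have := hcard i
      lia
    · exact h
  rcases hS.exists_ncard_le_two_or_exists_isCrossing hd with ⟨i, hi⟩ | ⟨-, z, z', u, hX⟩
  · exact .inl ⟨i, (hS.ncard_closedSide_le_sn hconn hi).trans (Nat.le_succ _)⟩
  by_cases hw : ∃ w ∈ C, ∃ i, u i ∈ firstSteps G v w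
  · obtain ⟨w, hwC, i, -, hstep⟩ := hw
    have hne : s (u (i + 1)) ≠ s (u i) := by
      rw [hX.side_eq, hX.side_eq]
      simp
    exact .inr <| (hreroute hX.adj_left hX.left_mem.1 hX.left_mem.2.2 hX.adj_right hX.right_mem.1
      hX.right_mem.2.2 (hX.side_notMem (i + 1)) (hX.adj_side i) (hX.side_notMem i) hne hwC
      hstep).card_le hconn hd (hX.adj_side _) hX.adj_left hX.adj_right (hX.ne_left _)
        (hX.ne_right _)
  · push Not at hw
    refine .inl <| hX.exists_ncard_closedSide_le_sn_of_not_isObstructed hconn T hpriority hinj hanti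
      hS (fun w hwC n hn => ?_) hobstructed
    rcases hX.eq_of_adj hn.1 with rfl | rfl | ⟨-, hnu⟩
    · exact .inl rfl
    · exact .inr rfl
    · exact absurd (hnu ▸ hn) (hw w hwC (s n))

end SmallDegree

section Counting

variable {V : Type*} {G : SimpleGraph V} {v a t : V}

lemma outerNeighbors_subset (v a : V) : outerNeighbors G v a ⊆ G.neighborSet a :=
  fun _ h => h.1

lemma ncard_outerNeighbors_add_two_le [Finite V] (hva : G.Adj v a) (hat : G.Adj a t)
    (htv : G.Adj t v) : (outerNeighbors G v a).ncard + 2 ≤ (G.neighborSet a).ncard := by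
  rw [← Set.ncard_pair htv.ne, ← Set.ncard_union_eq]
  · refine Set.ncard_le_ncard ?_
    rintro x (hx | rfl | rfl)
    exacts [hx.1, hat, hva.symm]
  · rw [Set.disjoint_left]
    rintro x ⟨-, hxv, hvx⟩ (rfl | rfl)
    exacts [hvx htv.symm, hxv rfl]

lemma exists_common_neighbor (hva : G.Adj v a) (h : s(v, a) ∉ trianglelessEdges G) :
    ∃ t, G.Adj a t ∧ G.Adj t v := by
  obtain ⟨D, hD, hvaD⟩ : ∃ D, IsTriangle G D ∧ s(v, a) ∈ D := by
    by_contra! hno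
    exact h ⟨hva, hno⟩
  obtain ⟨t, hat, htv, -⟩ := hD.exists_apex hvaD
  exact ⟨t, hat, htv⟩

/-- The vertices of degree four from which no constant proportion of the graph is saved. -/
def obstructedVertices (G : SimpleGraph V) : Set V :=
  {v | (G.neighborSet v).ncard = 4 ∧ IsObstructed G v}

/-- The pairs of an obstructed vertex and a neighbour that cannot be left to burn. -/
def obstructingPairs (G : SimpleGraph V) : Set (V × V) :=
  {p | p.1 ∈ obstructedVertices G ∧ G.Adj p.1 p.2 ∧ 5 ≤ (outerNeighbors G p.1 p.2).ncard}

/-- Let `T` be the set on the left and `t v` the apex of a triangle on the edge `va`, for `v ∈ T`.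
The `t v` are distinct neighbours of `a` since there is no 4-cycle, and they do not belong to `T`
since `t v` has only two outer neighbours at best if its degree is four. -/
lemma FourCycleFree.two_mul_ncard_obstructed_le [Finite V] (h4 : FourCycleFree G) (a : V) :
    2 * {v | (v, a) ∈ obstructingPairs G ∧ s(v, a) ∉ trianglelessEdges G}.ncard ≤
      4 * ((G.neighborSet a).ncard - 5) := by
  set T := {v | (v, a) ∈ obstructingPairs G ∧ s(v, a) ∉ trianglelessEdges G}
  have hadj {v : V} (hv : v ∈ T) : G.Adj v a := hv.1.2.1
  choose! t hat htv using fun v (hv : v ∈ T) => exists_common_neighbor (hadj hv) hv.2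
  have hinj : T.InjOn t := by
    intro x hx y hy hxy
    exact (h4 (hadj hx) (hadj hy).symm (hxy ▸ (htv y hy).symm) (htv x hx)).resolve_right
      (hat x hx).ne
  have hdisjoint : Disjoint T (t '' T) := by
    rw [Set.disjoint_left]
    rintro _ htx ⟨x, hx, rfl⟩
    have := hx.1.1.2.1 _ (htv x hx).symm
    have := ncard_outerNeighbors_add_two_le (htv x hx).symm (hat x hx).symm (hadj hx).symm
    have := htx.1.1.1
    lia
  have hle : T.ncard + T.ncard ≤ (G.neighborSet a).ncard := by
    nth_rw 2 [← hinj.ncard_image]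
    rw [← Set.ncard_union_eq hdisjoint]
    refine Set.ncard_le_ncard ?_
    rintro _ (hx | ⟨x, hx, rfl⟩)
    exacts [(hadj hx).symm, hat x hx]
  obtain hT | ⟨v, hv⟩ := T.eq_empty_or_nonempty
  · simp [hT]
  · have := ncard_outerNeighbors_add_two_le (hadj hv) (hat v hv) (htv v hv)
    have := hv.1.2.2
    lia

lemma ncard_obstructingPairs_trianglelessEdges_le [Finite V] (G : SimpleGraph V) :
    {p ∈ obstructingPairs G | s(p.1, p.2) ∈ trianglelessEdges G}.ncard ≤
      (trianglelessEdges G).ncard := by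
  refine Set.ncard_le_ncard_of_injOn (fun p => s(p.1, p.2)) (fun p hp => hp.2) ?_
  rintro ⟨x, y⟩ ⟨⟨-, -, hxy⟩, -⟩ ⟨x', y'⟩ ⟨⟨⟨hdegree, -⟩, -⟩, -⟩ heq
  rcases Sym2.eq_iff.1 heq with ⟨hx, hy⟩ | ⟨-, hyx⟩
  · exact Prod.ext hx hy
  · have := Set.ncard_le_ncard (outerNeighbors_subset (G := G) x y)
    simp only at hyx hdegree hxy
    rw [hyx] at this hxy
    lia

lemma ncard_eq_sum_ite {α : Type*} [Fintype α] (A : Set α) [DecidablePred (· ∈ A)] :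
    A.ncard = ∑ x, if x ∈ A then 1 else 0 := by
  rw [Set.ncard_eq_toFinset_card', ← Finset.card_filter]
  congr 1
  ext x
  simp

lemma ncard_eq_sum_ncard_fst {α β : Type*} [Fintype α] [Finite β] (A : Set (α × β)) :
    A.ncard = ∑ x, {y | (x, y) ∈ A}.ncard := by
  classical
  have := Fintype.ofFinite β
  simp_rw [ncard_eq_sum_ite, Fintype.sum_prod_type]
  rfl

lemma ncard_eq_sum_ncard_snd {α β : Type*} [Finite α] [Fintype β] (A : Set (α × β)) :
    A.ncard = ∑ y, {x | (x, y) ∈ A}.ncard := by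
  classical
  have := Fintype.ofFinite α
  simp_rw [ncard_eq_sum_ite, Fintype.sum_prod_type_right]
  rfl

lemma two_mul_ncard_obstructedVertices_le [Finite V] (G : SimpleGraph V) :
    2 * (obstructedVertices G).ncard ≤ (obstructingPairs G).ncard := by
  classical
  have := Fintype.ofFinite V
  rw [ncard_eq_sum_ncard_fst, ncard_eq_sum_ite, Finset.mul_sum]
  refine Finset.sum_le_sum fun v _ => ?_
  split_ifs with hv
  · obtain ⟨a, b, hab, hva, hvb, ha, hb⟩ := hv.2.2
    rw [mul_one, ← Set.ncard_pair hab]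
    refine Set.ncard_le_ncard ?_
    rintro _ (rfl | rfl)
    exacts [⟨hv, hva, ha⟩, ⟨hv, hvb, hb⟩]
  · simp

lemma FourCycleFree.four_mul_ncard_obstructedVertices_le [Fintype V] (h4 : FourCycleFree G) :
    4 * (obstructedVertices G).ncard ≤
      2 * (trianglelessEdges G).ncard + 4 * ∑ a, ((G.neighborSet a).ncard - 5) := by
  have htriangle : 2 * {p ∈ obstructingPairs G | s(p.1, p.2) ∉ trianglelessEdges G}.ncard ≤
      4 * ∑ a, ((G.neighborSet a).ncard - 5) := by
    rw [ncard_eq_sum_ncard_snd, Finset.mul_sum, Finset.mul_sum]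
    exact Finset.sum_le_sum fun a _ => h4.two_mul_ncard_obstructed_le a
  have hsplit := Set.ncard_inter_add_ncard_sdiff_eq_ncard (obstructingPairs G)
    {p | s(p.1, p.2) ∈ trianglelessEdges G}
  have := ncard_obstructingPairs_trianglelessEdges_le G
  have := two_mul_ncard_obstructedVertices_le G
  change {p ∈ obstructingPairs G | s(p.1, p.2) ∈ trianglelessEdges G}.ncard +
    {p ∈ obstructingPairs G | s(p.1, p.2) ∉ trianglelessEdges G}.ncard = _ at hsplit
  lia

lemma sum_ncard_neighborSet [Fintype V] (G : SimpleGraph V) :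
    ∑ v, (G.neighborSet v).ncard = 2 * G.edgeSet.ncard := by
  classical
  rw [Set.ncard_eq_toFinset_card', Set.toFinset_card, ← G.edgeFinset_card,
    ← G.sum_degrees_eq_twice_card_edges]
  refine Finset.sum_congr rfl fun v _ => ?_
  rw [Set.ncard_eq_toFinset_card', Set.toFinset_card, G.card_neighborSet_eq_degree]

open scoped Classical in
/-- Up to a factor of six, a lower bound for the proportion of the graph that can be saved from a
fire at `v`, depending on the degree of `v` only, unless `v` is obstructed. -/
noncomputable def savingWeight (G : SimpleGraph V) (v : V) : ℕ :=
  if v ∈ obstructedVertices G then 0 else 5 - (G.neighborSet v).ncard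

lemma savingWeight_mul_le [Finite V] [Nontrivial V] (hconn : G.Connected) (hplanar : IsPlanar G)
    (v : V) : savingWeight G v * (Nat.card V - 1) ≤ 6 * sn G (fun _ => 2) v := by
  have hpos : 0 < (G.neighborSet v).ncard :=
    (Set.ncard_pos (Set.toFinite _)).2 (hconn.preconnected.exists_adj_of_nontrivial v)
  rw [savingWeight]
  split_ifs with hv
  · simp
  obtain hd | hd | hd | hd : (G.neighborSet v).ncard ≤ 2 ∨ (G.neighborSet v).ncard = 3 ∨
      (G.neighborSet v).ncard = 4 ∨ 5 ≤ (G.neighborSet v).ncard := by lia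
  · have := card_le_sn_add_one (b := fun _ => 2) hd
    calc (5 - (G.neighborSet v).ncard) * (Nat.card V - 1)
        ≤ 4 * sn G (fun _ => 2) v := Nat.mul_le_mul (by lia) (by lia)
      _ ≤ 6 * sn G (fun _ => 2) v := by lia
  · have := card_le_of_ncard_neighborSet_le_three hconn hplanar hd.le
    rw [hd]
    lia
  · have := card_le_of_not_isObstructed hconn hplanar hd.le fun h => hv ⟨hd, h⟩
    rw [hd]
    lia
  · simp [Nat.sub_eq_zero_of_le hd]

lemma FourCycleFree.ten_mul_card_le [Fintype V] (h4 : FourCycleFree G) :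
    10 * Nat.card V ≤
      2 * ∑ v, savingWeight G v + 4 * G.edgeSet.ncard + (trianglelessEdges G).ncard := by
  classical
  have hsum : ∑ v, (5 + ((G.neighborSet v).ncard - 5)) =
      ∑ v, (savingWeight G v + (if v ∈ obstructedVertices G then 1 else 0) +
        (G.neighborSet v).ncard) := by
    refine Finset.sum_congr rfl fun v _ => ?_
    rw [savingWeight]
    split_ifs with hv
    · rw [hv.1]
    · lia
  rw [Finset.sum_add_distrib, Finset.sum_add_distrib, Finset.sum_add_distrib, ← ncard_eq_sum_ite,
    sum_ncard_neighborSet, Finset.sum_const, Finset.card_univ, smul_eq_mul,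
    ← Nat.card_eq_fintype_card] at hsum
  have := h4.four_mul_ncard_obstructedVertices_le
  lia

lemma FourCycleFree.five_mul_card_sq_le [Fintype V] [Nontrivial V] (h4 : FourCycleFree G)
    (hconn : G.Connected) (hplanar : IsPlanar G) :
    5 * Nat.card V ^ 2 ≤ 42 * ∑ v, sn G (fun _ => 2) v := by
  have hweight : 5 * Nat.card V + 10 ≤ 7 * ∑ v, savingWeight G v := by
    have := h4.ten_mul_card_le
    have := h4.ncard_edgeSet_le_or hconn.preconnected hplanar
    have : (trianglelessEdges G).ncard ≤ G.edgeSet.ncard := Set.ncard_le_ncard fun _ h => h.1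
    have := Finite.one_lt_card (α := V)
    lia
  have hsaved : (∑ v, savingWeight G v) * (Nat.card V - 1) ≤ 6 * ∑ v, sn G (fun _ => 2) v := by
    rw [Finset.sum_mul, Finset.mul_sum]
    exact Finset.sum_le_sum fun v _ => savingWeight_mul_le hconn hplanar v
  obtain ⟨m, hm⟩ : ∃ m, Nat.card V = m + 2 :=
    ⟨Nat.card V - 2, by have := Finite.one_lt_card (α := V); lia⟩
  rw [hm] at hweight hsaved ⊢
  calc 5 * (m + 2) ^ 2
      ≤ (5 * (m + 2) + 10) * (m + 2 - 1) := by
        rw [show m + 2 - 1 = m + 1 from rfl]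
        nlinarith
    _ ≤ 7 * ((∑ v, savingWeight G v) * (m + 2 - 1)) := by
        rw [← mul_assoc]
        exact Nat.mul_le_mul_right _ hweight
    _ ≤ 42 * ∑ v, sn G (fun _ => 2) v := by lia

end Counting

theorem surviving_rate_two_no_four_cycle_general {V : Type*} [Fintype V] (G : SimpleGraph V)
    (hconn : G.Connected) (hplanar : IsPlanar G) (hn : 2 ≤ Fintype.card V)
    (hC4 : ∀ (v : V) (c : G.Walk v v), c.IsCycle → c.length ≠ 4) :
    5 / 42 ≤ survivingRate G (fun _ => 2) := by
  have : Nontrivial V := Fintype.one_lt_card_iff_nontrivial.1 hn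
  have h := (fourCycleFree_of_isCycle hC4).five_mul_card_sq_le hconn hplanar
  rw [Nat.card_eq_fintype_card] at h
  rw [survivingRate, div_le_div_iff₀ (by norm_num) (by positivity)]
  exact_mod_cast h.trans_eq (mul_comm _ _)

/-- Corollary 1.4: a connected planar graph on at least 2 vertices without 4-cycles has
2-surviving rate greater than `1/9`. -/
theorem surviving_rate_two_no_four_cycle {V : Type} [Fintype V] (G : SimpleGraph V)
    (hconn : G.Connected) (hplanar : IsPlanar G)
    (hn : 2 ≤ Fintype.card V)
    (hC4 : ∀ (v : V) (c : G.Walk v v), c.IsCycle → c.length ≠ 4) :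
    survivingRate G (fun _ => 2) > 1 / 9 :=
  lt_of_lt_of_le (by norm_num) (surviving_rate_two_no_four_cycle_general G hconn hplanar hn hC4)
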